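/- arXiv:math/9304212 — 2 statements merged into one kernel-verified Lean document; each statement's English description precedes it below -/
import Mathlib

section
/- Let K be an algebraically closed field and let (τ_n) be a Zariski geometry on K such that every Zariski-closed subset of K^n is τ_n-closed. Then every τ_2-closed irreducible subset C of K² of dimension 1 is contained in the zero set {p ∈ K² : f(p) = 0} of some nonzero polynomial f ∈ K[X,Y]. -/
open Topology

/-- A subset of `K^n` is *Zariski-closed* (an affine algebraic set) if it is the common
zero set of a set of polynomials in `n` variables. -/
def ZariskiClosedSet (K : Type*) [Field K] {n : ℕ} (C : Set (Fin n → K)) : Prop :=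
  ∃ S : Set (MvPolynomial (Fin n) K), C = {x | ∀ f ∈ S, MvPolynomial.eval x f = 0}

/-- The Zariski topology on `K^n`: the topology whose closed sets are the affine
algebraic sets. -/
def zariskiTopology (K : Type*) [Field K] (n : ℕ) : TopologicalSpace (Fin n → K) :=
  TopologicalSpace.generateFrom {U | ZariskiClosedSet K Uᶜ}

/-- The dimension of a subset `S` of a topological space: the topological Krull
dimension of `S` with the subspace topology (the maximal length of a chain of
irreducible closed subsets). -/
noncomputable def setKrullDim {X : Type*} (t : TopologicalSpace X) (S : Set X) : WithBot ℕ∞ :=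
  @topologicalKrullDim S (t.induced Subtype.val)

/-- `T` is an irreducible component of `S` (w.r.t. the topology `t`) if `T` is a maximal
irreducible subset of `S`. -/
def IsIrredComponentOf {X : Type*} (t : TopologicalSpace X) (T S : Set X) : Prop :=
  Maximal (fun T => T ⊆ S ∧ @IsIrreducible X t T) T

/-- A *Zariski geometry* on a set `X`: a Noetherian topology on each Cartesian power
`X^n` satisfying axioms (Z0)-(Z3). -/
structure ZariskiGeometry (X : Type*) where
  τ : ∀ n : ℕ, TopologicalSpace (Fin n → X)
  noetherian : ∀ n, @TopologicalSpace.NoetherianSpace (Fin n → X) (τ n)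
  /-- (Z0): every map `X^n → X^m` each of whose coordinates is a constant or a
  coordinate projection is continuous. -/
  Z0_cont : ∀ (n m : ℕ) (g : Fin m → (Fin n ⊕ X)),
    Continuous[τ n, τ m] (fun x i => Sum.elim (fun j => x j) id (g i))
  /-- (Z0): the diagonals are closed. -/
  Z0_diag : ∀ (n : ℕ) (i j : Fin n), IsClosed[τ n] {x | x i = x j}
  /-- (Z1): for a (nonempty) closed `C ⊆ X^n` and a coordinate projection
  `π : X^n → X^k`, there is a proper closed subset `F` of `cl(π C)` with
  `cl(π C) \ F ⊆ π C`. -/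
  Z1 : ∀ (n k : ℕ) (h : k ≤ n) (C : Set (Fin n → X)), IsClosed[τ n] C → C.Nonempty →
    ∃ F : Set (Fin k → X), IsClosed[τ k] F ∧
      F ⊂ closure[τ k] ((fun x => x ∘ Fin.castLE h) '' C) ∧
      closure[τ k] ((fun x => x ∘ Fin.castLE h) '' C) \ F ⊆ (fun x => x ∘ Fin.castLE h) '' C
  /-- (Z2): `X` is irreducible. -/
  Z2_irred : @IrreducibleSpace (Fin 1 → X) (τ 1)
  /-- (Z2): uniform one-dimensionality. -/
  Z2 : ∀ (n : ℕ) (C : Set (Fin (n + 1) → X)), IsClosed[τ (n + 1)] C →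
    ∃ m : ℕ, ∀ a : Fin n → X, {b : X | Fin.snoc a b ∈ C} = Set.univ ∨
      ({b : X | Fin.snoc a b ∈ C}.Finite ∧ {b : X | Fin.snoc a b ∈ C}.ncard ≤ m)
  /-- (Z3) (Dimension theorem): every irreducible component of the intersection of a
  closed irreducible `U ⊆ X^n` with a diagonal has dimension `≥ dim U - 1`. -/
  Z3 : ∀ (n : ℕ) (U : Set (Fin n → X)) (i j : Fin n), IsClosed[τ n] U →
    @IsIrreducible _ (τ n) U →
    ∀ T : Set (Fin n → X), IsIrredComponentOf (τ n) T (U ∩ {x | x i = x j}) →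
      setKrullDim (τ n) U ≤ setKrullDim (τ n) T + 1

set_option linter.style.haveILetI false
set_option linter.unusedSectionVars false
set_option linter.unusedVariables false
set_option linter.unusedSimpArgs false
namespace ZGeo
universe u

class ZG (K : Type u) [Field K] where
  Z : ZariskiGeometry K
  hrefine : ∀ (n : ℕ) (C : Set (Fin n → K)), ZariskiClosedSet K C → IsClosed[Z.τ n] C

noncomputable instance topo {K : Type u} [Field K] [ZG K] {ι : Type} [Finite ι] :
    TopologicalSpace (ι → K) :=
  TopologicalSpace.induced (fun v => v ∘ (Finite.equivFin ι).symm)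
    ((ZG.Z (K := K)).τ (Nat.card ι))

section basic
variable {K : Type u} [Field K] [ZG K] {ι κ μ : Type} [Finite ι] [Finite κ] [Finite μ]

theorem cont_co {Φ : (ι → K) → (κ → K)}
    (h : ∀ k, (∃ i, ∀ v, Φ v k = v i) ∨ (∃ c, ∀ v, Φ v k = c)) : Continuous Φ := by
  have h' : ∀ k, ∃ s : ι ⊕ K, ∀ v, Φ v k = Sum.elim (fun j => v j) id s := by
    intro k
    rcases h k with ⟨i, hi⟩ | ⟨c, hc⟩
    · exact ⟨Sum.inl i, hi⟩
    · exact ⟨Sum.inr c, hc⟩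
  choose s hs using h'
  rw [continuous_induced_rng]
  have h1 := (ZG.Z (K := K)).Z0_cont (Nat.card ι) (Nat.card κ)
    (fun k => Sum.map (Finite.equivFin ι) id (s ((Finite.equivFin κ).symm k)))
  have h2 : ((fun v => v ∘ (Finite.equivFin κ).symm) ∘ Φ) =
    (fun x i => Sum.elim (fun j => x j) id
      (Sum.map (Finite.equivFin ι) id (s ((Finite.equivFin κ).symm i)))) ∘
      (fun v : ι → K => v ∘ (Finite.equivFin ι).symm) := by
    funext v k
    simp only [Function.comp, hs]
    cases s ((Finite.equivFin κ).symm k) <;> simp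
  rw [h2]
  letI := (ZG.Z (K := K)).τ (Nat.card ι)
  letI := (ZG.Z (K := K)).τ (Nat.card κ)
  exact Continuous.comp h1 continuous_induced_dom

theorem topo_fin (n : ℕ) : (topo : TopologicalSpace (Fin n → K)) = (ZG.Z (K := K)).τ n := by
  apply le_antisymm
  · have := (ZG.Z (K := K)).Z0_cont (Nat.card (Fin n)) n (fun k => Sum.inl (Finite.equivFin _ k))
    rw [← continuous_id_iff_le]
    have h2 : (id : (Fin n → K) → (Fin n → K)) =
      (fun x i => Sum.elim (fun j => x j) id ((Sum.inl (Finite.equivFin (Fin n) i) : _ ⊕ K))) ∘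
      (fun v : Fin n → K => v ∘ (Finite.equivFin (Fin n)).symm) := by
      funext v k; simp
    rw [h2]
    exact @Continuous.comp _ _ _ topo (ZG.Z.τ _) (ZG.Z.τ _) _ _ this continuous_induced_dom
  · rw [← continuous_id_iff_le]
    refine continuous_induced_rng.2 ?_
    exact (ZG.Z (K := K)).Z0_cont n (Nat.card (Fin n))
      (fun k => Sum.inl ((Finite.equivFin (Fin n)).symm k))

instance noeth : TopologicalSpace.NoetherianSpace (ι → K) := by
  letI := (ZG.Z (K := K)).τ (Nat.card ι)
  haveI := (ZG.Z (K := K)).noetherian (Nat.card ι)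
  exact Topology.IsInducing.noetherianSpace (i := fun v : ι → K => v ∘ (Finite.equivFin ι).symm)
    ⟨rfl⟩

theorem cont_comp (α : κ → ι) : Continuous (fun v : ι → K => v ∘ α) :=
  cont_co (fun k => Or.inl ⟨α k, fun _ => rfl⟩)

theorem isClosed_diag (i j : ι) : IsClosed {v : ι → K | v i = v j} := by
  have h := (ZG.Z (K := K)).Z0_diag (Nat.card ι) (Finite.equivFin ι i) (Finite.equivFin ι j)
  rw [← topo_fin] at h
  have := h.preimage (cont_comp (K := K) (Finite.equivFin ι).symm)
  convert this using 1
  ext v; simp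

/-- Regular functions: graph maps are continuous. -/
def Reg (f : (ι → K) → K) : Prop :=
  ∀ (κ : Type) [Finite κ] (α : ι → κ),
    Continuous (fun (v : κ → K) => (fun o : Option κ => o.elim (f (v ∘ α)) v))

theorem Reg.coord (i : ι) : Reg (fun v : ι → K => v i) := by
  intro κ _ α
  apply cont_co
  rintro (_ | k)
  · exact Or.inl ⟨α i, fun _ => rfl⟩
  · exact Or.inl ⟨k, fun _ => rfl⟩

theorem Reg.const (c : K) : Reg (fun _ : ι → K => c) := by
  intro κ _ α
  apply cont_co
  rintro (_ | k)
  · exact Or.inr ⟨c, fun _ => rfl⟩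
  · exact Or.inl ⟨k, fun _ => rfl⟩

theorem Reg.restrict {f : (ι → K) → K} (hf : Reg f) (α : ι → κ) :
    Reg (fun v : κ → K => f (v ∘ α)) := by
  intro μ _ β
  exact hf μ (β ∘ α)

theorem Reg.continuous_graph (κ : Type) [Finite κ] : ∀ Φ : (ι → K) → (κ → K),
    (∀ k, Reg (fun v => Φ v k)) → Continuous (fun v : ι → K => (Sum.elim v (Φ v) : ι ⊕ κ → K)) := by
  refine Finite.induction_empty_option (P := fun κ => ∀ hκ : Finite κ,
    ∀ Φ : (ι → K) → (κ → K), (∀ k, Reg (fun v => Φ v k)) →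
    Continuous (fun v : ι → K => (Sum.elim v (Φ v) : ι ⊕ κ → K))) ?_ ?_ ?_ κ ‹_›
  · intro α β e ih _ Φ h
    haveI := Finite.of_equiv β e.symm
    have ih := ih this
    have h1 := ih (fun v => Φ v ∘ e) (fun k => h (e k))
    have h2 := (cont_comp (K := K) (Sum.map id e.symm : ι ⊕ β → ι ⊕ α)).comp h1
    convert h2 using 1
    funext v x
    rcases x with x | x <;> simp
  · intro _ Φ h
    apply cont_co
    rintro (k | k)
    · exact Or.inl ⟨k, fun _ => rfl⟩
    · exact k.elim
  · intro α _ ih _ Φ h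
    have ih := ih inferInstance
    have h1 := ih (fun v => Φ v ∘ some) (fun k => h (some k))
    have h2 := h none (ι ⊕ α) Sum.inl
    have h3 := (cont_comp (K := K) (fun x : ι ⊕ Option α => (Sum.elim (fun i => some (Sum.inl i))
      (fun o => o.elim none (fun a => some (Sum.inr a))) x : Option (ι ⊕ α)))).comp (h2.comp h1)
    convert h3 using 1
    funext v x
    rcases x with x | (_ | x) <;> simp [Function.comp_def]

theorem Reg.continuous {Φ : (ι → K) → (κ → K)} (h : ∀ k, Reg (fun v => Φ v k)) :
    Continuous Φ :=
  (cont_comp (K := K) (Sum.inr : κ → ι ⊕ κ)).comp (Reg.continuous_graph κ Φ h)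

theorem Reg.comp {f : (κ → K) → K} (hf : Reg f) {g : (ι → K) → (κ → K)}
    (hg : ∀ k, Reg (fun v => g v k)) : Reg (fun v => f (g v)) := by
  intro μ _ α
  have h1 := Reg.continuous_graph (ι := μ) κ (fun v => g (v ∘ α)) (fun k => (hg k).restrict α)
  have h2 := hf (μ ⊕ κ) Sum.inr
  have h3 := (cont_comp (K := K) (fun o : Option μ => o.map (Sum.inl : μ → μ ⊕ κ))).comp
    (h2.comp h1)
  convert h3 using 1
  funext v x
  rcases x with _ | x <;> simp [Function.comp_def]

theorem closed_eq {f g : (ι → K) → K} (hf : Reg f) (hg : Reg g) : IsClosed {v | f v = g v} := by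
  have h : Continuous (fun v : ι → K => (fun b : Bool => if b then f v else g v)) := by
    apply Reg.continuous
    rintro (_ | _)
    · simpa using hg
    · simpa using hf
  have := (isClosed_diag (K := K) true false).preimage h
  simpa using this

theorem closed_singleton (a : ι → K) : IsClosed {a} := by
  have : ({a} : Set (ι → K)) = ⋂ i, {v | v i = a i} := by
    ext v; simp [funext_iff]
  rw [this]
  exact isClosed_iInter fun i => closed_eq (Reg.coord i) (Reg.const _)

instance : T1Space (ι → K) := ⟨closed_singleton⟩

/-- closed irreducible sets -/
def IC (A : Set (ι → K)) : Prop := IsClosed A ∧ IsIrreducible A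

theorem exists_comp {S : Set (ι → K)} (hS : IsClosed S) {a : ι → K} (ha : a ∈ S) :
    ∃ T, IC T ∧ a ∈ T ∧ T ⊆ S ∧ IsIrredComponentOf topo T S := by
  obtain ⟨F, hF, hcl, hirr, rfl⟩ :=
    TopologicalSpace.NoetherianSpace.exists_finite_set_isClosed_irreducible hS
  obtain ⟨t0, ht0, hat0⟩ := ha
  have hfin : {t ∈ F | a ∈ t}.Finite := hF.subset (Set.sep_subset _ _)
  obtain ⟨T, hT⟩ := hfin.exists_maximal ⟨t0, ht0, hat0⟩
  refine ⟨T, ⟨hcl T hT.1.1, hirr T hT.1.1⟩, hT.1.2, Set.subset_sUnion_of_mem hT.1.1,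
    ⟨⟨Set.subset_sUnion_of_mem hT.1.1, hirr T hT.1.1⟩, ?_⟩⟩
  rintro T' ⟨hT'S, hT'i⟩ hle
  lift F to Finset (Set (ι → K)) using hF
  obtain ⟨z, hz, hT'z⟩ := isIrreducible_iff_sUnion_isClosed.1 hT'i F hcl hT'S
  have := hT.2 ⟨hz, hT'z (hle hT.1.2)⟩ (hle.trans hT'z)
  exact hT'z.trans this

theorem IC.singleton (a : ι → K) : IC {a} := ⟨closed_singleton a, isIrreducible_singleton⟩

end basic
end ZGeo

set_option linter.style.haveILetI false
set_option linter.unusedSectionVars false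
set_option linter.unusedVariables false
set_option linter.unusedSimpArgs false
namespace ZGeo
universe u
section dimension
variable {K : Type u} [Field K] [ZG K] {ι κ μ : Type} [Finite ι] [Finite κ] [Finite μ]

/-- Krull dimension of a subset -/
noncomputable def dimE (A : Set (ι → K)) : WithBot ℕ∞ := setKrullDim topo A

theorem dimE_eq (A : Set (ι → K)) : dimE A = topologicalKrullDim A := rfl

theorem dimE_le_of_leftInv {A : Set (ι → K)} {B : Set (κ → K)} {Φ : (ι → K) → (κ → K)}
    {Ψ : (κ → K) → (ι → K)} (hΦ : Continuous Φ) (hΨ : Continuous Ψ)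
    (hinv : ∀ v ∈ A, Ψ (Φ v) = v) (hAB : ∀ v ∈ A, Φ v ∈ B) : dimE A ≤ dimE B := by
  rw [dimE_eq, dimE_eq]
  have hc : Continuous (fun v : A => (⟨Φ v, hAB v v.2⟩ : B)) :=
    (hΦ.comp continuous_subtype_val).subtype_mk _
  refine Topology.IsInducing.topologicalKrullDim_le (f := fun v : A => (⟨Φ v, hAB v v.2⟩ : B)) ?_
  have h1 : (Subtype.val : A → (ι → K)) = (fun w : B => Ψ w) ∘ (fun v : A => ⟨Φ v, hAB v v.2⟩) := by
    funext v; simp [hinv v v.2]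
  have h2 : Topology.IsInducing ((fun w : B => Ψ w) ∘
      (fun v : A => (⟨Φ v, hAB v v.2⟩ : B))) := by
    rw [← h1]; exact Topology.IsInducing.subtypeVal
  exact Topology.IsInducing.of_comp hc (hΨ.comp continuous_subtype_val) h2

theorem dimE_mono {A B : Set (ι → K)} (h : A ⊆ B) : dimE A ≤ dimE B :=
  dimE_le_of_leftInv continuous_id continuous_id (fun _ _ => rfl) h

theorem dimE_singleton (a : ι → K) : dimE {a} = 0 := by
  rw [dimE_eq]
  apply le_antisymm
  · exact topologicalKrullDim_zero_of_discreteTopology _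
  · rw [topologicalKrullDim]
    haveI : Nonempty (TopologicalSpace.IrreducibleCloseds ({a} : Set (ι → K))) :=
      ⟨⟨Set.univ, by
        have : (Set.univ : Set ({a} : Set (ι → K))) = {⟨a, rfl⟩} := by
          ext ⟨x, hx⟩; simpa [Subtype.ext_iff] using hx
        rw [this]; exact isIrreducible_singleton, isClosed_univ⟩⟩
    exact Order.krullDim_nonneg

theorem irr_univ_of_IC {A : Set (ι → K)} (hA : IC A) : IsIrreducible (Set.univ : Set A) := by
  have := (Subtype.irreducibleSpace hA.2)
  exact irreducibleSpace_def _ |>.1 this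

theorem dimE_lt {T A : Set (ι → K)} (hT : IC T) (hA : IC A) (h : T ⊂ A) :
    dimE T + 1 ≤ dimE A := by
  rw [dimE_eq, dimE_eq, topologicalKrullDim, topologicalKrullDim]
  haveI : Nonempty (TopologicalSpace.IrreducibleCloseds T) :=
    ⟨⟨Set.univ, irr_univ_of_IC hT, isClosed_univ⟩⟩
  rw [← Order.krullDim_WithTop]
  have hind : Topology.IsInducing (Set.inclusion h.1) :=
    (Topology.IsEmbedding.inclusion h.1).isInducing
  let topA : TopologicalSpace.IrreducibleCloseds A := ⟨Set.univ, irr_univ_of_IC hA, isClosed_univ⟩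
  let m := TopologicalSpace.IrreducibleCloseds.map (Set.inclusion h.1) hind.continuous
  have hm : StrictMono m := TopologicalSpace.IrreducibleCloseds.map_strictMono_of_isInducing hind
  have hlt : ∀ c, m c < topA := by
    intro c
    rw [lt_iff_le_and_ne]
    constructor
    · intro x _; trivial
    · intro he
      obtain ⟨x, hxA, hxT⟩ := Set.exists_of_ssubset h
      have h1 : (⟨x, hxA⟩ : A) ∈ (m c : Set A) := by rw [he]; trivial
      have h2 : (m c : Set A) ⊆ Subtype.val ⁻¹' T := by
        apply closure_minimal
        · rintro _ ⟨y, _, rfl⟩; exact y.2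
        · exact hT.1.preimage continuous_subtype_val
      exact hxT (h2 h1)
  refine Order.krullDim_le_of_strictMono
    (fun x : WithTop (TopologicalSpace.IrreducibleCloseds T) => WithTop.recTopCoe (C := fun _ => TopologicalSpace.IrreducibleCloseds A) topA m x) ?_
  intro x y hxy
  induction x using WithTop.recTopCoe with
  | top => exact absurd hxy not_top_lt
  | coe x =>
    induction y using WithTop.recTopCoe with
    | top => exact hlt x
    | coe y => exact hm (WithTop.coe_lt_coe.1 hxy)

theorem IC.image_leftInv {A : Set (ι → K)} (hA : IC A) {Φ : (ι → K) → (κ → K)}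
    {Ψ : (κ → K) → (ι → K)} (hΦ : ∀ k, Reg (fun v => Φ v k)) (hΨ : ∀ k, Reg (fun v => Ψ v k))
    (hinv : ∀ v, Ψ (Φ v) = v) : IC (Φ '' A) := by
  refine ⟨?_, hA.2.image _ (Reg.continuous hΦ).continuousOn⟩
  have : Φ '' A = Ψ ⁻¹' A ∩ ⋂ k, {w | Φ (Ψ w) k = w k} := by
    ext w
    simp only [Set.mem_image, Set.mem_inter_iff, Set.mem_preimage, Set.mem_iInter, Set.mem_ofPred_eq]
    constructor
    · rintro ⟨v, hv, rfl⟩; simp [hinv, hv]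
    · rintro ⟨h1, h2⟩; exact ⟨Ψ w, h1, funext h2⟩
  rw [this]
  exact (hA.1.preimage (Reg.continuous hΨ)).inter (isClosed_iInter fun k =>
    closed_eq ((hΦ k).comp hΨ) (Reg.coord k))

theorem Z3E {A : Set (ι → K)} (hA : IC A) {a : ι → K} (ha : a ∈ A) {f g : (ι → K) → K}
    (hf : Reg f) (hg : Reg g) (hfg : f a = g a) :
    ∃ T, IC T ∧ a ∈ T ∧ T ⊆ A ∧ (∀ v ∈ T, f v = g v) ∧ dimE A ≤ dimE T + 1 := by
  let N := Nat.card (ι ⊕ Bool)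
  let e : ι ⊕ Bool ≃ Fin N := Finite.equivFin _
  let Φ : (ι → K) → (Fin N → K) :=
    fun v x => (Sum.elim v (fun b : Bool => cond b (f v) (g v)) : ι ⊕ Bool → K) (e.symm x)
  let Ψ : (Fin N → K) → (ι → K) := fun w i => w (e (Sum.inl i))
  have hΦ : ∀ k, Reg (fun v => Φ v k) := by
    intro k
    simp only [Φ]
    rcases e.symm k with i | (_ | _)
    · exact Reg.coord i
    · exact hg
    · exact hf
  have hΨ : ∀ k, Reg (fun v => Ψ v k) := fun k => Reg.coord _
  have hinv : ∀ v, Ψ (Φ v) = v := by intro v; funext i; simp [Ψ, Φ]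
  have hIC := hA.image_leftInv hΦ hΨ hinv
  let i := e (Sum.inr true)
  let j := e (Sum.inr false)
  have hi : ∀ v, Φ v i = f v := by intro v; simp [Φ, i]
  have hj : ∀ v, Φ v j = g v := by intro v; simp [Φ, j]
  obtain ⟨T', hT', haT', hT'S, hcomp⟩ := exists_comp (hIC.1.inter (isClosed_diag (K := K) i j))
    (a := Φ a) ⟨⟨a, ha, rfl⟩, by simp [hi, hj, hfg]⟩
  have h3 := (ZG.Z (K := K)).Z3 N (Φ '' A) i j
  rw [← topo_fin] at h3
  have h3 := h3 hIC.1 hIC.2 T' hcomp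
  have hr : ∀ w ∈ T', Φ (Ψ w) = w := by
    intro w hw
    obtain ⟨v, hv, rfl⟩ := (hT'S hw).1
    rw [hinv]
  have hTeq : Ψ '' T' = Φ ⁻¹' T' := by
    ext v
    constructor
    · rintro ⟨w, hw, rfl⟩; simpa [hr w hw] using hw
    · intro hv; exact ⟨Φ v, hv, hinv v⟩
  refine ⟨Ψ '' T', ⟨?_, hT'.2.image _ (Reg.continuous hΨ).continuousOn⟩,
    ⟨Φ a, haT', hinv a⟩, ?_, ?_, ?_⟩
  · rw [hTeq]; exact hT'.1.preimage (Reg.continuous hΦ)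
  · rintro _ ⟨w, hw, rfl⟩
    obtain ⟨v, hv, rfl⟩ := (hT'S hw).1
    rwa [hinv]
  · rintro _ ⟨w, hw, rfl⟩
    have := (hT'S hw).2
    rw [← hi, ← hj, hr w hw]; exact this
  · calc dimE A ≤ dimE (Φ '' A) := dimE_le_of_leftInv (Reg.continuous hΦ) (Reg.continuous hΨ)
          (fun v _ => hinv v) (fun v hv => ⟨v, hv, rfl⟩)
      _ ≤ dimE T' + 1 := h3
      _ ≤ dimE (Ψ '' T') + 1 := by
        gcongr
        exact dimE_le_of_leftInv (Reg.continuous hΨ) (Reg.continuous hΦ)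
          hr (fun v hv => ⟨v, hv, rfl⟩)

theorem cutE (n : ℕ) : ∀ {A : Set (ι → K)} (_ : IC A) {a : ι → K} (_ : a ∈ A)
    (f g : Fin n → (ι → K) → K)
    (_ : ∀ i, Reg (f i)) (_ : ∀ i, Reg (g i)) (_ : ∀ i, f i a = g i a),
    ∃ T, IC T ∧ a ∈ T ∧ T ⊆ A ∧ (∀ v ∈ T, ∀ i, f i v = g i v) ∧ dimE A ≤ dimE T + n := by
  induction n with
  | zero => intro A hA a ha f g _ _ _; exact ⟨A, hA, ha, subset_rfl, fun _ _ i => i.elim0, by simp⟩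
  | succ n ih =>
    intro A hA a ha f g hf hg hfg
    obtain ⟨T, hT, haT, hTA, h1, h2⟩ := ih hA ha (fun i => f i.succ) (fun i => g i.succ)
      (fun i => hf _) (fun i => hg _) (fun i => hfg _)
    obtain ⟨S, hS, haS, hST, h3, h4⟩ := Z3E hT haT (hf 0) (hg 0) (hfg 0)
    refine ⟨S, hS, haS, hST.trans hTA, ?_, ?_⟩
    · intro v hv i
      refine Fin.cases (h3 v hv) (fun i => h1 v (hST hv) i) i
    · calc dimE A ≤ dimE T + n := h2
        _ ≤ dimE S + 1 + n := by gcongr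
        _ = _ := by push_cast; rw [add_assoc, add_comm (1 : WithBot ℕ∞)]

theorem dimE_le_card {A : Set (ι → K)} (hA : IC A) : dimE A ≤ (Nat.card ι : ℕ) := by
  obtain ⟨a, ha⟩ := hA.2.1
  let e := Finite.equivFin ι
  obtain ⟨T, hT, haT, hTA, h1, h2⟩ := cutE (Nat.card ι) hA ha (fun i v => v (e.symm i))
    (fun i v => a (e.symm i)) (fun i => Reg.coord _) (fun i => Reg.const _) (fun i => rfl)
  have : T = {a} := by
    ext v
    refine ⟨fun hv => ?_, fun hv => by rw [hv]; exact haT⟩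
    funext i
    simpa using h1 v hv (e i)
  rw [this, dimE_singleton, zero_add] at h2
  exact h2

noncomputable def dim (A : Set (ι → K)) : ℕ := ((dimE A).unbotD 0).toNat

theorem dimE_nonneg {A : Set (ι → K)} (hA : A.Nonempty) : 0 ≤ dimE A := by
  obtain ⟨a, ha⟩ := hA
  rw [← dimE_singleton a]
  exact dimE_mono (by simpa using ha)

theorem dim_coe {A : Set (ι → K)} (hA : IC A) : dimE A = (dim A : ℕ) := by
  have h1 := dimE_nonneg hA.2.1
  have h2 := dimE_le_card hA
  unfold dim
  generalize dimE A = x at *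
  induction x using WithBot.recBotCoe with
  | bot => simp at h1
  | coe x =>
    induction x using ENat.recTopCoe with
    | top =>
      exfalso
      have h3 := WithBot.coe_le_coe.1 h2
      rw [top_le_iff] at h3
      exact ENat.natCast_ne_top _ h3
    | coe n => rfl

theorem dim_le_card {A : Set (ι → K)} (hA : IC A) : dim A ≤ Nat.card ι := by
  have := dimE_le_card hA
  rw [dim_coe hA] at this
  exact_mod_cast this

theorem dim_singleton (a : ι → K) : dim {a} = 0 := by
  have := dim_coe (IC.singleton a)
  rw [dimE_singleton] at this
  exact_mod_cast this.symm

theorem dim_mono {T A : Set (ι → K)} (hT : IC T) (hA : IC A) (h : T ⊆ A) :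
    dim T ≤ dim A := by
  have := dimE_mono h
  rw [dim_coe hT, dim_coe hA] at this
  exact_mod_cast this

theorem dim_lt {T A : Set (ι → K)} (hT : IC T) (hA : IC A) (h : T ⊂ A) :
    dim T < dim A := by
  have := dimE_lt hT hA h
  rw [dim_coe hT, dim_coe hA] at this
  have : dim T + 1 ≤ dim A := by exact_mod_cast this
  exact this

theorem eq_of_dim_le {T A : Set (ι → K)} (hT : IC T) (hA : IC A) (h : T ⊆ A)
    (hd : dim A ≤ dim T) : T = A := by
  by_contra hne
  have := dim_lt hT hA (h.ssubset_of_ne hne)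
  omega

theorem dim_le_of_leftInv {A : Set (ι → K)} {B : Set (κ → K)} (hA : IC A) (hB : IC B)
    {Φ : (ι → K) → (κ → K)}
    {Ψ : (κ → K) → (ι → K)} (hΦ : Continuous Φ) (hΨ : Continuous Ψ)
    (hinv : ∀ v ∈ A, Ψ (Φ v) = v) (hAB : ∀ v ∈ A, Φ v ∈ B) : dim A ≤ dim B := by
  have := dimE_le_of_leftInv hΦ hΨ hinv hAB
  rw [dim_coe hA, dim_coe hB] at this
  exact_mod_cast this

theorem cut (n : ℕ) {A : Set (ι → K)} (hA : IC A) {a : ι → K} (ha : a ∈ A)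
    (f g : Fin n → (ι → K) → K)
    (hf : ∀ i, Reg (f i)) (hg : ∀ i, Reg (g i)) (hfg : ∀ i, f i a = g i a) :
    ∃ T, IC T ∧ a ∈ T ∧ T ⊆ A ∧ (∀ v ∈ T, ∀ i, f i v = g i v) ∧ dim A ≤ dim T + n := by
  obtain ⟨T, hT, h1, h2, h3, h4⟩ := cutE n hA ha f g hf hg hfg
  refine ⟨T, hT, h1, h2, h3, ?_⟩
  rw [dim_coe hA, dim_coe hT] at h4
  exact_mod_cast h4

theorem cut1 {A : Set (ι → K)} (hA : IC A) {a : ι → K} (ha : a ∈ A)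
    {f g : (ι → K) → K} (hf : Reg f) (hg : Reg g) (hfg : f a = g a) :
    ∃ T, IC T ∧ a ∈ T ∧ T ⊆ A ∧ (∀ v ∈ T, f v = g v) ∧ dim A ≤ dim T + 1 := by
  obtain ⟨T, hT, h1, h2, h3, h4⟩ := Z3E hA ha hf hg hfg
  refine ⟨T, hT, h1, h2, h3, ?_⟩
  rw [dim_coe hA, dim_coe hT] at h4
  exact_mod_cast h4

theorem IC.eq_singleton_of_finite {A : Set (ι → K)} (hA : IC A) (hf : A.Finite) {a : ι → K}
    (ha : a ∈ A) : A = {a} := by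
  have h := isIrreducible_iff_sUnion_isClosed.1 hA.2 (hf.toFinset.image (fun a => {a}))
    (by simp only [Finset.mem_image]; rintro _ ⟨x, _, rfl⟩; exact closed_singleton x)
    (fun x hx => ⟨{x}, by simpa using hx, rfl⟩)
  obtain ⟨z, hz, hAz⟩ := h
  simp only [Finset.mem_image] at hz
  obtain ⟨x, _, rfl⟩ := hz
  have : a = x := hAz ha
  subst this
  exact Set.Subset.antisymm hAz (by simpa using ha)

theorem IC.infinite {A : Set (ι → K)} (hA : IC A) (hd : 1 ≤ dim A) : A.Infinite := by
  intro hf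
  obtain ⟨a, ha⟩ := hA.2.1
  rw [hA.eq_singleton_of_finite hf ha, dim_singleton] at hd
  omega

theorem IC.dim_pos {A : Set (ι → K)} (hA : IC A) {a b : ι → K} (ha : a ∈ A) (hb : b ∈ A)
    (hab : a ≠ b) : 1 ≤ dim A := by
  have := dim_lt (IC.singleton a) hA ⟨by simpa using ha, fun h => hab (h hb).symm⟩
  omega

theorem finite_of_dim_zero {A : Set (ι → K)} (hA : IC A) (hd : dim A = 0) {a : ι → K}
    (ha : a ∈ A) : A = {a} :=
  (eq_of_dim_le (IC.singleton a) hA (by simpa using ha) (by omega)).symm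

/-- irreducible covers -/
theorem IC.subset_of_union {A B C : Set (ι → K)} (hA : IC A) (hB : IsClosed B) (hC : IsClosed C)
    (h : A ⊆ B ∪ C) : A ⊆ B ∨ A ⊆ C :=
  (isPreirreducible_iff_isClosed_union_isClosed.1 hA.2.2) B C hB hC h

theorem finite_of_curve {A B : Set (ι → K)} (hA : IC A) (hd : dim A ≤ 1) (hB : IsClosed B)
    (hAB : ¬ A ⊆ B) : (A ∩ B).Finite := by
  obtain ⟨F, hF, hcl, hirr, he⟩ :=
    TopologicalSpace.NoetherianSpace.exists_finite_set_isClosed_irreducible (hA.1.inter hB)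
  rw [he]
  refine hF.sUnion ?_
  intro t ht
  have htA : t ⊆ A ∩ B := by rw [he]; exact Set.subset_sUnion_of_mem ht
  have h1 := dim_lt ⟨hcl t ht, hirr t ht⟩ hA
    ⟨htA.trans Set.inter_subset_left, fun h => hAB (h.trans (htA.trans Set.inter_subset_right))⟩
  obtain ⟨x, hx⟩ := (hirr t ht).1
  rw [finite_of_dim_zero ⟨hcl t ht, hirr t ht⟩ (by omega) hx]
  exact Set.finite_singleton x

theorem IC.subset_of_diff {A B F : Set (ι → K)} (hA : IC A) (hB : IsClosed B) (hF : IsClosed F)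
    (hAF : ¬ A ⊆ F) (h : ∀ v ∈ A, v ∉ F → v ∈ B) : A ⊆ B := by
  rcases hA.subset_of_union hB hF (fun v hv => by
    by_cases hvF : v ∈ F
    · exact Or.inr hvF
    · exact Or.inl (h v hv hvF)) with h1 | h1
  · exact h1
  · exact absurd h1 hAF

theorem IC.closure_image {A : Set (ι → K)} (hA : IC A) {Φ : (ι → K) → (κ → K)}
    (hΦ : Continuous Φ) : IC (closure (Φ '' A)) :=
  ⟨isClosed_closure, (hA.2.image _ hΦ.continuousOn).closure⟩

end dimension
end ZGeo

set_option linter.style.haveILetI false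
set_option linter.unusedSectionVars false
set_option linter.unusedVariables false
set_option linter.unusedSimpArgs false
namespace ZGeo
universe u
section structure_theory
variable {K : Type u} [Field K] [IsAlgClosed K] [ZG K] {ι κ μ : Type} [Finite ι] [Finite κ] [Finite μ]

theorem Z1R {A : Set (ι → K)} (hA : IsClosed A) (hne : A.Nonempty) {Φ : (ι → K) → (κ → K)}
    (hΦ : ∀ k, Reg (fun v => Φ v k)) : ∃ F : Set (κ → K), IsClosed F ∧ ¬ closure (Φ '' A) ⊆ F ∧
      ∀ w ∈ closure (Φ '' A), w ∉ F → ∃ v ∈ A, Φ v = w := by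
  let k := Nat.card κ
  let n := Nat.card ι
  let eκ : κ ≃ Fin k := Finite.equivFin κ
  let eι : ι ≃ Fin n := Finite.equivFin ι
  let α : ι → Fin (k + n) := fun i => Fin.natAdd k (eι i)
  let A' : Set (Fin (k + n) → K) := (fun x => x ∘ α) ⁻¹' A ∩
    ⋂ j : κ, {x | x (Fin.castAdd n (eκ j)) = Φ (x ∘ α) j}
  have hA' : IsClosed A' := (hA.preimage (cont_comp α)).inter (isClosed_iInter fun j =>
    closed_eq (Reg.coord _) ((hΦ j).restrict α))
  have hk : k ≤ k + n := Nat.le_add_right _ _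
  let h : (κ → K) ≃ₜ (Fin k → K) :=
    { toFun := fun w => w ∘ eκ.symm
      invFun := fun w => w ∘ eκ
      left_inv := by intro w; funext; simp
      right_inv := by intro w; funext; simp
      continuous_toFun := cont_comp _
      continuous_invFun := cont_comp _ }
  have himg : (fun x : Fin (k + n) → K => x ∘ Fin.castLE hk) '' A' = h '' (Φ '' A) := by
    ext w
    constructor
    · rintro ⟨x, ⟨hx1, hx2⟩, rfl⟩
      refine ⟨Φ (x ∘ α), ⟨x ∘ α, hx1, rfl⟩, ?_⟩
      funext j
      have := Set.mem_iInter.1 hx2 (eκ.symm j)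
      simp only [Set.mem_ofPred_eq, Equiv.apply_symm_apply] at this
      exact this.symm
    · rintro ⟨_, ⟨v, hv, rfl⟩, rfl⟩
      have hα : (Fin.append (Φ v ∘ eκ.symm) (v ∘ eι.symm)) ∘ α = v := by
        funext i; simp [α]
      refine ⟨Fin.append (Φ v ∘ eκ.symm) (v ∘ eι.symm), ⟨?_, ?_⟩, ?_⟩
      · simp only [Set.mem_preimage, hα]; exact hv
      · refine Set.mem_iInter.2 fun j => ?_
        simp only [Set.mem_ofPred_eq, hα]
        simp
      · funext j
        exact Fin.append_left _ _ j
  have hne' : A'.Nonempty := by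
    have : ((fun x : Fin (k + n) → K => x ∘ Fin.castLE hk) '' A').Nonempty := by
      rw [himg]; exact (hne.image _).image _
    exact this.of_image
  have hz := (ZG.Z (K := K)).Z1 (k + n) k hk A'
  rw [← topo_fin, ← topo_fin] at hz
  obtain ⟨F, hF, hFss, hsub⟩ := hz hA' hne'
  rw [himg, ← h.image_closure] at hFss hsub
  refine ⟨h ⁻¹' F, hF.preimage h.continuous, ?_, ?_⟩
  · intro hc
    exact hFss.2 (by rintro _ ⟨w, hw, rfl⟩; exact hc hw)
  · intro w hw hwF
    obtain ⟨w', hw', he⟩ := hsub ⟨⟨w, hw, rfl⟩, hwF⟩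
    have := h.injective he
    subst this
    exact hw'

theorem fin_or_univ {D : Set (κ → K)} (hD : IsClosed D) (Φ : K → κ → K)
    (hΦ : ∀ k, Reg (fun v : Unit → K => Φ (v ()) k)) :
    {t | Φ t ∈ D} = Set.univ ∨ {t | Φ t ∈ D}.Finite := by
  have hc : Continuous (fun v : Fin 1 → K => Φ (v 0)) :=
    Reg.continuous (fun k => (hΦ k).restrict (fun _ => (0 : Fin 1)))
  have hz := (ZG.Z (K := K)).Z2 0
  rw [← topo_fin] at hz
  obtain ⟨m, hm⟩ := hz _ (hD.preimage hc)
  have := hm ![]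
  have h2 : {b : K | (Fin.snoc (![] : Fin 0 → K) b : Fin 1 → K) ∈
    (fun v : Fin 1 → K => Φ (v 0)) ⁻¹' D} = {t | Φ t ∈ D} := by
    ext t; rfl
  rw [h2] at this
  rcases this with h | h
  · exact Or.inl h
  · exact Or.inr h.1

theorem unif_fin {D : Set (Fin 2 → K)} (hD : IsClosed D) :
    ∃ m : ℕ, ∀ x, {y | ![x, y] ∈ D} = Set.univ ∨
      ({y | ![x, y] ∈ D}.Finite ∧ {y | ![x, y] ∈ D}.ncard ≤ m) := by
  have hz := (ZG.Z (K := K)).Z2 1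
  rw [← topo_fin] at hz
  obtain ⟨m, hm⟩ := hz _ hD
  refine ⟨m, fun x => ?_⟩
  have := hm ![x]
  have h2 : {b : K | (Fin.snoc (![x] : Fin 1 → K) b : Fin 2 → K) ∈ D} = {y | ![x, y] ∈ D} := by
    ext t
    have : (Fin.snoc (![x] : Fin 1 → K) t : Fin 2 → K) = ![x, t] := by
      funext i; fin_cases i <;> rfl
    simp [this]
  rwa [h2] at this

theorem IC_univ_unit : IC (Set.univ : Set (Unit → K)) := by
  refine ⟨isClosed_univ, ?_⟩
  have h := (ZG.Z (K := K)).Z2_irred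
  rw [← topo_fin] at h
  have h1 : IsIrreducible (Set.univ : Set (Fin 1 → K)) := (irreducibleSpace_def _).1 h
  have h2 := h1.image (fun v : Fin 1 → K => v ∘ (fun _ : Unit => (0 : Fin 1)))
    (cont_comp _).continuousOn
  convert h2
  symm
  rw [Set.eq_univ_iff_forall]
  intro v
  exact ⟨fun _ => v (), trivial, by funext; rfl⟩

theorem dim_univ_unit : dim (Set.univ : Set (Unit → K)) = 1 := by
  apply le_antisymm
  · simpa using dim_le_card (IC_univ_unit (K := K))
  · refine IC_univ_unit.dim_pos (a := fun _ => 0) (b := fun _ => 1) trivial trivial ?_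
    intro h; simpa using congrFun h ()

/-- a hyperplane-like section -/
theorem exists_hyper {A : Set (ι → K)} (hA : IC A) (hd : 1 ≤ dim A) {a : ι → K} (ha : a ∈ A) :
    ∃ (T : Set (ι → K)) (i : ι), IC T ∧ a ∈ T ∧ T ⊂ A ∧ dim A = dim T + 1 ∧ (∀ v ∈ T, v i = a i) ∧
      ∃ b ∈ A, b i ≠ a i := by
  obtain ⟨b, hb, hba⟩ := (hA.infinite hd).exists_notMem_finite (Set.finite_singleton a)
  have : ∃ i, b i ≠ a i := by
    by_contra h; push Not at h; exact hba (funext h)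
  obtain ⟨i, hi⟩ := this
  obtain ⟨T, hT, haT, hTA, h1, h2⟩ := cut1 hA ha (Reg.coord i) (Reg.const (a i)) rfl
  have hss : T ⊂ A := ⟨hTA, fun h => hi (h1 b (h hb))⟩
  have := dim_lt hT hA hss
  exact ⟨T, i, hT, haT, hss, by omega, h1, b, hb, hi⟩

/-- product of sets -/
def pr (A : Set (ι → K)) (B : Set (κ → K)) : Set (ι ⊕ κ → K) :=
  {x | x ∘ Sum.inl ∈ A ∧ x ∘ Sum.inr ∈ B}

theorem mem_pr {A : Set (ι → K)} {B : Set (κ → K)} {a : ι → K} {b : κ → K} :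
    (Sum.elim a b : ι ⊕ κ → K) ∈ pr A B ↔ a ∈ A ∧ b ∈ B := Iff.rfl

theorem elim_eta (x : ι ⊕ κ → K) : Sum.elim (x ∘ Sum.inl) (x ∘ Sum.inr) = x := by
  funext i; cases i <;> rfl

theorem reg_elim {f : (μ → K) → (ι → K)} {g : (μ → K) → (κ → K)}
    (hf : ∀ k, Reg (fun v => f v k)) (hg : ∀ k, Reg (fun v => g v k)) :
    ∀ k, Reg (fun v => (Sum.elim (f v) (g v) : ι ⊕ κ → K) k) := by
  rintro (k | k)
  · exact hf k
  · exact hg k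

theorem cont_inl (b : κ → K) : Continuous (fun a : ι → K => (Sum.elim a b : ι ⊕ κ → K)) :=
  Reg.continuous (reg_elim (fun k => Reg.coord k) (fun k => Reg.const _))

theorem cont_inr (a : ι → K) : Continuous (fun b : κ → K => (Sum.elim a b : ι ⊕ κ → K)) :=
  Reg.continuous (reg_elim (fun k => Reg.const _) (fun k => Reg.coord _))

theorem IC.pr {A : Set (ι → K)} {B : Set (κ → K)} (hA : IC A) (hB : IC B) : IC (pr A B) := by
  refine ⟨(hA.1.preimage (cont_comp _)).inter (hB.1.preimage (cont_comp _)), ?_, ?_⟩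
  · obtain ⟨a, ha⟩ := hA.2.1
    obtain ⟨b, hb⟩ := hB.2.1
    exact ⟨Sum.elim a b, ha, hb⟩
  · rw [isPreirreducible_iff_isClosed_union_isClosed]
    intro C D hC hD hCD
    have h1 : ∀ b ∈ B, A ⊆ (fun a => Sum.elim a b) ⁻¹' C ∨ A ⊆ (fun a => Sum.elim a b) ⁻¹' D := by
      intro b hb
      refine hA.subset_of_union (hC.preimage (cont_inl b)) (hD.preimage (cont_inl b)) ?_
      intro a ha
      exact hCD (mem_pr.2 ⟨ha, hb⟩)
    have hcl : ∀ C : Set (ι ⊕ κ → K), IsClosed C →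
        IsClosed (⋂ a ∈ A, (fun b : κ → K => (Sum.elim a b : ι ⊕ κ → K)) ⁻¹' C) := by
      intro C hC
      exact isClosed_biInter fun a _ => hC.preimage (cont_inr a)
    have h2 := hB.subset_of_union (hcl C hC) (hcl D hD) (by
      intro b hb
      rcases h1 b hb with h | h
      · left; exact Set.mem_iInter₂.2 fun a ha => h ha
      · right; exact Set.mem_iInter₂.2 fun a ha => h ha)
    rcases h2 with h | h
    · left
      intro x hx
      have := Set.mem_iInter₂.1 (h hx.2) _ hx.1
      rwa [Set.mem_preimage, elim_eta] at this
    · right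
      intro x hx
      have := Set.mem_iInter₂.1 (h hx.2) _ hx.1
      rwa [Set.mem_preimage, elim_eta] at this

theorem dim_pr_singleton (a : ι → K) {B : Set (κ → K)} (hB : IC B) : dim (pr {a} B) = dim B := by
  apply le_antisymm
  · refine dim_le_of_leftInv ((IC.singleton a).pr hB) hB (Φ := fun v => v ∘ Sum.inr)
      (Ψ := fun b => Sum.elim a b) (cont_comp _) (cont_inr a) ?_ ?_
    · rintro v ⟨hv, -⟩
      have : v ∘ Sum.inl = a := hv
      rw [← this, elim_eta]
    · rintro v ⟨-, hv⟩; exact hv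
  · refine dim_le_of_leftInv hB ((IC.singleton a).pr hB) (Ψ := fun v => v ∘ Sum.inr)
      (Φ := fun b => Sum.elim a b) (cont_inr a) (cont_comp _) ?_ ?_
    · intro v hv; rfl
    · intro v hv; exact mem_pr.2 ⟨rfl, hv⟩

theorem dim_pr {A : Set (ι → K)} {B : Set (κ → K)} (hA : IC A) (hB : IC B) :
    dim (pr A B) = dim A + dim B := by
  generalize hn : dim A = n
  induction n using Nat.strong_induction_on generalizing A with
  | _ n ih =>
    obtain ⟨a, ha⟩ := hA.2.1
    obtain ⟨b, hb⟩ := hB.2.1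
    rcases Nat.eq_zero_or_pos n with h0 | hpos
    · subst h0
      rw [finite_of_dim_zero hA hn ha, dim_pr_singleton a hB, zero_add]
    · obtain ⟨T, i, hT, haT, hTA, hdT, hTi, c, hc, hci⟩ := exists_hyper hA (by omega) ha
      have h1 := ih (dim T) (by omega) hT rfl
      have h2 := dim_lt (hT.pr hB) (hA.pr hB) (by
        refine ⟨fun x hx => ⟨hTA.1 hx.1, hx.2⟩, fun h => ?_⟩
        obtain ⟨x, hx, hx'⟩ := Set.exists_of_ssubset hTA
        exact hx' (h (mem_pr.2 ⟨hx, hb⟩)).1)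
      obtain ⟨S, hS, haS, hSA, hSi, hSd⟩ := cut1 (hA.pr hB) (mem_pr.2 ⟨ha, hb⟩)
        (Reg.coord (Sum.inl i)) (Reg.const (a i)) rfl
      let A1 := closure ((fun v : ι ⊕ κ → K => v ∘ Sum.inl) '' S)
      have hA1 : IC A1 := hS.closure_image (cont_comp _)
      have hA1A : A1 ⊆ A ∩ {v | v i = a i} := by
        refine closure_minimal ?_ (hA.1.inter (closed_eq (Reg.coord i) (Reg.const _)))
        rintro _ ⟨v, hv, rfl⟩
        exact ⟨(hSA hv).1, hSi v hv⟩
      have h3 := dim_lt hA1 hA ⟨fun x hx => (hA1A hx).1, fun h => hci (hA1A (h hc)).2⟩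
      have h4 := ih (dim A1) (by omega) hA1 rfl
      have h5 := dim_mono hS (hA1.pr hB) (by
        intro v hv
        exact ⟨subset_closure ⟨v, hv, rfl⟩, (hSA hv).2⟩)
      omega

theorem IC_dim_univ (ι : Type) [hι : Finite ι] :
    IC (Set.univ : Set (ι → K)) ∧ dim (Set.univ : Set (ι → K)) = Nat.card ι := by
  refine Finite.induction_empty_option (P := fun ι => ∀ hι : Finite ι,
    IC (Set.univ : Set (ι → K)) ∧ dim (Set.univ : Set (ι → K)) = Nat.card ι) ?_ ?_ ?_ ι hι
  · intro α β e ih _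
    haveI := Finite.of_equiv β e.symm
    obtain ⟨h1, h2⟩ := ih this
    have hb : (Set.univ : Set (β → K)) = (fun v : α → K => v ∘ e.symm) '' Set.univ := by
      symm; rw [Set.eq_univ_iff_forall]
      intro v; exact ⟨v ∘ e, trivial, by funext; simp⟩
    have h3 : IC (Set.univ : Set (β → K)) :=
      ⟨isClosed_univ, by rw [hb]; exact h1.2.image _ (cont_comp _).continuousOn⟩
    refine ⟨h3, ?_⟩
    rw [← Nat.card_congr e, ← h2]
    apply le_antisymm
    · exact dim_le_of_leftInv h3 h1 (Φ := fun v => v ∘ e) (Ψ := fun v => v ∘ e.symm) (cont_comp _)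
        (cont_comp _) (by intro v _; funext; simp) (by simp)
    · exact dim_le_of_leftInv h1 h3 (Ψ := fun v => v ∘ e) (Φ := fun v => v ∘ e.symm) (cont_comp _)
        (cont_comp _) (by intro v _; funext; simp) (by simp)
  · intro _
    have : (Set.univ : Set (PEmpty.{1} → K)) = {fun x => x.elim} := by
      ext v; simp; funext x; exact x.elim
    rw [this]
    exact ⟨IC.singleton _, by simp [dim_singleton]⟩
  · intro α _ ih _
    obtain ⟨h1, h2⟩ := ih inferInstance
    have hp := h1.pr (IC_univ_unit (K := K))
    have hpu : pr (Set.univ : Set (α → K)) (Set.univ : Set (Unit → K)) = Set.univ := by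
      ext; simp [pr]
    have hd := dim_pr h1 (IC_univ_unit (K := K))
    rw [hpu] at hp hd
    let β : Option α → α ⊕ Unit := fun o => o.elim (Sum.inr ()) Sum.inl
    let γ : α ⊕ Unit → Option α := Sum.elim some (fun _ => none)
    have hb : (Set.univ : Set (Option α → K)) = (fun v : α ⊕ Unit → K => v ∘ β) '' Set.univ := by
      symm; rw [Set.eq_univ_iff_forall]
      intro v; exact ⟨v ∘ γ, trivial, by funext i; rcases i <;> rfl⟩
    have h3 : IC (Set.univ : Set (Option α → K)) :=
      ⟨isClosed_univ, by rw [hb]; exact hp.2.image _ (cont_comp _).continuousOn⟩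
    refine ⟨h3, ?_⟩
    apply le_antisymm (dim_le_card h3)
    have := dim_le_of_leftInv hp h3 (Ψ := fun v => v ∘ γ) (Φ := fun v => v ∘ β) (cont_comp _)
        (cont_comp _) (by intro v _; funext i; rcases i <;> rfl) (by simp)
    rw [hd, h2, dim_univ_unit] at this
    rw [Finite.card_option]; exact this

theorem IC_univ : IC (Set.univ : Set (ι → K)) := (IC_dim_univ ι).1

theorem dim_univ : dim (Set.univ : Set (ι → K)) = Nat.card ι := (IC_dim_univ ι).2

theorem eq_univ_of_dim {A : Set (ι → K)} (hA : IC A) (hd : Nat.card ι ≤ dim A) : A = Set.univ :=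
  eq_of_dim_le hA IC_univ (Set.subset_univ _) (by rw [dim_univ]; exact hd)

/-- dominating component -/
theorem lift_comp {D : Set (ι → K)} (hD : IsClosed D) {Φ : (ι → K) → (κ → K)} (hΦ : Continuous Φ)
    {B F : Set (κ → K)} (hB : IC B) (hF : IsClosed F) (hBF : ¬ B ⊆ F)
    (h : ∀ w ∈ B, w ∉ F → ∃ v ∈ D, Φ v = w) :
    ∃ A, IC A ∧ A ⊆ D ∧ B ⊆ closure (Φ '' A) := by
  obtain ⟨S, hS, hcl, hirr, rfl⟩ :=
    TopologicalSpace.NoetherianSpace.exists_finite_set_isClosed_irreducible hD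
  classical
  obtain ⟨z, hz, hBz⟩ := isIrreducible_iff_sUnion_isClosed.1 hB.2
    (insert F (hS.toFinset.image (fun t => closure (Φ '' t)))) (by
      simp only [Finset.mem_insert, Finset.mem_image]
      rintro z (rfl | ⟨t, _, rfl⟩)
      · exact hF
      · exact isClosed_closure) (by
      intro w hw
      by_cases hwF : w ∈ F
      · exact ⟨F, by simp, hwF⟩
      · obtain ⟨v, ⟨t, ht, hvt⟩, rfl⟩ := h w hw hwF
        refine ⟨closure (Φ '' t), ?_, subset_closure ⟨v, hvt, rfl⟩⟩
        simp only [Finset.coe_insert, Finset.coe_image, Set.Finite.coe_toFinset]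
        exact Or.inr ⟨t, ht, rfl⟩)
  simp only [Finset.mem_insert, Finset.mem_image, Set.Finite.mem_toFinset] at hz
  rcases hz with rfl | ⟨t, ht, rfl⟩
  · exact absurd hBz hBF
  · exact ⟨t, ⟨hcl t ht, hirr t ht⟩, Set.subset_sUnion_of_mem ht, hBz⟩

theorem FB {T : Set (ι → K)} (hT : IC T) {Φ : (ι → K) → (κ → K)}
    (hΦ : ∀ k, Reg (fun v => Φ v k)) (hinj : Set.InjOn Φ T) : dim T ≤ dim (closure (Φ '' T)) := by
  generalize hn : dim T = n
  induction n generalizing T with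
  | zero => omega
  | succ n ih =>
    obtain ⟨t, ht⟩ := hT.2.1
    obtain ⟨T1, i, hT1, _, hss, hd, -⟩ := exists_hyper hT (by omega) ht
    have h1 := ih hT1 (hinj.mono hss.1) (by omega)
    have hc := Reg.continuous hΦ
    have h2 := dim_lt (hT1.closure_image hc) (hT.closure_image hc) (by
      refine ⟨closure_mono (Set.image_mono hss.1), fun h => hss.2 ?_⟩
      obtain ⟨F, hF, hF1, hF2⟩ := Z1R hT1.1 hT1.2.1 hΦ
      refine hT.subset_of_diff hT1.1 (hF.preimage hc) ?_ ?_
      · intro hTF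
        refine hF1 (closure_minimal ?_ hF)
        rintro _ ⟨v, hv, rfl⟩; exact hTF (hss.1 hv)
      · intro v hv hvF
        obtain ⟨v', hv', he⟩ := hF2 (Φ v) (h (subset_closure ⟨v, hv, rfl⟩)) hvF
        rwa [← hinj (hss.1 hv') hv he])
    omega

theorem dim_closure_image_le {A : Set (ι → K)} (hA : IC A) {Φ : (ι → K) → (κ → K)}
    (hΦ : ∀ k, Reg (fun v => Φ v k)) : dim (closure (Φ '' A)) ≤ dim A := by
  generalize hn : dim (closure (Φ '' A)) = n
  induction n generalizing A with
  | zero => omega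
  | succ n ih =>
    have hc := Reg.continuous hΦ
    have hB := hA.closure_image hc
    obtain ⟨F, hF, hF1, hF2⟩ := Z1R hA.1 hA.2.1 hΦ
    obtain ⟨b, hb, hbF⟩ := Set.not_subset.1 hF1
    obtain ⟨B1, i, hB1, hbB1, hss, hd, -⟩ := exists_hyper hB (by omega) hb
    obtain ⟨A1, hA1, hA1D, hBA⟩ := lift_comp (hA.1.inter (hB1.1.preimage hc)) hc hB1 hF
      (fun h => hbF (h hbB1)) (by
        intro w hw hwF
        obtain ⟨v, hv, rfl⟩ := hF2 w (hss.1 hw) hwF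
        exact ⟨v, ⟨hv, hw⟩, rfl⟩)
    have he : closure (Φ '' A1) = B1 := by
      refine Set.Subset.antisymm (closure_minimal ?_ hB1.1) hBA
      rintro _ ⟨v, hv, rfl⟩; exact (hA1D hv).2
    have h1 := ih hA1 (by rw [he]; omega)
    have h2 := dim_lt hA1 hA ⟨fun v hv => (hA1D hv).1, fun h => hss.2 (closure_minimal (by
      rintro _ ⟨v, hv, rfl⟩; exact (hA1D (h hv)).2) hB1.1)⟩
    omega

theorem infinite_K : Infinite K := IsAlgClosed.instInfinite

end structure_theory
end ZGeo

set_option linter.style.haveILetI false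
set_option linter.unusedSectionVars false
set_option linter.unusedVariables false
set_option linter.unusedSimpArgs false
namespace ZGeo
universe u
section polynomial
variable {K : Type u} [Field K] [IsAlgClosed K] [ZG K] {ι κ μ : Type} [Finite ι] [Finite κ] [Finite μ]

theorem reg_comp (α : κ → ι) : ∀ k, Reg (fun v : ι → K => (v ∘ α) k) := fun k => Reg.coord (α k)

theorem cofin {T : Set (ι → K)} (hT : IC T) {f : (ι → K) → K} (hf : Reg f) {a b : ι → K}
    (ha : a ∈ T) (hb : b ∈ T) (hab : f a ≠ f b) : {t | ∃ v ∈ T, f v = t}ᶜ.Finite := by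
  let Φ : (ι → K) → (Unit → K) := fun v _ => f v
  have hΦ : ∀ k, Reg (fun v => Φ v k) := fun _ => hf
  have hIC := hT.closure_image (Reg.continuous hΦ)
  have h1 : 1 ≤ dim (closure (Φ '' T)) := hIC.dim_pos (subset_closure ⟨a, ha, rfl⟩)
    (subset_closure ⟨b, hb, rfl⟩) (fun h => hab (congrFun h ()))
  have hu := eq_univ_of_dim hIC (by simpa using h1)
  obtain ⟨F, hF, hF1, hF2⟩ := Z1R hT.1 hT.2.1 hΦ
  rw [hu] at hF1 hF2
  have h3 := fin_or_univ hF (fun t (_ : Unit) => t) (fun _ => Reg.coord ())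
  rcases h3 with h3 | h3
  · exfalso
    apply hF1
    intro v _
    have : v () ∈ {t | (fun (_ : Unit) => t) ∈ F} := by rw [h3]; trivial
    exact this
  · refine h3.subset ?_
    intro t ht
    by_contra htF
    obtain ⟨v, hv, he⟩ := hF2 (fun _ => t) trivial htF
    exact ht ⟨v, hv, congrFun he ()⟩

theorem closed_poly {n : ℕ} (p : MvPolynomial (Fin n) K) :
    IsClosed {v : Fin n → K | MvPolynomial.eval v p = 0} := by
  have := ZG.hrefine n {v : Fin n → K | MvPolynomial.eval v p = 0} ⟨{p}, by ext; simp⟩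
  rwa [← topo_fin] at this

/-- the graph of `y = c x + b` -/
def MM (K : Type u) [Field K] : Set (Fin 4 → K) := {v | v 3 = v 0 * v 1 + v 2}

theorem closed_MM : IsClosed (MM K) := by
  have := closed_poly (K := K) (MvPolynomial.X 3 - (MvPolynomial.X 0 * MvPolynomial.X 1 +
    MvPolynomial.X 2) : MvPolynomial (Fin 4) K)
  have h2 : IsClosed {v : Fin 4 → K | v 3 = v 0 * v 1 + v 2} := by
    simpa [sub_eq_zero] using this
  exact h2

theorem inj_MM {u v : Fin 4 → K} (hu : u ∈ MM K) (hv : v ∈ MM K) (h0 : u 0 = v 0) (h1 : u 1 = v 1)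
    (h2 : u 2 = v 2) : u = v := by
  have hu : u 3 = u 0 * u 1 + u 2 := hu
  have hv : v 3 = v 0 * v 1 + v 2 := hv
  funext i
  fin_cases i
  · exact h0
  · exact h1
  · exact h2
  · change u 3 = v 3
    rw [hu, hv, h0, h1, h2]

theorem exists_M1 : ∃ M1 : Set (Fin 4 → K), IC M1 ∧ M1 ⊆ MM K ∧ 3 ≤ dim M1 ∧
    ∀ T, IC T → T ⊆ MM K → 3 ≤ dim T → T ⊆ M1 := by
  let Φ : (Fin 4 → K) → (Fin 3 → K) := fun v => v ∘ ![0, 1, 2]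
  have hΦ : ∀ k, Reg (fun v => Φ v k) := reg_comp _
  have hc := Reg.continuous hΦ
  have hinj : Set.InjOn Φ (MM K) := by
    intro u hu v hv h
    exact inj_MM hu hv (congrFun h 0) (congrFun h 1) (congrFun h 2)
  obtain ⟨M1, hM1, hM1M, hd⟩ := lift_comp (closed_MM (K := K)) hc (IC_univ (ι := Fin 3))
    isClosed_empty (fun h => h (a := fun _ => 0) trivial) (by
      intro w _ _
      refine ⟨![w 0, w 1, w 2, w 0 * w 1 + w 2], rfl, ?_⟩
      funext i; fin_cases i <;> rfl)
  have hdu : closure (Φ '' M1) = Set.univ := Set.eq_univ_of_univ_subset hd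
  refine ⟨M1, hM1, hM1M, ?_, ?_⟩
  · have := dim_closure_image_le hM1 hΦ
    rw [hdu, dim_univ] at this
    simpa using this
  · intro T hT hTM hTd
    have h1 := FB hT hΦ (hinj.mono hTM)
    have h2 := eq_univ_of_dim (hT.closure_image hc) (by simpa using hTd.trans h1)
    obtain ⟨F, hF, hF1, hF2⟩ := Z1R hM1.1 hM1.2.1 hΦ
    rw [hdu, ← h2] at hF1
    rw [hdu] at hF2
    refine hT.subset_of_diff hM1.1 (hF.preimage hc) (fun h => hF1 (closure_minimal ?_ hF)) ?_
    · rintro _ ⟨v, hv, rfl⟩; exact h hv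
    · intro v hv hvF
      obtain ⟨v', hv', he⟩ := hF2 (Φ v) trivial hvF
      rwa [← hinj (hM1M hv') (hTM hv) he]

/-- a set of dimension 3 in a graph over three coordinates is everything -/
theorem fill3 {S : Set (Fin 5 → K)} (hS : IC S) (hd : 3 ≤ dim S) (α : Fin 3 → Fin 5)
    (Ψ : (Fin 3 → K) → (Fin 5 → K)) (hΨ : ∀ k, Reg (fun v => Ψ v k))
    (h : ∀ w ∈ S, Ψ (w ∘ α) = w) (u : Fin 3 → K) : Ψ u ∈ S := by
  have h1 := FB hS (Φ := fun w => w ∘ α) (reg_comp α) (by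
    intro a ha b hb hab
    rw [← h a ha, ← h b hb]
    exact congrArg Ψ hab)
  have h2 := eq_univ_of_dim (hS.closure_image (cont_comp α)) (by simpa using hd.trans h1)
  have h3 : closure ((fun w => w ∘ α) '' S) ⊆ Ψ ⁻¹' S := by
    refine closure_minimal ?_ (hS.1.preimage (Reg.continuous hΨ))
    rintro _ ⟨w, hw, rfl⟩
    change Ψ (w ∘ α) ∈ S
    rw [h w hw]; exact hw
  rw [h2] at h3
  exact h3 trivial

/-- image of an irreducible set of dimension ≥ 3 landing in MM -/
theorem image_M1 {M1 : Set (Fin 4 → K)} 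
    (huniq : ∀ T, IC T → T ⊆ MM K → 3 ≤ dim T → T ⊆ M1) {T : Set (ι → K)} (hT : IC T)
    (hd : 3 ≤ dim T) (α : Fin 4 → ι) (hinj : Set.InjOn (fun v : ι → K => v ∘ α) T)
    (hM : ∀ v ∈ T, v ∘ α ∈ MM K) {v : ι → K} (hv : v ∈ T) : v ∘ α ∈ M1 := by
  have h1 := FB hT (Φ := fun w => w ∘ α) (reg_comp α) hinj
  refine huniq _ (hT.closure_image (cont_comp α)) ?_ (hd.trans h1) (subset_closure ⟨v, hv, rfl⟩)
  refine closure_minimal ?_ closed_MM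
  rintro _ ⟨w, hw, rfl⟩
  exact hM w hw

theorem vec5_eq {a b c d e : K} {w : Fin 5 → K} (h0 : a = w 0) (h1 : b = w 1) (h2 : c = w 2)
    (h3 : d = w 3) (h4 : e = w 4) : ![a, b, c, d, e] = w := by
  funext i; fin_cases i
  · exact h0
  · exact h1
  · exact h2
  · exact h3
  · exact h4

theorem M1_axes {M1 : Set (Fin 4 → K)} (hM1 : IC M1) (hM : M1 ⊆ MM K) (hd : 3 ≤ dim M1)
    (huniq : ∀ T, IC T → T ⊆ MM K → 3 ≤ dim T → T ⊆ M1) (s b : K) : ![s, 0, b, b] ∈ M1 := by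
  obtain ⟨m, hm⟩ := hM1.2.1
  obtain ⟨T, hT, hmT, hTM, hTc, hTd⟩ := cut 2 (hM1.pr hM1) (a := Sum.elim m m) ⟨hm, hm⟩
    ![fun v => v (Sum.inl 0), fun v => v (Sum.inl 2)]
    ![fun v => v (Sum.inr 0), fun v => v (Sum.inr 2)]
    (by intro i; fin_cases i <;> exact Reg.coord _) (by intro i; fin_cases i <;> exact Reg.coord _)
    (by intro i; fin_cases i <;> rfl)
  rw [dim_pr hM1 hM1] at hTd
  have hT0 : ∀ v ∈ T, v (Sum.inl 0) = v (Sum.inr 0) := fun v hv => hTc v hv 0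
  have hT2 : ∀ v ∈ T, v (Sum.inl 2) = v (Sum.inr 2) := fun v hv => hTc v hv 1
  have hTl : ∀ v ∈ T, v (Sum.inl 3) = v (Sum.inl 0) * v (Sum.inl 1) + v (Sum.inl 2) :=
    fun v hv => hM (hTM hv).1
  have hTr : ∀ v ∈ T, v (Sum.inr 3) = v (Sum.inr 0) * v (Sum.inr 1) + v (Sum.inr 2) :=
    fun v hv => hM (hTM hv).2
  let α : Fin 5 → Fin 4 ⊕ Fin 4 := ![Sum.inl 0, Sum.inl 1, Sum.inl 3, Sum.inr 1, Sum.inr 3]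
  let Y := closure ((fun v : Fin 4 ⊕ Fin 4 → K => v ∘ α) '' T)
  have hY : IC Y := hT.closure_image (cont_comp α)
  have hYd : 4 ≤ dim Y := by
    refine le_trans (by omega) (FB hT (Φ := fun v => v ∘ α) (reg_comp α) ?_)
    intro u hu v hv huv
    have e0 : u (Sum.inl 0) = v (Sum.inl 0) := congrFun huv 0
    have e1 : u (Sum.inl 1) = v (Sum.inl 1) := congrFun huv 1
    have e3 : u (Sum.inl 3) = v (Sum.inl 3) := congrFun huv 2
    have f1 : u (Sum.inr 1) = v (Sum.inr 1) := congrFun huv 3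
    have e2 : u (Sum.inl 2) = v (Sum.inl 2) := by
      have h1 := hTl u hu
      have h2 := hTl v hv
      rw [e0, e1, e3, h2] at h1
      exact (add_left_cancel h1).symm
    have f0 : u (Sum.inr 0) = v (Sum.inr 0) := by rw [← hT0 u hu, ← hT0 v hv, e0]
    have f2 : u (Sum.inr 2) = v (Sum.inr 2) := by rw [← hT2 u hu, ← hT2 v hv, e2]
    have hl := inj_MM (hM (hTM hu).1) (hM (hTM hv).1) e0 e1 e2
    have hr := inj_MM (hM (hTM hu).2) (hM (hTM hv).2) f0 f1 f2
    rw [← elim_eta u, ← elim_eta v, hl, hr]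
  have hYeq : ∀ w ∈ Y, w 2 - w 4 = w 0 * (w 1 - w 3) := by
    have hcl := closed_poly (K := K) (MvPolynomial.X 2 - MvPolynomial.X 4 - MvPolynomial.X 0 *
      (MvPolynomial.X 1 - MvPolynomial.X 3) : MvPolynomial (Fin 5) K)
    have : Y ⊆ _ := closure_minimal (by
      rintro _ ⟨v, hv, rfl⟩
      have h1 := hTl v hv
      have h2 := hTr v hv
      have h3 := hT0 v hv
      have h4 := hT2 v hv
      simp only [Set.mem_ofPred_eq, map_sub, map_mul, MvPolynomial.eval_X, Function.comp]
      change v (Sum.inl 3) - v (Sum.inr 3) - v (Sum.inl 0) * (v (Sum.inl 1) - v (Sum.inr 1)) = 0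
      rw [h1, h2, ← h3, ← h4]; ring) hcl
    intro w hw
    have := this hw
    simpa [sub_eq_zero] using this
  -- diagonal
  have hdiag : ∀ c x y : K, ![c, x, y, x, y] ∈ Y := by
    obtain ⟨S, hS, _, hSY, hSc, hSd⟩ := cut1 hY (a := Sum.elim m m ∘ α)
      (subset_closure ⟨_, hmT, rfl⟩) (Reg.coord 1) (Reg.coord 3) rfl
    intro c x y
    refine hSY (fill3 hS (by omega) ![0, 1, 2] (fun u => ![u 0, u 1, u 2, u 1, u 2])
      (by intro k; fin_cases k <;> exact Reg.coord _) ?_ ![c, x, y])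
    intro w hw
    have h1 := hYeq w (hSY hw)
    have h2 := hSc w hw
    rw [h2, sub_self, mul_zero, sub_eq_zero] at h1
    exact vec5_eq rfl rfl rfl h2 h1
  have hzero : ∀ x y x' : K, ![0, x, y, x', y] ∈ Y := by
    intro x y x'
    obtain ⟨S, hS, _, hSY, hSc, hSd⟩ := cut1 hY (hdiag 0 x y) (Reg.coord 0) (Reg.const 0) rfl
    refine hSY (fill3 hS (by omega) ![1, 2, 3] (fun u => ![0, u 0, u 1, u 2, u 1])
      (by intro k; fin_cases k <;> first | exact Reg.coord _ | exact Reg.const 0) ?_ ![x, y, x'])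
    intro w hw
    have h1 := hYeq w (hSY hw)
    have h2 := hSc w hw
    rw [h2, zero_mul, sub_eq_zero] at h1
    exact vec5_eq h2.symm rfl rfl rfl h1
  obtain ⟨S, hS, hpS, hSY, hSc, hSd⟩ := cut1 hY (hzero s b 0) (Reg.coord 3) (Reg.const 0) rfl
  have := image_M1 huniq hS (by omega) ![1, 0, 4, 2] (by
    intro u hu v hv huv
    have h1 : u 1 = v 1 := congrFun huv 0
    have h2 : u 0 = v 0 := congrFun huv 1
    have h3 : u 4 = v 4 := congrFun huv 2
    have h4 : u 2 = v 2 := congrFun huv 3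
    have h5 : u 3 = v 3 := (hSc u hu).trans (hSc v hv).symm
    funext i
    fin_cases i
    · exact h2
    · exact h1
    · exact h4
    · exact h5
    · exact h3) (by
    intro w hw
    have h1 := hYeq w (hSY hw)
    have h2 := hSc w hw
    change w 2 = w 1 * w 0 + w 4
    rw [h2] at h1
    linear_combination h1) hpS
  convert this using 1
  funext i; fin_cases i <;> rfl

theorem MM_axes2 {M1 : Set (Fin 4 → K)} (hM1 : IC M1) (hM : M1 ⊆ MM K) (hd : 3 ≤ dim M1)
    (huniq : ∀ T, IC T → T ⊆ MM K → 3 ≤ dim T → T ⊆ M1) (s b : K) : ![0, s, b, b] ∈ M1 := by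
  have := image_M1 huniq hM1 hd ![1, 0, 2, 3] (by
    intro u hu v hv huv
    exact inj_MM (hM hu) (hM hv) (congrFun huv 1) (congrFun huv 0) (congrFun huv 2)) (by
    intro w hw
    have h1 : w 3 = w 0 * w 1 + w 2 := hM hw
    change w 3 = w 1 * w 0 + w 2
    rw [h1]; ring) (M1_axes hM1 hM hd huniq s b)
  convert this using 1
  funext i; fin_cases i <;> rfl

theorem vec4_eta (w : Fin 4 → K) : ![w 0, w 1, w 2, w 3] = w := by
  funext i; fin_cases i <;> rfl

theorem M1_cofin1 {M1 : Set (Fin 4 → K)} (hM1 : IC M1) (hM : M1 ⊆ MM K) (hd : 3 ≤ dim M1)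
    (huniq : ∀ T, IC T → T ⊆ MM K → 3 ≤ dim T → T ⊆ M1) (x b : K) :
    {c | ![c, x, b, c * x + b] ∈ M1}ᶜ.Finite := by
  obtain ⟨T, hT, hmT, hTM, hTc, hTd⟩ := cut 2 hM1 (MM_axes2 hM1 hM hd huniq x b)
    ![fun v => v 1, fun v => v 2] ![fun v => x, fun v => b]
    (by intro i; fin_cases i <;> exact Reg.coord _) (by intro i; fin_cases i <;> exact Reg.const _)
    (by intro i; fin_cases i <;> rfl)
  obtain ⟨t, ht, hne⟩ := (hT.infinite (by omega)).exists_notMem_finite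
    (Set.finite_singleton ![0, x, b, b])
  have h1 : ∀ v ∈ T, v 1 = x := fun v hv => hTc v hv 0
  have h2 : ∀ v ∈ T, v 2 = b := fun v hv => hTc v hv 1
  refine (cofin hT (Reg.coord 0) ht hmT ?_).subset ?_
  · intro h0
    exact hne (inj_MM (hM (hTM ht)) (hM (hTM hmT)) h0 ((h1 _ ht).trans (h1 _ hmT).symm)
      ((h2 _ ht).trans (h2 _ hmT).symm))
  · refine Set.compl_subset_compl.2 ?_
    rintro _ ⟨v, hv, rfl⟩
    have h3 : v 3 = v 0 * v 1 + v 2 := hM (hTM hv)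
    rw [Set.mem_ofPred_eq, ← h1 v hv, ← h2 v hv, ← h3, vec4_eta]
    exact hTM hv

theorem M1_cofin2 {M1 : Set (Fin 4 → K)} (hM1 : IC M1) (hM : M1 ⊆ MM K) (hd : 3 ≤ dim M1)
    (huniq : ∀ T, IC T → T ⊆ MM K → 3 ≤ dim T → T ⊆ M1) (x y : K) :
    {c | ![c, x, y - c * x, y] ∈ M1}ᶜ.Finite := by
  obtain ⟨T, hT, hmT, hTM, hTc, hTd⟩ := cut 2 hM1 (MM_axes2 hM1 hM hd huniq x y)
    ![fun v => v 1, fun v => v 3] ![fun v => x, fun v => y]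
    (by intro i; fin_cases i <;> exact Reg.coord _) (by intro i; fin_cases i <;> exact Reg.const _)
    (by intro i; fin_cases i <;> rfl)
  obtain ⟨t, ht, hne⟩ := (hT.infinite (by omega)).exists_notMem_finite
    (Set.finite_singleton ![0, x, y, y])
  have h1 : ∀ v ∈ T, v 1 = x := fun v hv => hTc v hv 0
  have h2 : ∀ v ∈ T, v 3 = y := fun v hv => hTc v hv 1
  have h3 : ∀ v ∈ T, v 3 = v 0 * v 1 + v 2 := fun v hv => hM (hTM hv)
  have h4 : ∀ v ∈ T, v 2 = y - v 0 * x := fun v hv => by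
    have := h3 v hv
    rw [h1 v hv, h2 v hv] at this
    rw [this]; ring
  refine (cofin hT (Reg.coord 0) ht hmT ?_).subset ?_
  · intro h0
    have h0 : t 0 = (![0, x, y, y] : Fin 4 → K) 0 := h0
    exact hne (inj_MM (hM (hTM ht)) (hM (hTM hmT)) h0 ((h1 _ ht).trans (h1 _ hmT).symm)
      (by rw [h4 _ ht, h4 _ hmT, h0]))
  · refine Set.compl_subset_compl.2 ?_
    rintro _ ⟨v, hv, rfl⟩
    have h5 : (![v 0, x, y - v 0 * x, y] : Fin 4 → K) = v := by
      rw [← h4 v hv, ← h1 v hv, ← h2 v hv, vec4_eta]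
    rw [Set.mem_ofPred_eq, h5]
    exact hTM hv

theorem IC_MM : IC (MM K) ∧ 3 ≤ dim (MM K) := by
  obtain ⟨M1, hM1, hM, hd, huniq⟩ := exists_M1 (K := K)
  suffices h : MM K ⊆ M1 by
    have : MM K = M1 := Set.Subset.antisymm h hM
    rw [this]; exact ⟨hM1, hd⟩
  intro p hp
  have hp : p 3 = p 0 * p 1 + p 2 := hp
  have f1 := M1_cofin2 hM1 hM hd huniq 1 (p 0)
  have f2 := (M1_cofin1 hM1 hM hd huniq (p 1) (p 2)).preimage
    (f := fun c => p 0 - c) (fun a _ b _ h => by simpa using h)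
  have f3 := M1_cofin2 hM1 hM hd huniq (p 1) (p 3)
  haveI : Infinite K := infinite_K
  obtain ⟨c, hc⟩ := ((f1.union f2).union f3).infinite_compl.nonempty
  simp only [Set.mem_compl_iff, Set.mem_union, not_or, Set.mem_preimage, not_not,
    Set.mem_ofPred_eq] at hc
  obtain ⟨⟨h1, h2⟩, h3⟩ := hc
  have hA := (hM1.pr hM1).pr hM1
  obtain ⟨T, hT, hmT, hTM, hTc, hTd⟩ := cut 6 hA (a := Sum.elim (Sum.elim _ _) _)
    ⟨⟨h1, h2⟩, h3⟩
    ![fun v => v (Sum.inl (Sum.inl 1)), fun v => v (Sum.inl (Sum.inr 0)),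
      fun v => v (Sum.inr 0), fun v => v (Sum.inl (Sum.inl 0)), fun v => v (Sum.inr 1),
      fun v => v (Sum.inr 2)]
    ![fun v => 1, fun v => v (Sum.inl (Sum.inl 2)),
      fun v => v (Sum.inl (Sum.inl 0)), fun v => c, fun v => v (Sum.inl (Sum.inr 1)),
      fun v => v (Sum.inl (Sum.inr 3))]
    (by intro i; fin_cases i <;> exact Reg.coord _)
    (by intro i; fin_cases i <;> first | exact Reg.coord _ | exact Reg.const _)
    (by
      intro i; fin_cases i
      · rfl
      · change p 0 - c = p 0 - c * 1
        ring
      · rfl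
      · rfl
      · rfl
      · change p 3 - c * p 1 = (p 0 - c) * p 1 + p 2
        rw [hp]; ring)
  rw [dim_pr (hM1.pr hM1) hM1, dim_pr hM1 hM1] at hTd
  let A1 : Fin 4 → (Fin 4 ⊕ Fin 4) ⊕ Fin 4 := fun i => Sum.inl (Sum.inl i)
  let A2 : Fin 4 → (Fin 4 ⊕ Fin 4) ⊕ Fin 4 := fun i => Sum.inl (Sum.inr i)
  let A3 : Fin 4 → (Fin 4 ⊕ Fin 4) ⊕ Fin 4 := fun i => Sum.inr i
  have g0 : ∀ v ∈ T, v (A1 1) = 1 := fun v hv => hTc v hv 0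
  have g1 : ∀ v ∈ T, v (A2 0) = v (A1 2) := fun v hv => hTc v hv 1
  have g2 : ∀ v ∈ T, v (A3 0) = v (A1 0) := fun v hv => hTc v hv 2
  have g3 : ∀ v ∈ T, v (A1 0) = c := fun v hv => hTc v hv 3
  have g4 : ∀ v ∈ T, v (A3 1) = v (A2 1) := fun v hv => hTc v hv 4
  have g5 : ∀ v ∈ T, v (A3 2) = v (A2 3) := fun v hv => hTc v hv 5
  have m1 : ∀ v ∈ T, v (A1 3) = v (A1 0) * v (A1 1) + v (A1 2) := fun v hv => hM (hTM hv).1.1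
  have m2 : ∀ v ∈ T, v (A2 3) = v (A2 0) * v (A2 1) + v (A2 2) := fun v hv => hM (hTM hv).1.2
  have m3 : ∀ v ∈ T, v (A3 3) = v (A3 0) * v (A3 1) + v (A3 2) := fun v hv => hM (hTM hv).2
  have := image_M1 huniq hT (by omega) ![A1 3, A2 1, A2 2, A3 3] (by
    intro u hu v hv huv
    have e1 : u (A1 3) = v (A1 3) := congrFun huv 0
    have e2 : u (A2 1) = v (A2 1) := congrFun huv 1
    have e3 : u (A2 2) = v (A2 2) := congrFun huv 2
    have e12 : u (A1 2) = v (A1 2) := by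
      have a1 := m1 u hu
      have a2 := m1 v hv
      rw [g0 u hu, g3 u hu] at a1
      rw [g0 v hv, g3 v hv] at a2
      rw [a1, a2] at e1
      exact add_left_cancel e1
    have l1 := inj_MM (hM (hTM hu).1.1) (hM (hTM hv).1.1) ((g3 u hu).trans (g3 v hv).symm)
      ((g0 u hu).trans (g0 v hv).symm) e12
    have e20 : u (A2 0) = v (A2 0) := by rw [g1 u hu, g1 v hv, e12]
    have l2 := inj_MM (hM (hTM hu).1.2) (hM (hTM hv).1.2) e20 e2 e3
    have e23 : u (A2 3) = v (A2 3) := congrFun l2 3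
    have l3 := inj_MM (hM (hTM hu).2) (hM (hTM hv).2)
      (show u (A3 0) = v (A3 0) by rw [g2 u hu, g2 v hv, g3 u hu, g3 v hv])
      (show u (A3 1) = v (A3 1) by rw [g4 u hu, g4 v hv, e2])
      (show u (A3 2) = v (A3 2) by rw [g5 u hu, g5 v hv, e23])
    funext i
    rcases i with (i | i) | i
    · exact congrFun l1 i
    · exact congrFun l2 i
    · exact congrFun l3 i) (by
    intro v hv
    change v (A3 3) = v (A1 3) * v (A2 1) + v (A2 2)
    rw [m3 v hv, g5 v hv, m2 v hv, m1 v hv, g1 v hv, g4 v hv, g2 v hv, g0 v hv]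
    ring) hmT
  convert this using 1
  funext i; fin_cases i <;> rfl

theorem reg_mulAdd : Reg (fun v : Fin 3 → K => v 0 * v 1 + v 2) := by
  intro κ _ α
  rw [continuous_iff_isClosed]
  intro D hD
  set G : (κ → K) → (Option κ → K) := fun v o => o.elim ((v ∘ α) 0 * (v ∘ α) 1 + (v ∘ α) 2) v with hG
  let β : Fin 4 → Option κ := ![some (α 0), some (α 1), some (α 2), none]
  have hGr : IsClosed ((fun z : Option κ → K => z ∘ β) ⁻¹' MM K) := closed_MM.preimage (cont_comp β)
  have hGmem : ∀ v, G v ∈ (fun z : Option κ → K => z ∘ β) ⁻¹' MM K := fun v => rfl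
  have hGof : ∀ z ∈ (fun z : Option κ → K => z ∘ β) ⁻¹' MM K, G (z ∘ some) = z := by
    intro z hz
    have hz : z none = z (some (α 0)) * z (some (α 1)) + z (some (α 2)) := hz
    funext o
    rcases o with _ | o
    · exact hz.symm
    · rfl
  obtain ⟨S, hS, hcl, hirr, he⟩ :=
    TopologicalSpace.NoetherianSpace.exists_finite_set_isClosed_irreducible (hD.inter hGr)
  have hpre : G ⁻¹' D = ⋃ t ∈ S, G ⁻¹' t := by
    ext v
    have : G v ∈ D ↔ G v ∈ ⋃₀ S := by
      rw [← he]; exact ⟨fun h => ⟨h, hGmem v⟩, fun h => h.1⟩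
    simp only [Set.mem_preimage, this]
    simp
  rw [hpre]
  refine hS.isClosed_biUnion fun t ht => ?_
  have htIC : IC t := ⟨hcl t ht, hirr t ht⟩
  have htG : t ⊆ (fun z : Option κ → K => z ∘ β) ⁻¹' MM K := by
    intro z hz
    have : z ∈ ⋃₀ S := ⟨t, ht, hz⟩
    rw [← he] at this
    exact this.2
  let π : (Option κ → K) → (κ → K) := fun z => z ∘ some
  have hB : IC (closure (π '' t)) := htIC.closure_image (cont_comp _)
  have hsub : closure (π '' t) ⊆ G ⁻¹' t := by
    intro v hv
    obtain ⟨hMIC, hMd⟩ := IC_MM (K := K)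
    obtain ⟨T, hT, hmT, hTM, hTc, hTd⟩ := cut 3 (hB.pr hMIC)
      (a := Sum.elim v ![v (α 0), v (α 1), v (α 2), v (α 0) * v (α 1) + v (α 2)])
      ⟨hv, rfl⟩
      ![fun v => v (Sum.inl (α 0)), fun v => v (Sum.inl (α 1)), fun v => v (Sum.inl (α 2))]
      ![fun v => v (Sum.inr 0), fun v => v (Sum.inr 1), fun v => v (Sum.inr 2)]
      (by intro i; fin_cases i <;> exact Reg.coord _)
      (by intro i; fin_cases i <;> exact Reg.coord _)
      (by intro i; fin_cases i <;> rfl)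
    rw [dim_pr hB hMIC] at hTd
    have g0 : ∀ v ∈ T, v (Sum.inl (α 0)) = v (Sum.inr 0) := fun v hv => hTc v hv 0
    have g1 : ∀ v ∈ T, v (Sum.inl (α 1)) = v (Sum.inr 1) := fun v hv => hTc v hv 1
    have g2 : ∀ v ∈ T, v (Sum.inl (α 2)) = v (Sum.inr 2) := fun v hv => hTc v hv 2
    have g3 : ∀ v ∈ T, v (Sum.inr 3) = v (Sum.inr 0) * v (Sum.inr 1) + v (Sum.inr 2) :=
      fun v hv => (hTM hv).2
    have hfb := FB hT (Φ := fun z => z ∘ Sum.inl) (reg_comp _) (by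
      intro x hx y hy hxy
      have hxy : x ∘ Sum.inl = y ∘ Sum.inl := hxy
      have hc : ∀ k, x (Sum.inl k) = y (Sum.inl k) := fun k => congrFun hxy k
      have := inj_MM (hTM hx).2 (hTM hy).2
        (show x (Sum.inr 0) = y (Sum.inr 0) by rw [← g0 x hx, ← g0 y hy, hc])
        (show x (Sum.inr 1) = y (Sum.inr 1) by rw [← g1 x hx, ← g1 y hy, hc])
        (show x (Sum.inr 2) = y (Sum.inr 2) by rw [← g2 x hx, ← g2 y hy, hc])
      rw [← elim_eta x, ← elim_eta y, hxy, this])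
    have hcB : closure ((fun z : κ ⊕ Fin 4 → K => z ∘ Sum.inl) '' T) ⊆ closure (π '' t) := by
      refine closure_minimal ?_ isClosed_closure
      rintro _ ⟨z, hz, rfl⟩
      exact (hTM hz).1
    have heq := eq_of_dim_le (hT.closure_image (cont_comp _)) hB hcB (by omega)
    obtain ⟨F, hF, hF1, hF2⟩ := Z1R htIC.1 htIC.2.1 (Φ := π) (reg_comp _)
    let θ : Option κ → κ ⊕ Fin 4 := fun o => o.elim (Sum.inr 3) Sum.inl
    have hTt : T ⊆ (fun z => z ∘ θ) ⁻¹' t := by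
      refine hT.subset_of_diff (htIC.1.preimage (cont_comp θ)) (hF.preimage (cont_comp Sum.inl)) ?_ ?_
      · intro h
        rw [← heq] at hF1
        refine hF1 (closure_minimal ?_ hF)
        rintro _ ⟨z, hz, rfl⟩; exact h hz
      · intro z hz hzF
        obtain ⟨d, hd, hde⟩ := hF2 _ (hcB (subset_closure ⟨z, hz, rfl⟩)) hzF
        have h1 := hGof d (htG hd)
        have h2 : d ∘ some = z ∘ Sum.inl := hde
        have h3 : z ∘ θ = d := by
          rw [← h1, h2]
          funext o
          rcases o with _ | o
          · change z (Sum.inr 3) = z (Sum.inl (α 0)) * z (Sum.inl (α 1)) + z (Sum.inl (α 2))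
            rw [g3 z hz, g0 z hz, g1 z hz, g2 z hz]
          · rfl
        rw [Set.mem_preimage, h3]; exact hd
    have h4 := hTt hmT
    rw [Set.mem_preimage] at h4
    have h5 : G v = Sum.elim v ![v (α 0), v (α 1), v (α 2), v (α 0) * v (α 1) + v (α 2)] ∘ θ := by
      funext o
      rcases o with _ | o <;> rfl
    rw [Set.mem_preimage, h5]
    exact h4
  have : G ⁻¹' t = closure (π '' t) := by
    refine Set.Subset.antisymm ?_ hsub
    intro v hv
    exact subset_closure ⟨G v, hv, rfl⟩
  rw [this]
  exact isClosed_closure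

theorem Reg.mulAdd {f g h : (ι → K) → K} (hf : Reg f) (hg : Reg g) (hh : Reg h) :
    Reg (fun v => f v * g v + h v) :=
  Reg.comp (reg_mulAdd (K := K)) (g := fun v => ![f v, g v, h v])
    (by intro k; fin_cases k; exacts [hf, hg, hh])

theorem Reg.mul {f g : (ι → K) → K} (hf : Reg f) (hg : Reg g) : Reg (fun v => f v * g v) := by
  simpa using hf.mulAdd hg (Reg.const 0)

theorem Reg.add {f g : (ι → K) → K} (hf : Reg f) (hg : Reg g) : Reg (fun v => f v + g v) := by
  simpa using hf.mulAdd (Reg.const 1) hg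

theorem Reg.neg {f : (ι → K) → K} (hf : Reg f) : Reg (fun v => - f v) := by
  simpa using hf.mul (Reg.const (-1))

theorem Reg.sub {f g : (ι → K) → K} (hf : Reg f) (hg : Reg g) : Reg (fun v => f v - g v) := by
  simpa [sub_eq_add_neg] using hf.add hg.neg

theorem Reg.div_const {f : (ι → K) → K} (hf : Reg f) (c : K) : Reg (fun v => f v / c) := by
  simpa [div_eq_mul_inv] using hf.mul (Reg.const c⁻¹)

theorem Reg.prod {σ : Type*} (s : Finset σ) {f : σ → (ι → K) → K} (hf : ∀ i ∈ s, Reg (f i)) :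
    Reg (fun v => ∏ i ∈ s, f i v) := by
  classical
  induction s using Finset.induction_on with
  | empty => simpa using Reg.const (1 : K)
  | insert a s ha ih =>
    simp only [Finset.prod_insert ha]
    exact (hf a (by simp)).mul (ih fun i hi => hf i (by simp [hi]))

theorem Reg.poly (p : MvPolynomial ι K) : Reg (fun v : ι → K => MvPolynomial.eval v p) := by
  induction p using MvPolynomial.induction_on with
  | C a => simpa using Reg.const a
  | add p q hp hq => simpa using hp.add hq
  | mul_X p i hp => simpa using hp.mul (Reg.coord i)

end polynomial
end ZGeo

set_option linter.style.haveILetI false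
set_option linter.unusedSectionVars false
set_option linter.unusedVariables false
set_option linter.unusedSimpArgs false
namespace ZGeo
universe u
section cones
variable {K : Type u} [Field K] [IsAlgClosed K] [ZG K] {ι κ μ : Type} [Finite ι] [Finite κ] [Finite μ]

/-- the vector `(e, s, v)` -/
def cpt (e : ι → K) (s : K) (v : κ → K) : ι ⊕ Option κ → K := Sum.elim e (fun o => o.elim s v)

theorem cpt_eta (w : ι ⊕ Option κ → K) :
    cpt (fun i => w (Sum.inl i)) (w (Sum.inr none)) (fun k => w (Sum.inr (some k))) = w := by
  funext i
  rcases i with i | (_ | i) <;> rfl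

theorem reg_cpt {f : (μ → K) → (ι → K)} {s : (μ → K) → K} {g : (μ → K) → (κ → K)}
    (hf : ∀ k, Reg (fun v => f v k)) (hs : Reg s) (hg : ∀ k, Reg (fun v => g v k)) :
    ∀ k, Reg (fun v => cpt (f v) (s v) (g v) k) := by
  rintro (k | (_ | k))
  · exact hf k
  · exact hs
  · exact hg k

/-- the cone map -/
def cmap (w : (ι ⊕ κ) ⊕ Unit → K) : ι ⊕ Option κ → K :=
  cpt (fun i => w (Sum.inl (Sum.inl i))) (w (Sum.inr ()))
    (fun k => w (Sum.inr ()) * w (Sum.inl (Sum.inr k)))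

theorem reg_cmap : ∀ k, Reg (fun w : (ι ⊕ κ) ⊕ Unit → K => cmap w k) :=
  reg_cpt (fun k => Reg.coord _) (Reg.coord _) (fun k => (Reg.coord _).mul (Reg.coord _))

/-- the cone over `A` -/
def cone (A : Set (ι ⊕ κ → K)) : Set (ι ⊕ Option κ → K) :=
  closure (cmap '' pr A (Set.univ : Set (Unit → K)))

theorem IC.cone {A : Set (ι ⊕ κ → K)} (hA : IC A) : IC (cone A) :=
  (hA.pr IC_univ_unit).closure_image (Reg.continuous reg_cmap)

theorem mem_cone {A : Set (ι ⊕ κ → K)} {a : ι ⊕ κ → K} (ha : a ∈ A) (s : K) :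
    cpt (fun i => a (Sum.inl i)) s (fun k => s * a (Sum.inr k)) ∈ cone A :=
  subset_closure ⟨Sum.elim a (fun _ => s), ⟨ha, trivial⟩, rfl⟩

theorem cone_sub {A : Set (ι ⊕ κ → K)} {D : Set (ι ⊕ Option κ → K)} (hD : IsClosed D)
    (h : ∀ a ∈ A, ∀ s, cpt (fun i => a (Sum.inl i)) s (fun k => s * a (Sum.inr k)) ∈ D) :
    cone A ⊆ D := by
  refine closure_minimal ?_ hD
  rintro _ ⟨w, hw, rfl⟩
  exact h _ hw.1 (w (Sum.inr ()))

theorem cone_zero {A : Set (ι ⊕ κ → K)} {e : ι → K}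
    (he : e ∈ closure ((fun a : ι ⊕ κ → K => a ∘ Sum.inl) '' A)) : cpt e 0 0 ∈ cone A := by
  have hc : IsClosed ((fun e : ι → K => (cpt e 0 0 : ι ⊕ Option κ → K)) ⁻¹' cone A) :=
    isClosed_closure.preimage (Reg.continuous (reg_cpt (fun k => Reg.coord k) (Reg.const 0)
      (fun k => Reg.const 0)))
  refine closure_minimal ?_ hc he
  rintro _ ⟨a, ha, rfl⟩
  have := mem_cone ha 0
  simp only [zero_mul] at this
  exact this

theorem cone_scale {A : Set (ι ⊕ κ → K)} (c : K) {e : ι → K} {s : K} {v : κ → K}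
    (h : cpt e s v ∈ cone A) : cpt e (c * s) (fun k => c * v k) ∈ cone A := by
  let Ψ : (ι ⊕ Option κ → K) → (ι ⊕ Option κ → K) := fun w => cpt (fun i => w (Sum.inl i))
    (c * w (Sum.inr none)) (fun k => c * w (Sum.inr (some k)))
  have hΨ : ∀ k, Reg (fun w => Ψ w k) := reg_cpt (fun k => Reg.coord _)
    ((Reg.const c).mul (Reg.coord _)) (fun k => (Reg.const c).mul (Reg.coord _))
  have hc : IsClosed (Ψ ⁻¹' cone A) := isClosed_closure.preimage (Reg.continuous hΨ)
  have := cone_sub (A := A) hc (by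
    intro a ha s
    have := mem_cone ha (c * s)
    simp only [mul_assoc] at this
    exact this) h
  exact this

theorem cone_base {A : Set (ι ⊕ κ → K)} {w : ι ⊕ Option κ → K} (h : w ∈ cone A) :
    (fun i => w (Sum.inl i)) ∈ closure ((fun a : ι ⊕ κ → K => a ∘ Sum.inl) '' A) := by
  have hc : IsClosed ((fun w : ι ⊕ Option κ → K => w ∘ Sum.inl) ⁻¹'
      closure ((fun a : ι ⊕ κ → K => a ∘ Sum.inl) '' A)) :=
    isClosed_closure.preimage (cont_comp _)
  exact cone_sub (A := A) hc (fun a ha s => subset_closure ⟨a, ha, rfl⟩) h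

theorem dim_cone_le {A : Set (ι ⊕ κ → K)} (hA : IC A) : dim (cone A) ≤ dim A + 1 := by
  have := dim_closure_image_le (hA.pr IC_univ_unit) reg_cmap
  rwa [dim_pr hA IC_univ_unit, dim_univ_unit] at this

theorem le_dim_cone {A : Set (ι ⊕ κ → K)} (hA : IC A) : dim A + 1 ≤ dim (cone A) := by
  let Φ : (ι ⊕ κ → K) → (ι ⊕ Option κ → K) := fun a =>
    cpt (fun i => a (Sum.inl i)) 1 (fun k => a (Sum.inr k))
  let Ψ : (ι ⊕ Option κ → K) → (ι ⊕ κ → K) := fun w => w ∘ Sum.map id some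
  have hΦ : ∀ k, Reg (fun w => Φ w k) := reg_cpt (fun k => Reg.coord _)
    (Reg.const 1) (fun k => Reg.coord _)
  have hΨ : ∀ k, Reg (fun w => Ψ w k) := reg_comp _
  have hinv : ∀ v, Ψ (Φ v) = v := by
    intro v; funext i; rcases i with i | i <;> rfl
  have h1 : IC (Φ '' A) := hA.image_leftInv hΦ hΨ hinv
  have h2 : dim A ≤ dim (Φ '' A) := dim_le_of_leftInv hA h1 (Reg.continuous hΦ) (Reg.continuous hΨ)
    (fun v _ => hinv v) (fun v hv => ⟨v, hv, rfl⟩)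
  have h3 : Φ '' A ⊂ cone A := by
    refine ⟨?_, ?_⟩
    · rintro _ ⟨a, ha, rfl⟩
      have := mem_cone ha 1
      simpa only [one_mul] using this
    · intro h
      obtain ⟨a, ha⟩ := hA.2.1
      obtain ⟨b, hb, he⟩ := h (mem_cone ha 0)
      have : (1 : K) = 0 := congrFun he (Sum.inr none)
      exact one_ne_zero this
  have := dim_lt h1 hA.cone h3
  omega

theorem cone_mem {A : Set (ι ⊕ κ → K)} (hA : IC A) {e : ι → K} {v : κ → K}
    (h : cpt e 1 v ∈ cone A) : Sum.elim e v ∈ A := by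
  obtain ⟨T, hT, hmT, hTM, hTc, hTd⟩ := cut1 hA.cone h (Reg.coord (Sum.inr none)) (Reg.const 1) rfl
  have hdA := le_dim_cone hA
  let Φ : (ι ⊕ κ → K) → (ι ⊕ Option κ → K) := fun a =>
    cpt (fun i => a (Sum.inl i)) 1 (fun k => a (Sum.inr k))
  let Ψ : (ι ⊕ Option κ → K) → (ι ⊕ κ → K) := fun w => w ∘ Sum.map id some
  have hΦ : ∀ k, Reg (fun w => Φ w k) := reg_cpt (fun k => Reg.coord _)
    (Reg.const 1) (fun k => Reg.coord _)
  have hΨ : ∀ k, Reg (fun w => Ψ w k) := reg_comp _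
  have hinv : ∀ v, Ψ (Φ v) = v := by
    intro v; funext i; rcases i with i | i <;> rfl
  have hinv2 : ∀ w ∈ T, Φ (Ψ w) = w := by
    intro w hw; funext i
    rcases i with i | (_ | i)
    · rfl
    · exact (hTc w hw).symm
    · rfl
  have hT'eq : Φ ⁻¹' T = Ψ '' T := by
    ext a
    refine ⟨fun ha => ⟨Φ a, ha, hinv a⟩, ?_⟩
    rintro ⟨w, hw, rfl⟩
    rw [Set.mem_preimage, hinv2 w hw]; exact hw
  have hT' : IC (Φ ⁻¹' T) := by
    refine ⟨hT.1.preimage (Reg.continuous hΦ), ?_⟩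
    rw [hT'eq]
    exact hT.2.image _ (Reg.continuous hΨ).continuousOn
  have hdT : dim T ≤ dim (Φ ⁻¹' T) := dim_le_of_leftInv hT hT' (Reg.continuous hΨ)
    (Reg.continuous hΦ) hinv2 (fun w hw => by rw [Set.mem_preimage, hinv2 w hw]; exact hw)
  have hsub : cone (Φ ⁻¹' T) ⊆ cone A := by
    refine cone_sub isClosed_closure ?_
    intro a ha s
    have := cone_scale s (hTM ha)
    simpa only [mul_one] using this
  have heq : cone (Φ ⁻¹' T) = cone A := by
    refine eq_of_dim_le hT'.cone hA.cone hsub ?_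
    have h1 := le_dim_cone hT'
    have h2 := dim_cone_le hA
    omega
  obtain ⟨F, hF, hF1, hF2⟩ := Z1R (hA.pr IC_univ_unit).1 (hA.pr IC_univ_unit).2.1
    (reg_cmap (K := K) (ι := ι) (κ := κ))
  have hP := hT'.pr (IC_univ_unit (K := K))
  have hL : IsClosed {w : (ι ⊕ κ) ⊕ Unit → K | w (Sum.inr ()) = 0} :=
    closed_eq (Reg.coord _) (Reg.const 0)
  have hsubP : pr (Φ ⁻¹' T) Set.univ ⊆ pr A (Set.univ : Set (Unit → K)) := by
    refine hP.subset_of_diff (hA.pr IC_univ_unit).1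
      ((hF.preimage (Reg.continuous reg_cmap)).union hL) ?_ ?_
    · intro hcon
      rcases hP.subset_of_union (hF.preimage (Reg.continuous reg_cmap)) hL hcon with h1 | h1
      · apply hF1
        change cone A ⊆ F
        rw [← heq]
        refine closure_minimal ?_ hF
        rintro _ ⟨w, hw, rfl⟩
        exact h1 hw
      · obtain ⟨t, ht⟩ := hT'.2.1
        have : (1 : K) = 0 := h1 (a := Sum.elim t (fun _ => 1)) ⟨ht, trivial⟩
        exact one_ne_zero this
    · intro w hw hwn
      have hwF : cmap w ∉ F := fun h => hwn (Or.inl h)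
      have hw0 : w (Sum.inr ()) ≠ 0 := fun h => hwn (Or.inr h)
      have hmem : cmap w ∈ cone A := by
        rw [← heq]; exact subset_closure ⟨w, hw, rfl⟩
      obtain ⟨w', hw', he⟩ := hF2 _ hmem hwF
      have e0 : w' (Sum.inr ()) = w (Sum.inr ()) := congrFun he (Sum.inr none)
      have e1 : ∀ i, w' (Sum.inl (Sum.inl i)) = w (Sum.inl (Sum.inl i)) :=
        fun i => congrFun he (Sum.inl i)
      have e2 : ∀ k, w' (Sum.inl (Sum.inr k)) = w (Sum.inl (Sum.inr k)) := by
        intro k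
        have h3 : w' (Sum.inr ()) * w' (Sum.inl (Sum.inr k)) =
          w (Sum.inr ()) * w (Sum.inl (Sum.inr k)) := congrFun he (Sum.inr (some k))
        rw [e0] at h3
        exact mul_left_cancel₀ hw0 h3
      have : w' = w := by
        funext i
        rcases i with (i | i) | i
        · exact e1 i
        · exact e2 i
        · exact e0
      rw [← this]; exact hw'
  have hmem : Sum.elim e v ∈ Φ ⁻¹' T := hmT
  exact (hsubP (a := Sum.elim (Sum.elim e v) (fun _ => 0)) ⟨hmem, trivial⟩).1

theorem limit_pt {A : Set (ι ⊕ κ → K)} (hA : IC A) (hd : 1 ≤ dim A) (i0 : ι) {e0 : ι → K}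
    (he0 : e0 ∈ closure ((fun a : ι ⊕ κ → K => a ∘ Sum.inl) '' A))
    (hfin : {e ∈ closure ((fun a : ι ⊕ κ → K => a ∘ Sum.inl) '' A) | e i0 = e0 i0}.Finite) :
    (∃ v, Sum.elim e0 v ∈ A) ∨ ∃ v k, v k = 1 ∧ cpt e0 0 v ∈ cone A := by
  have hd2 := le_dim_cone hA
  obtain ⟨T, hT, hmT, hTM, hTc, hTd⟩ := cut1 hA.cone (cone_zero he0) (Reg.coord (Sum.inl i0))
    (Reg.const (e0 i0)) rfl
  have hB := hT.closure_image (cont_comp (K := K) (Sum.inl : ι → ι ⊕ Option κ))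
  have hBs : closure ((fun w : ι ⊕ Option κ → K => w ∘ Sum.inl) '' T) ⊆
      {e ∈ closure ((fun a : ι ⊕ κ → K => a ∘ Sum.inl) '' A) | e i0 = e0 i0} := by
    refine closure_minimal ?_ hfin.isClosed
    rintro _ ⟨w, hw, rfl⟩
    exact ⟨cone_base (hTM hw), hTc w hw⟩
  have hsing := hB.eq_singleton_of_finite (hfin.subset hBs) (subset_closure ⟨_, hmT, rfl⟩)
  obtain ⟨w, hw, hne⟩ := (hT.infinite (by omega)).exists_notMem_finite
    (Set.finite_singleton (cpt e0 0 0))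
  have hwe : (fun i => w (Sum.inl i)) = e0 := by
    have : (w ∘ Sum.inl) ∈ closure ((fun w : ι ⊕ Option κ → K => w ∘ Sum.inl) '' T) :=
      subset_closure ⟨w, hw, rfl⟩
    rw [hsing] at this
    exact this
  have hwV := hTM hw
  rw [← cpt_eta w, hwe] at hwV
  rw [← cpt_eta w, hwe] at hne
  generalize w (Sum.inr none) = s at hwV hne
  generalize (fun k => w (Sum.inr (some k))) = v at hwV hne
  by_cases hs : s = 0
  · subst hs
    right
    have : ∃ k, v k ≠ 0 := by
      by_contra hcon
      push Not at hcon
      exact hne (by rw [show v = 0 from funext hcon]; rfl)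
    obtain ⟨k, hk⟩ := this
    refine ⟨fun j => (v k)⁻¹ * v j, k, inv_mul_cancel₀ hk, ?_⟩
    have := cone_scale (v k)⁻¹ hwV
    simpa only [mul_zero] using this
  · left
    have := cone_scale s⁻¹ hwV
    rw [inv_mul_cancel₀ hs] at this
    exact ⟨_, cone_mem hA this⟩

/-- finite set of values of a regular function is closed -/
theorem closed_fin {f : (ι → K) → K} (hf : Reg f) {F : Set K} (hF : F.Finite) :
    IsClosed {v | f v ∈ F} := by
  have : {v | f v ∈ F} = ⋃ c ∈ F, {v | f v = c} := by ext; simp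
  rw [this]
  exact hF.isClosed_biUnion fun c _ => closed_eq hf (Reg.const c)

theorem dim_le_one {A : Set (ι → K)} (hA : IC A) {a : ι → K} (ha : a ∈ A) {f : (ι → K) → K}
    (hf : Reg f) (hfin : {v ∈ A | f v = f a}.Finite) : dim A ≤ 1 := by
  obtain ⟨T, hT, hmT, hTM, hTc, hTd⟩ := cut1 hA ha hf (Reg.const (f a)) rfl
  have hfT : T.Finite := hfin.subset fun v hv => ⟨hTM hv, hTc v hv⟩
  by_contra hcon
  exact hT.infinite (by omega) hfT

/-- an irreducible set on which `f` is nonconstant is not covered by finitely many fibres -/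
theorem not_sub_fin {A : Set (ι → K)} (hA : IC A) {a b : ι → K} (ha : a ∈ A) (hb : b ∈ A)
    {f : (ι → K) → K} (hf : Reg f) (hab : f a ≠ f b) {F : Set K} (hF : F.Finite) :
    ¬ A ⊆ {v | f v ∈ F} := by
  intro h
  have h1 := cofin hA hf ha hb hab
  haveI : Infinite K := infinite_K
  obtain ⟨c, hc⟩ := (h1.union hF).infinite_compl.nonempty
  simp only [Set.mem_compl_iff, Set.mem_union, not_or, not_not, Set.mem_ofPred_eq] at hc
  obtain ⟨⟨v, hv, rfl⟩, h2⟩ := hc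
  exact h2 (h hv)

end cones
end ZGeo

set_option linter.style.haveILetI false
set_option linter.unusedSectionVars false
set_option linter.unusedVariables false
set_option linter.unusedSimpArgs false
namespace ZGeo
universe u
section poles
variable {K : Type u} [Field K] [IsAlgClosed K] [ZG K] {ι κ μ : Type} [Finite ι] [Finite κ] [Finite μ]

theorem IC_pre {T : Set (κ → K)} (hT : IC T) {Φ : (ι → K) → (κ → K)} {Ψ : (κ → K) → (ι → K)}
    (hΦ : ∀ k, Reg (fun w => Φ w k)) (hΨ : ∀ k, Reg (fun w => Ψ w k))
    (hinv : ∀ v, Ψ (Φ v) = v) (hinv2 : ∀ w ∈ T, Φ (Ψ w) = w) :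
    IC (Φ ⁻¹' T) ∧ dim T = dim (Φ ⁻¹' T) := by
  have hT'eq : Φ ⁻¹' T = Ψ '' T := by
    ext a
    refine ⟨fun ha => ⟨Φ a, ha, hinv a⟩, ?_⟩
    rintro ⟨w, hw, rfl⟩
    rw [Set.mem_preimage, hinv2 w hw]; exact hw
  have hT' : IC (Φ ⁻¹' T) := by
    refine ⟨hT.1.preimage (Reg.continuous hΦ), ?_⟩
    rw [hT'eq]
    exact hT.2.image _ (Reg.continuous hΨ).continuousOn
  refine ⟨hT', le_antisymm ?_ ?_⟩
  · exact dim_le_of_leftInv hT hT' (Reg.continuous hΨ)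
      (Reg.continuous hΦ) hinv2 (fun w hw => by rw [Set.mem_preimage, hinv2 w hw]; exact hw)
  · exact dim_le_of_leftInv hT' hT (Reg.continuous hΦ) (Reg.continuous hΨ) (fun v _ => hinv v)
      (fun v hv => hv)

theorem vec2_eta (v : Fin 2 → K) : ![v 0, v 1] = v := by
  funext i; fin_cases i <;> rfl

/-- behaviour at infinity of a curve without zeros -/
theorem pole {H : Set (Fin 2 → K)} (hH : IC H) (hd : dim H ≤ 1) {a b : Fin 2 → K} (ha : a ∈ H)
    (hb : b ∈ H) (hab : a 1 ≠ b 1) (hno : ∀ x, ![x, 0] ∉ H) :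
    ∃ T : Set (Fin 2 → K), IC T ∧ 1 ≤ dim T ∧ ![0, 0] ∈ T ∧ {z | ![z, 0] ∈ T}.Finite ∧
      ∀ z ω, ![z, ω] ∈ T → ω ≠ 0 → ![ω⁻¹, z] ∈ H := by
  let Φ : (Unit ⊕ Unit → K) → (Fin 2 → K) := fun w => ![w (Sum.inr ()), w (Sum.inl ())]
  let Ψ : (Fin 2 → K) → (Unit ⊕ Unit → K) := fun v => Sum.elim (fun _ => v 1) (fun _ => v 0)
  have hΦ : ∀ k, Reg (fun w => Φ w k) := by
    intro k; fin_cases k <;> exact Reg.coord _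
  have hΨ : ∀ k, Reg (fun w => Ψ w k) := by
    rintro (k | k) <;> exact Reg.coord _
  have hΨΦ : ∀ v, Ψ (Φ v) = v := by
    intro v; funext i; rcases i with i | i <;> rfl
  have hΦΨ : ∀ v, Φ (Ψ v) = v := by
    intro v; funext i; fin_cases i <;> rfl
  obtain ⟨hA, hAd⟩ := IC_pre hH hΦ hΨ hΨΦ (fun w _ => hΦΨ w)
  set A := Φ ⁻¹' H with hAdef
  have hmem : ∀ v ∈ H, Ψ v ∈ A := fun v hv => by
    rw [hAdef, Set.mem_preimage, hΦΨ]; exact hv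
  have hd1 : 1 ≤ dim A := hA.dim_pos (hmem a ha) (hmem b hb) (fun h => hab
    (congrFun h (Sum.inl ())))
  have hB : IC (closure ((fun a : Unit ⊕ Unit → K => a ∘ Sum.inl) '' A)) :=
    hA.closure_image (cont_comp _)
  have hu : closure ((fun a : Unit ⊕ Unit → K => a ∘ Sum.inl) '' A) = Set.univ := by
    refine eq_univ_of_dim hB ?_
    have : 1 ≤ dim (closure ((fun a : Unit ⊕ Unit → K => a ∘ Sum.inl) '' A)) :=
      hB.dim_pos (subset_closure ⟨_, hmem a ha, rfl⟩) (subset_closure ⟨_, hmem b hb, rfl⟩)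
        (fun h => hab (congrFun h ()))
    simpa using this
  have hlim := limit_pt hA hd1 () (e0 := fun _ => 0) (by rw [hu]; trivial)
    ((Set.finite_singleton (fun _ => 0)).subset (by
      rintro e ⟨_, he⟩
      funext u
      exact he))
  have hpt : (cpt (fun _ => 0) 0 (fun _ => 1) : Unit ⊕ Option Unit → K) ∈ cone A := by
    rcases hlim with ⟨v, hv⟩ | ⟨v, k, hk, hv⟩
    · exact absurd hv (hno (v ()))
    · have : v = fun _ => 1 := by
        funext u; exact hk
      rwa [this] at hv
  have hVd := dim_cone_le hA
  have hVd' := le_dim_cone hA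
  obtain ⟨T, hT, hmT, hTM, hTc, hTd⟩ := cut1 hA.cone hpt (Reg.coord (Sum.inr (some ())))
    (Reg.const 1) rfl
  let Φ' : (Fin 2 → K) → (Unit ⊕ Option Unit → K) := fun u => cpt (fun _ => u 0) (u 1) (fun _ => 1)
  let Ψ' : (Unit ⊕ Option Unit → K) → (Fin 2 → K) := fun w => ![w (Sum.inl ()), w (Sum.inr none)]
  have hΦ' : ∀ k, Reg (fun w => Φ' w k) :=
    reg_cpt (fun k => Reg.coord _) (Reg.coord _) (fun k => Reg.const 1)
  have hΨ' : ∀ k, Reg (fun w => Ψ' w k) := by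
    intro k; fin_cases k <;> exact Reg.coord _
  obtain ⟨hT', hTd'⟩ := IC_pre hT hΦ' hΨ' (fun v => vec2_eta v) (by
    intro w hw; funext i
    rcases i with i | (_ | i)
    · rfl
    · rfl
    · exact (hTc w hw).symm)
  have hfin : {z : K | (cpt (fun _ => z) 0 (fun _ => 1) : Unit ⊕ Option Unit → K) ∈ cone A}.Finite := by
    rcases fin_or_univ (K := K) (hA.cone.1)
      (fun z => (cpt (fun _ => z) 0 (fun _ => 1) : Unit ⊕ Option Unit → K))
      (reg_cpt (fun k => Reg.coord _) (Reg.const 0) (fun k => Reg.const 1)) with h | h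
    · exfalso
      let Φ₂ : (Fin 2 → K) → (Unit ⊕ Option Unit → K) := fun u =>
        cpt (fun _ => u 0) 0 (fun _ => u 1)
      let Ψ₂ : (Unit ⊕ Option Unit → K) → (Fin 2 → K) := fun w =>
        ![w (Sum.inl ()), w (Sum.inr (some ()))]
      have hΦ₂ : ∀ k, Reg (fun w => Φ₂ w k) :=
        reg_cpt (fun k => Reg.coord _) (Reg.const 0) (fun k => Reg.coord _)
      have hΨ₂ : ∀ k, Reg (fun w => Ψ₂ w k) := by
        intro k; fin_cases k <;> exact Reg.coord _
      have hL : IC (Φ₂ '' Set.univ) := IC_univ.image_leftInv hΦ₂ hΨ₂ (fun v => vec2_eta v)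
      have hLd : dim (Set.univ : Set (Fin 2 → K)) ≤ dim (Φ₂ '' Set.univ) :=
        dim_le_of_leftInv IC_univ hL (Reg.continuous hΦ₂) (Reg.continuous hΨ₂)
          (fun v _ => vec2_eta v) (fun v hv => ⟨v, hv, rfl⟩)
      rw [dim_univ, Nat.card_fin] at hLd
      have hLs : Φ₂ '' Set.univ ⊆ cone A := by
        rintro _ ⟨u, _, rfl⟩
        have : u 0 ∈ {z : K | (cpt (fun _ => z) 0 (fun _ => 1) : Unit ⊕ Option Unit → K) ∈ cone A} := by
          rw [h]; trivial
        have := cone_scale (u 1) this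
        simpa only [mul_zero, mul_one] using this
      have heq := eq_of_dim_le hL hA.cone hLs (by omega)
      have h5 := mem_cone (hmem a ha) 1
      rw [← heq] at h5
      obtain ⟨u, _, hu⟩ := h5
      have : (0 : K) = 1 := congrFun hu (Sum.inr none)
      exact zero_ne_one this
    · exact h
  refine ⟨Φ' ⁻¹' T, hT', by omega, hmT, hfin.subset (fun z hz => hTM hz), ?_⟩
  intro z ω hz hω
  have h6 := cone_scale ω⁻¹ (hTM hz)
  have h7 : (![z, ω] : Fin 2 → K) 1 = ω := rfl
  rw [h7, inv_mul_cancel₀ hω] at h6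
  have h8 := cone_mem hA h6
  have h9 : ![ω⁻¹ * 1, z] ∈ H := h8
  rwa [mul_one] at h9

theorem no_poles {H H' : Set (Fin 2 → K)} (hH : IC H) (hd : dim H ≤ 1) (hH' : IC H')
    (hd' : dim H' ≤ 1) {F : Set K} (hF : F.Finite) (n : K → K)
    (hx : ∀ x ∉ F, ![x, n x] ∈ H) (hx' : ∀ x ∉ F, ![x, (n x)⁻¹] ∈ H')
    (hu : ∀ x ∉ F, ∀ z, ![x, z] ∈ H → z = n x) (hu' : ∀ x ∉ F, ∀ z, ![x, z] ∈ H' → z = (n x)⁻¹)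
    (hno : ∀ x, ![x, 0] ∉ H) (hno' : ∀ x, ![x, 0] ∉ H') :
    ∃ c, ∀ x ∉ F, n x = c := by
  haveI : Infinite K := infinite_K
  by_contra hcon
  push Not at hcon
  obtain ⟨a, ha⟩ := hF.infinite_compl.nonempty
  obtain ⟨b, hb, hab⟩ := hcon (n a)
  obtain ⟨T, hT, hTd, hT0, hTf, hTH⟩ := pole hH hd (hx a ha) (hx b hb) hab.symm hno
  obtain ⟨T', hT', hTd', hT0', hTf', hTH'⟩ := pole hH' hd' (hx' a ha) (hx' b hb)
    (fun h => hab (inv_injective h).symm) hno'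
  obtain ⟨R, hR, hmR, hRM, hRc, hRd⟩ := cut1 (hT.pr hT') (a := Sum.elim ![0, 0] ![0, 0])
    ⟨hT0, hT0'⟩ (Reg.coord (Sum.inl 1)) (Reg.coord (Sum.inr 1)) rfl
  rw [dim_pr hT hT'] at hRd
  have hnc : ∃ w ∈ R, w (Sum.inl 1) ≠ 0 := by
    by_contra hc
    push Not at hc
    apply hR.infinite (by omega)
    have hfin := (hTf.prod hTf').image (fun p : K × K =>
      (Sum.elim ![p.1, 0] ![p.2, 0] : Fin 2 ⊕ Fin 2 → K))
    refine hfin.subset ?_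
    intro w hw
    have e0 := hc w hw
    have e1 : w (Sum.inr 1) = 0 := (hRc w hw).symm.trans e0
    have e2 : (![w (Sum.inl 0), 0] : Fin 2 → K) = w ∘ Sum.inl := by
      rw [← e0]; exact vec2_eta (w ∘ Sum.inl)
    have e3 : (![w (Sum.inr 0), 0] : Fin 2 → K) = w ∘ Sum.inr := by
      rw [← e1]; exact vec2_eta (w ∘ Sum.inr)
    refine ⟨(w (Sum.inl 0), w (Sum.inr 0)), ⟨?_, ?_⟩, ?_⟩
    · change ![w (Sum.inl 0), 0] ∈ T
      rw [e2]; exact (hRM hw).1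
    · change ![w (Sum.inr 0), 0] ∈ T'
      rw [e3]; exact (hRM hw).2
    · change Sum.elim ![w (Sum.inl 0), 0] ![w (Sum.inr 0), 0] = w
      rw [e2, e3, elim_eta]
  obtain ⟨w0, hw0, hw0ne⟩ := hnc
  have hFi : (insert 0 ((fun x => x⁻¹) '' (F ∪ {x | n x = 0 ∧ x ∉ F}))).Finite := by
    refine Set.Finite.insert _ (Set.Finite.image _ (hF.union ?_))
    have : {x | n x = 0 ∧ x ∉ F} = ∅ := by
      ext x
      simp only [Set.mem_ofPred_eq, Set.mem_empty_iff_false, iff_false, not_and]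
      intro h1 h2
      exact hno x (h1 ▸ hx x h2)
    rw [this]; exact Set.finite_empty
  have hsub : R ⊆ {w | w (Sum.inl 0) * w (Sum.inr 0) = 1} := by
    refine hR.subset_of_diff (closed_eq ((Reg.coord _).mul (Reg.coord _)) (Reg.const 1))
      (closed_fin (Reg.coord (Sum.inl 1)) hFi) (not_sub_fin hR hw0 hmR (Reg.coord (Sum.inl 1)) hw0ne
        hFi) ?_
    intro w hw hwF
    have hω : w (Sum.inl 1) ≠ 0 := fun h => hwF (Or.inl h)
    have hinv : (w (Sum.inl 1))⁻¹ ∉ F := fun h => hwF (Or.inr ⟨_, Or.inl h, inv_inv _⟩)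
    have e2 : (![w (Sum.inl 0), w (Sum.inl 1)] : Fin 2 → K) = w ∘ Sum.inl := vec2_eta (w ∘ Sum.inl)
    have e3 : (![w (Sum.inr 0), w (Sum.inl 1)] : Fin 2 → K) = w ∘ Sum.inr := by
      rw [hRc w hw]; exact vec2_eta (w ∘ Sum.inr)
    have g1 := hu _ hinv _ (hTH _ _ (by rw [e2]; exact (hRM hw).1) hω)
    have g2 := hu' _ hinv _ (hTH' _ _ (by rw [e3]; exact (hRM hw).2) hω)
    change w (Sum.inl 0) * w (Sum.inr 0) = 1
    rw [g1, g2]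
    refine mul_inv_cancel₀ fun h0 => hno _ (h0 ▸ hx _ hinv)
  have : (0 : K) * 0 = 1 := hsub hmR
  simp at this

end poles
end ZGeo

set_option linter.style.haveILetI false
set_option linter.unusedSectionVars false
set_option linter.unusedVariables false
set_option linter.unusedSimpArgs false
namespace ZGeo
universe u
section enumerate
variable {K : Type u} [Field K] [IsAlgClosed K] [ZG K] {ι κ μ : Type} [Finite ι] [Finite κ] [Finite μ]

theorem closed_curve_pt {C : Set (Fin 2 → K)} (hC : IsClosed C) {f g : (ι → K) → K} (hf : Reg f)
    (hg : Reg g) : IsClosed {v | ![f v, g v] ∈ C} := by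
  refine hC.preimage (f := fun v => ![f v, g v]) (Reg.continuous ?_)
  intro k; fin_cases k
  · exact hf
  · exact hg

theorem fibre_finite {C : Set (Fin 2 → K)} (hfib : ∀ x, {y | ![x, y] ∈ C}.Finite) (m : ℕ) (x : K) :
    {v : Unit ⊕ Fin m → K | v (Sum.inl ()) = x ∧ ∀ i, ![x, v (Sum.inr i)] ∈ C}.Finite := by
  have h1 : {g : Fin m → K | ∀ i, g i ∈ {y | ![x, y] ∈ C}}.Finite := by
    have := Set.Finite.pi' (t := fun _ : Fin m => {y | ![x, y] ∈ C}) (fun _ => hfib x)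
    exact this
  refine (h1.image (fun g => (Sum.elim (fun _ => x) g : Unit ⊕ Fin m → K))).subset ?_
  rintro v ⟨hv, hvi⟩
  refine ⟨fun i => v (Sum.inr i), hvi, ?_⟩
  funext i
  rcases i with i | i
  · exact hv.symm
  · rfl

theorem dominant_of_infinite {A : Set (ι → K)} {f : (ι → K) → K} (h : {t | ∃ v ∈ A, f v = t}.Infinite) :
    closure ((fun v (_ : Unit) => f v) '' A) = Set.univ := by
  rcases fin_or_univ (K := K) (isClosed_closure (s := (fun v (_ : Unit) => f v) '' A))
    (fun t _ => t) (fun k => Reg.coord _) with h1 | h1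
  · refine Set.eq_univ_of_forall fun w => ?_
    have : w () ∈ {t | (fun _ => t) ∈ closure ((fun v (_ : Unit) => f v) '' A)} := by
      rw [h1]; trivial
    exact this
  · exfalso
    apply h
    refine h1.subset ?_
    rintro _ ⟨v, hv, rfl⟩
    exact subset_closure ⟨v, hv, rfl⟩

/-- a dominant component -/
theorem dominant_comp {S : Set (ι → K)} (hS : IsClosed S) {f : (ι → K) → K} (hf : Reg f)
    (h : {t | ∃ v ∈ S, f v = t}.Infinite) :
    ∃ A, IC A ∧ A ⊆ S ∧ ∃ a ∈ A, ∃ b ∈ A, f a ≠ f b := by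
  have hΦ : ∀ k, Reg (fun v : ι → K => (fun (_ : Unit) => f v) k) := fun _ => hf
  have hne : S.Nonempty := by
    obtain ⟨t, v, hv, _⟩ := h.nonempty
    exact ⟨v, hv⟩
  obtain ⟨F, hF, hF1, hF2⟩ := Z1R hS hne hΦ
  rw [dominant_of_infinite h] at hF1 hF2
  obtain ⟨A, hA, hAS, hAd⟩ := lift_comp hS (Reg.continuous hΦ) IC_univ hF hF1 hF2
  refine ⟨A, hA, hAS, ?_⟩
  by_contra hcon
  push Not at hcon
  obtain ⟨a, ha⟩ := hA.2.1
  have : closure ((fun v (_ : Unit) => f v) '' A) ⊆ {fun _ => f a} := by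
    refine closure_minimal ?_ (closed_singleton _)
    rintro _ ⟨v, hv, rfl⟩
    funext _
    exact hcon v hv a ha
  have h1 : (fun _ : Unit => f a + 1) = fun _ => f a := this (hAd trivial)
  have h2 := congrFun h1 ()
  simp at h2

theorem exists_E {C : Set (Fin 2 → K)} (hC : IC C) (hfib : ∀ x, {y | ![x, y] ∈ C}.Finite) :
    ∃ (m : ℕ) (E : Set (Unit ⊕ Fin m → K)) (F : Set K), IC E ∧ dim E ≤ 1 ∧ F.Finite ∧
      (∀ v ∈ E, ∀ i, ![v (Sum.inl ()), v (Sum.inr i)] ∈ C) ∧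
      (∀ x ∉ F, ∃ v ∈ E, v (Sum.inl ()) = x) ∧
      (∀ v ∈ E, v (Sum.inl ()) ∉ F → Function.Injective (fun i => v (Sum.inr i)) ∧
        ∀ y, ![v (Sum.inl ()), y] ∈ C → ∃ i, v (Sum.inr i) = y) := by
  classical
  haveI : Infinite K := infinite_K
  obtain ⟨M, hM⟩ := unif_fin hC.1
  have hMle : ∀ x, {y | ![x, y] ∈ C}.ncard ≤ M := by
    intro x
    rcases hM x with h | h
    · exfalso
      have := hfib x
      rw [h] at this
      exact Set.infinite_univ this
    · exact h.2
  have hex : ∃ n, {x : K | n + 1 ≤ {y | ![x, y] ∈ C}.ncard}.Finite := by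
    refine ⟨M, ?_⟩
    convert Set.finite_empty
    ext x
    simp only [Set.mem_ofPred_eq, Set.mem_empty_iff_false, iff_false]
    have := hMle x
    omega
  obtain ⟨m, hm1, hm2⟩ : ∃ m, {x : K | m + 1 ≤ {y | ![x, y] ∈ C}.ncard}.Finite ∧
      {x : K | m ≤ {y | ![x, y] ∈ C}.ncard}.Infinite := by
    refine ⟨Nat.find hex, Nat.find_spec hex, ?_⟩
    rcases h : Nat.find hex with _ | k
    · simpa using Set.infinite_univ
    · exact Nat.find_min hex (m := k) (by omega)
  let S : Set ((Unit ⊕ Fin m) ⊕ Unit → K) := {w | ∀ i, ![w (Sum.inl (Sum.inl ())),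
      w (Sum.inl (Sum.inr i))] ∈ C} ∩ {w | w (Sum.inr ()) * ∏ p ∈ (Finset.univ : Finset (Fin m)).offDiag,
        (w (Sum.inl (Sum.inr p.1)) - w (Sum.inl (Sum.inr p.2))) = 1}
  have hS : IsClosed S := by
    refine IsClosed.inter ?_ (closed_eq ((Reg.coord _).mul (Reg.prod _ fun p _ =>
      (Reg.coord _).sub (Reg.coord _))) (Reg.const 1))
    have : {w : (Unit ⊕ Fin m) ⊕ Unit → K | ∀ i, ![w (Sum.inl (Sum.inl ())),
      w (Sum.inl (Sum.inr i))] ∈ C} = ⋂ i, {w | ![w (Sum.inl (Sum.inl ())),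
      w (Sum.inl (Sum.inr i))] ∈ C} := by ext; simp
    rw [this]
    exact isClosed_iInter fun i => closed_curve_pt hC.1 (Reg.coord _) (Reg.coord _)
  have hSinf : {t | ∃ w ∈ S, w (Sum.inl (Sum.inl ())) = t}.Infinite := by
    refine hm2.mono ?_
    intro x hx
    have hx : m ≤ {y | ![x, y] ∈ C}.ncard := hx
    obtain ⟨t, ht, htc⟩ := Set.exists_subset_card_eq hx
    have htf : t.Finite := (hfib x).subset ht
    let e : Fin m ≃ t := by
      haveI := htf.fintype
      exact (Fintype.equivFinOfCardEq (by rw [← htc, ← Nat.card_coe_set_eq, Nat.card_eq_fintype_card])).symm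
    have hprod : (∏ p ∈ (Finset.univ : Finset (Fin m)).offDiag,
        ((e p.1 : K) - (e p.2 : K))) ≠ 0 := by
      refine Finset.prod_ne_zero_iff.2 ?_
      intro p hp
      rw [Finset.mem_offDiag] at hp
      rw [sub_ne_zero]
      intro h
      exact hp.2.2 (e.injective (Subtype.ext h))
    refine ⟨Sum.elim (Sum.elim (fun _ => x) (fun i => (e i : K))) (fun _ => (∏ p ∈
      (Finset.univ : Finset (Fin m)).offDiag, ((e p.1 : K) - (e p.2 : K)))⁻¹), ⟨?_, ?_⟩, rfl⟩
    · intro i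
      exact ht (e i).2
    · exact inv_mul_cancel₀ hprod
  obtain ⟨E', hE', hE'S, a, ha, b, hb, hab⟩ := dominant_comp hS (Reg.coord _) hSinf
  let π : ((Unit ⊕ Fin m) ⊕ Unit → K) → (Unit ⊕ Fin m → K) := fun w => w ∘ Sum.inl
  have hπ : ∀ k, Reg (fun w => π w k) := reg_comp _
  have hE : IC (closure (π '' E')) := hE'.closure_image (Reg.continuous hπ)
  set E := closure (π '' E') with hEdef
  have hEC : ∀ v ∈ E, ∀ i, ![v (Sum.inl ()), v (Sum.inr i)] ∈ C := by
    intro v hv i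
    have : E ⊆ {v | ![v (Sum.inl ()), v (Sum.inr i)] ∈ C} := by
      refine closure_minimal ?_ (closed_curve_pt hC.1 (Reg.coord _) (Reg.coord _))
      rintro _ ⟨w, hw, rfl⟩
      exact (hE'S hw).1 i
    exact this hv
  have haE : π a ∈ E := subset_closure ⟨a, ha, rfl⟩
  have hbE : π b ∈ E := subset_closure ⟨b, hb, rfl⟩
  have hEd : dim E ≤ 1 := by
    refine dim_le_one hE haE (Reg.coord (Sum.inl ())) ((fibre_finite hfib m (π a (Sum.inl ()))).subset ?_)
    rintro v ⟨hv, hve⟩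
    refine ⟨hve, fun i => ?_⟩
    rw [← hve]; exact hEC v hv i
  obtain ⟨F, hF, hF1, hF2⟩ := Z1R hE'.1 hE'.2.1 hπ
  have hfinF := finite_of_curve hE hEd hF hF1
  have hcof := cofin hE (Reg.coord (Sum.inl ())) haE hbE hab
  refine ⟨m, E, ((fun v => v (Sum.inl ())) '' (E ∩ F) ∪ {x : K | m + 1 ≤ {y | ![x, y] ∈ C}.ncard}) ∪
    {t | ∃ v ∈ E, v (Sum.inl ()) = t}ᶜ, hE, hEd, ((hfinF.image _).union hm1).union hcof, hEC, ?_, ?_⟩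
  · intro x hx
    by_contra hcon
    exact hx (Or.inr hcon)
  · intro v hv hvx
    have hvF : v ∉ F := fun h => hvx (Or.inl (Or.inl ⟨v, ⟨hv, h⟩, rfl⟩))
    have hvm : ¬ (m + 1 ≤ {y | ![v (Sum.inl ()), y] ∈ C}.ncard) :=
      fun h => hvx (Or.inl (Or.inr h))
    obtain ⟨w, hw, hwv⟩ := hF2 v hv hvF
    have hw1 := (hE'S hw).2
    have hw1 : w (Sum.inr ()) * ∏ p ∈ (Finset.univ : Finset (Fin m)).offDiag,
        (w (Sum.inl (Sum.inr p.1)) - w (Sum.inl (Sum.inr p.2))) = 1 := hw1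
    have hinj : Function.Injective (fun i => v (Sum.inr i)) := by
      intro i j hij
      by_contra hne
      have h0 := right_ne_zero_of_mul_eq_one hw1
      rw [Finset.prod_ne_zero_iff] at h0
      have := h0 (i, j) (by simp [hne])
      apply this
      rw [← hwv] at hij
      exact sub_eq_zero.2 hij
    refine ⟨hinj, ?_⟩
    intro y hy
    have hr : Set.range (fun i => v (Sum.inr i)) ⊆ {y | ![v (Sum.inl ()), y] ∈ C} := by
      rintro _ ⟨i, rfl⟩
      exact hEC v hv i
    have hcard : (Set.range (fun i => v (Sum.inr i))).ncard = m := by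
      rw [← Set.image_univ, Set.ncard_image_of_injective _ hinj, Set.ncard_univ, Nat.card_fin]
    have := Set.eq_of_subset_of_ncard_le hr (by omega) (hfib _)
    have hy' : y ∈ Set.range (fun i => v (Sum.inr i)) := by rw [this]; exact hy
    exact hy'

end enumerate
end ZGeo

set_option linter.style.haveILetI false
set_option linter.unusedSectionVars false
set_option linter.unusedVariables false
set_option linter.unusedSimpArgs false
namespace ZGeo
universe u
section maindata
variable {K : Type u} [Field K] [IsAlgClosed K] [ZG K] {ι κ μ : Type} [Finite ι] [Finite κ] [Finite μ]

/-- the data attached to a curve in general position -/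
structure Dat (C : Set (Fin 2 → K)) (m : ℕ) (E : Set (Unit ⊕ Fin m → K)) (F : Set K)
    (G1 : Set (Fin 3 → K)) (G : Set (Fin 6 → K)) : Prop where
  hC : IC C
  dC : dim C = 1
  fib : ∀ x, {y | ![x, y] ∈ C}.Finite
  hE : IC E
  dE : dim E ≤ 1
  hF : F.Finite
  EC : ∀ v ∈ E, ∀ i, ![v (Sum.inl ()), v (Sum.inr i)] ∈ C
  ex : ∀ x ∉ F, ∃ v ∈ E, v (Sum.inl ()) = x
  enum : ∀ v ∈ E, v (Sum.inl ()) ∉ F → Function.Injective (fun i => v (Sum.inr i)) ∧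
        ∀ y, ![v (Sum.inl ()), y] ∈ C → ∃ i, v (Sum.inr i) = y
  clG1 : IsClosed G1
  memG1 : ∀ p ∈ C, ∀ s, ![s, s * p 0, s * p 1] ∈ G1
  notG1 : ![0, 0, 1] ∉ G1
  clG : IsClosed G
  memG : ∀ p ∈ C, ∀ q ∈ C, ∀ s, ![p 0, p 1, q 0, q 1, s * (q 0 - p 0), s * (q 1 - p 1)] ∈ G

variable {C : Set (Fin 2 → K)} {m : ℕ} {E : Set (Unit ⊕ Fin m → K)} {F : Set K}
    {G1 : Set (Fin 3 → K)} {G : Set (Fin 6 → K)}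

theorem Dat.nc (h : Dat C m E F G1 G) : ∃ a ∈ E, ∃ b ∈ E, a (Sum.inl ()) ≠ b (Sum.inl ()) := by
  haveI : Infinite K := infinite_K
  obtain ⟨x, hx⟩ := h.hF.infinite_compl.nonempty
  obtain ⟨x', hx'⟩ := (h.hF.union (Set.finite_singleton x)).infinite_compl.nonempty
  obtain ⟨v, hv, hvx⟩ := h.ex x hx
  obtain ⟨v', hv', hvx'⟩ := h.ex x' (fun h => hx' (Or.inl h))
  refine ⟨v, hv, v', hv', ?_⟩
  rw [hvx, hvx']
  intro he
  exact hx' (Or.inr he.symm)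

theorem Dat.sub (h : Dat C m E F G1 G) {D : Set (Unit ⊕ Fin m → K)} (hD : IsClosed D)
    (hd : ∀ v ∈ E, v (Sum.inl ()) ∉ F → v ∈ D) : E ⊆ D := by
  obtain ⟨a, ha, b, hb, hab⟩ := h.nc
  exact h.hE.subset_of_diff hD (closed_fin (Reg.coord (Sum.inl ())) h.hF)
    (not_sub_fin h.hE ha hb (Reg.coord (Sum.inl ())) hab h.hF) hd

theorem Dat.dist (h : Dat C m E F G1 G) {v : Unit ⊕ Fin m → K} (hv : v ∈ E) {i j : Fin m}
    (hij : i ≠ j) : ![v (Sum.inl ()), v (Sum.inr i), v (Sum.inl ()), v (Sum.inr j), 0, 1] ∈ G := by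
  have hcl : IsClosed ((fun v : Unit ⊕ Fin m → K =>
      ![v (Sum.inl ()), v (Sum.inr i), v (Sum.inl ()), v (Sum.inr j), 0, 1]) ⁻¹' G) := by
    refine h.clG.preimage (Reg.continuous ?_)
    intro k; fin_cases k
    · exact Reg.coord _
    · exact Reg.coord _
    · exact Reg.coord _
    · exact Reg.coord _
    · exact Reg.const 0
    · exact Reg.const 1
  refine h.sub hcl ?_ hv
  intro v hv hvF
  have hne : v (Sum.inr j) - v (Sum.inr i) ≠ 0 := by
    rw [sub_ne_zero]
    intro he
    exact hij ((h.enum v hv hvF).1 he.symm)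
  have this : ![v (Sum.inl ()), v (Sum.inr i), v (Sum.inl ()), v (Sum.inr j),
      (v (Sum.inr j) - v (Sum.inr i))⁻¹ * (v (Sum.inl ()) - v (Sum.inl ())),
      (v (Sum.inr j) - v (Sum.inr i))⁻¹ * (v (Sum.inr j) - v (Sum.inr i))] ∈ G :=
    h.memG _ (h.EC v hv i) _ (h.EC v hv j) (v (Sum.inr j) - v (Sum.inr i))⁻¹
  rw [sub_self, mul_zero, inv_mul_cancel₀ hne] at this
  exact this

theorem Dat.enum_all (h : Dat C m E F G1 G) {v : Unit ⊕ Fin m → K} (hv : v ∈ E) {y : K}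
    (hy : ![v (Sum.inl ()), y] ∈ C) : ∃ i, v (Sum.inr i) = y := by
  obtain ⟨a, ha, b, hb, hab⟩ := h.nc
  have hEd : 1 ≤ dim E := h.hE.dim_pos ha hb (fun he => hab (by rw [he]))
  obtain ⟨R, hR, hmR, hRM, hRc, hRd⟩ := cut1 (h.hE.pr h.hC) (a := Sum.elim v ![v (Sum.inl ()), y])
    ⟨hv, hy⟩ (Reg.coord (Sum.inl (Sum.inl ()))) (Reg.coord (Sum.inr 0)) rfl
  have hdC := h.dC
  rw [dim_pr h.hE h.hC] at hRd
  have hpt : ∀ w ∈ R, ![w (Sum.inl (Sum.inl ())), w (Sum.inr 1)] ∈ C := by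
    intro w hw
    have := (hRM hw).2
    rw [hRc w hw]
    rw [← vec2_eta (w ∘ Sum.inr)] at this
    exact this
  have hnc : ∃ w ∈ R, w (Sum.inl (Sum.inl ())) ≠ v (Sum.inl ()) := by
    by_contra hcon
    push Not at hcon
    apply hR.infinite (by omega)
    have hfin := ((fibre_finite h.fib m (v (Sum.inl ()))).prod (h.fib (v (Sum.inl ())))).image
      (fun p => (Sum.elim p.1 ![v (Sum.inl ()), p.2] : (Unit ⊕ Fin m) ⊕ Fin 2 → K))
    refine hfin.subset ?_
    intro w hw
    refine ⟨(w ∘ Sum.inl, w (Sum.inr 1)), ⟨⟨hcon w hw, fun i => ?_⟩, ?_⟩, ?_⟩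
    · rw [← hcon w hw]; exact h.EC _ (hRM hw).1 i
    · rw [← hcon w hw]; exact hpt w hw
    · change Sum.elim (w ∘ Sum.inl) ![v (Sum.inl ()), w (Sum.inr 1)] = w
      rw [← hcon w hw, hRc w hw]
      have := vec2_eta (w ∘ Sum.inr)
      have h2 : ![w (Sum.inr 0), w (Sum.inr 1)] = w ∘ Sum.inr := this
      rw [h2, elim_eta]
  obtain ⟨w0, hw0, hw0ne⟩ := hnc
  have hsub : R ⊆ {w | ∏ i : Fin m, (w (Sum.inr 1) - w (Sum.inl (Sum.inr i))) = 0} := by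
    refine hR.subset_of_diff (closed_eq (Reg.prod _ fun i _ => (Reg.coord _).sub (Reg.coord _))
      (Reg.const 0)) (closed_fin (Reg.coord (Sum.inl (Sum.inl ()))) h.hF)
      (not_sub_fin hR hw0 hmR (Reg.coord (Sum.inl (Sum.inl ()))) hw0ne h.hF) ?_
    intro w hw hwF
    obtain ⟨i, hi⟩ := (h.enum _ (hRM hw).1 hwF).2 _ (hpt w hw)
    refine Finset.prod_eq_zero (Finset.mem_univ i) ?_
    rw [sub_eq_zero, ← hi]
    rfl
  have := hsub hmR
  obtain ⟨i, _, hi⟩ := Finset.prod_eq_zero_iff.1 this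
  exact ⟨i, (sub_eq_zero.1 hi).symm⟩

/-- properness of the projection forgetting the `y`-coordinates -/
theorem Dat.lift (h : Dat C m E F G1 G) {D : Set (Fin 2 ⊕ Fin m → K)} (hD : IC D) (hd : dim D ≤ 1)
    (hDC : ∀ w ∈ D, ∀ i, ![w (Sum.inl 0), w (Sum.inr i)] ∈ C) {a b : Fin 2 ⊕ Fin m → K}
    (ha : a ∈ D) (hb : b ∈ D) (hab : a (Sum.inl 0) ≠ b (Sum.inl 0)) :
    ∀ e ∈ closure ((fun w : Fin 2 ⊕ Fin m → K => w ∘ Sum.inl) '' D), ∃ v, Sum.elim e v ∈ D := by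
  intro e he
  have hH := hD.closure_image (cont_comp (K := K) (Sum.inl : Fin 2 → Fin 2 ⊕ Fin m))
  have hHd := (dim_closure_image_le hD (reg_comp (K := K) (Sum.inl : Fin 2 → Fin 2 ⊕ Fin m))).trans hd
  have hD1 : 1 ≤ dim D := hD.dim_pos ha hb (fun he => hab (by rw [he]))
  have hfin := finite_of_curve hH hHd (closed_eq (Reg.coord 0) (Reg.const (e 0))) (by
    intro hcon
    have h1 : a (Sum.inl 0) = e 0 := hcon (subset_closure ⟨a, ha, rfl⟩)
    have h2 : b (Sum.inl 0) = e 0 := hcon (subset_closure ⟨b, hb, rfl⟩)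
    exact hab (h1.trans h2.symm))
  rcases limit_pt hD hD1 0 he hfin with h1 | ⟨v, k, hk, hv⟩
  · exact h1
  · exfalso
    have hcl : IsClosed ((fun w : Fin 2 ⊕ Option (Fin m) → K =>
        ![w (Sum.inr none), w (Sum.inr none) * w (Sum.inl 0), w (Sum.inr (some k))]) ⁻¹' G1) := by
      refine h.clG1.preimage (Reg.continuous ?_)
      intro k; fin_cases k
      · exact Reg.coord _
      · exact (Reg.coord _).mul (Reg.coord _)
      · exact Reg.coord _
    have h2 := cone_sub (A := D) hcl (fun a ha s => h.memG1 _ (hDC a ha k) s) hv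
    have h3 : ![0, 0 * e 0, v k] ∈ G1 := h2
    rw [hk, zero_mul] at h3
    exact h.notG1 h3

/-- forget `z` -/
def res (w : Fin 2 ⊕ Fin m → K) : Unit ⊕ Fin m → K :=
  Sum.elim (fun _ => w (Sum.inl 0)) (fun i => w (Sum.inr i))

theorem reg_res : ∀ k, Reg (fun w : Fin 2 ⊕ Fin m → K => res w k) :=
  reg_elim (fun _ => Reg.coord _) (fun _ => Reg.coord _)

theorem Dat.exists_D (h : Dat C m E F G1 G) {α β : (Unit ⊕ Fin m → K) → K} (hα : Reg α) (hβ : Reg β)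
    {F' : Set K} (hF' : F'.Finite) (hne : ∀ v ∈ E, v (Sum.inl ()) ∉ F' → α v ≠ 0) :
    ∃ D : Set (Fin 2 ⊕ Fin m → K), IC D ∧ (∀ w ∈ D, res w ∈ E ∧ w (Sum.inl 1) * α (res w) = β (res w)) ∧
      (∀ F'' : Set K, F''.Finite → ¬ D ⊆ {w | w (Sum.inl 0) ∈ F''}) ∧
      ∃ H : Set (Fin 2 → K), IC H ∧ dim H ≤ 1 ∧ (∀ e ∈ H, ∃ v, Sum.elim e v ∈ D) ∧
        {x | ∃ z, ![x, z] ∈ H}ᶜ.Finite := by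
  haveI : Infinite K := infinite_K
  let S : Set (Fin 2 ⊕ Fin m → K) := res ⁻¹' E ∩ {w | w (Sum.inl 1) * α (res w) = β (res w)}
  have hS : IsClosed S := (h.hE.1.preimage (Reg.continuous reg_res)).inter
    (closed_eq ((Reg.coord _).mul (hα.comp reg_res)) (hβ.comp reg_res))
  have hres : ∀ (v : Unit ⊕ Fin m → K) (z : K), res (Sum.elim ![v (Sum.inl ()), z] (fun i => v (Sum.inr i))) = v := by
    intro v z; funext i; rcases i with i | i <;> rfl
  have hinf : {t | ∃ w ∈ S, w (Sum.inl 0) = t}.Infinite := by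
    refine (h.hF.union hF').infinite_compl.mono ?_
    intro x hx
    obtain ⟨v, hv, rfl⟩ := h.ex x (fun h => hx (Or.inl h))
    have hα0 := hne v hv (fun h => hx (Or.inr h))
    refine ⟨Sum.elim ![v (Sum.inl ()), β v / α v] (fun i => v (Sum.inr i)), ⟨?_, ?_⟩, rfl⟩
    · rw [Set.mem_preimage, hres]; exact hv
    · rw [Set.mem_ofPred_eq, hres]
      exact div_mul_cancel₀ _ hα0
  obtain ⟨D, hD, hDS, a, ha, b, hb, hab⟩ := dominant_comp hS (Reg.coord (Sum.inl 0)) hinf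
  have hns : ∀ F'' : Set K, F''.Finite → ¬ D ⊆ {w | w (Sum.inl 0) ∈ F''} := fun F'' hF'' =>
    not_sub_fin hD ha hb (Reg.coord (Sum.inl 0)) hab hF''
  have hDC : ∀ w ∈ D, ∀ i, ![w (Sum.inl 0), w (Sum.inr i)] ∈ C := fun w hw i => h.EC _ (hDS hw).1 i
  have hDd : dim D ≤ 1 := by
    obtain ⟨w, hw, hwF⟩ := Set.not_subset.1 (hns F' hF')
    refine dim_le_one hD hw (Reg.coord (Sum.inl 0)) ?_
    refine ((fibre_finite h.fib m (w (Sum.inl 0))).image (fun v : Unit ⊕ Fin m → K =>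
      (Sum.elim ![v (Sum.inl ()), β v / α v] (fun i => v (Sum.inr i)) : Fin 2 ⊕ Fin m → K))).subset ?_
    rintro u ⟨hu, hux⟩
    refine ⟨res u, ⟨hux, fun i => ?_⟩, ?_⟩
    · rw [← hux]; exact hDC u hu i
    · have h1 := (hDS hu).2
      have h1 : u (Sum.inl 1) * α (res u) = β (res u) := h1
      have h0 := hne (res u) (hDS hu).1 (by
        change u (Sum.inl 0) ∉ F'
        rw [hux]; exact hwF)
      have h2 : β (res u) / α (res u) = u (Sum.inl 1) := by
        rw [← h1]; exact mul_div_cancel_right₀ _ h0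
      change Sum.elim ![u (Sum.inl 0), β (res u) / α (res u)] (fun i => u (Sum.inr i)) = u
      rw [h2]
      have h3 : ![u (Sum.inl 0), u (Sum.inl 1)] = u ∘ Sum.inl := vec2_eta (u ∘ Sum.inl)
      rw [h3]; exact elim_eta u
  refine ⟨D, hD, fun w hw => hDS hw, hns, closure ((fun w : Fin 2 ⊕ Fin m → K => w ∘ Sum.inl) '' D),
    hD.closure_image (cont_comp _), (dim_closure_image_le hD (reg_comp _)).trans hDd,
    h.lift hD hDd hDC ha hb hab, ?_⟩
  refine (cofin hD (Reg.coord (Sum.inl 0)) ha hb hab).subset (Set.compl_subset_compl.2 ?_)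
  rintro _ ⟨w, hw, rfl⟩
  refine ⟨w (Sum.inl 1), subset_closure ⟨w, hw, ?_⟩⟩
  exact (vec2_eta (w ∘ Sum.inl)).symm

end maindata
end ZGeo

set_option linter.style.haveILetI false
set_option linter.unusedSectionVars false
set_option linter.unusedVariables false
set_option linter.unusedSimpArgs false
namespace ZGeo
universe u
section claim
variable {K : Type u} [Field K] [IsAlgClosed K] [ZG K] {ι κ μ : Type} [Finite ι] [Finite κ] [Finite μ]
variable {C : Set (Fin 2 → K)} {m : ℕ} {E : Set (Unit ⊕ Fin m → K)} {F : Set K}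
    {G1 : Set (Fin 3 → K)} {G : Set (Fin 6 → K)}

theorem closed_G (hG : IsClosed G) {f0 f1 f2 f3 f4 f5 : (ι → K) → K} (h0 : Reg f0) (h1 : Reg f1)
    (h2 : Reg f2) (h3 : Reg f3) (h4 : Reg f4) (h5 : Reg f5) :
    IsClosed {v | ![f0 v, f1 v, f2 v, f3 v, f4 v, f5 v] ∈ G} := by
  refine hG.preimage (f := fun v => ![f0 v, f1 v, f2 v, f3 v, f4 v, f5 v]) (Reg.continuous ?_)
  intro k; fin_cases k
  · exact h0
  · exact h1
  · exact h2
  · exact h3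
  · exact h4
  · exact h5

theorem Dat.prod_fib (h : Dat C m E F G1 G) {v : Unit ⊕ Fin m → K} (hv : v ∈ E)
    (hF : v (Sum.inl ()) ∉ F) (g : K → K) :
    ∏ i : Fin m, g (v (Sum.inr i)) = ∏ y ∈ (h.fib (v (Sum.inl ()))).toFinset, g y := by
  classical
  obtain ⟨hinj, hsurj⟩ := h.enum v hv hF
  have : (h.fib (v (Sum.inl ()))).toFinset = Finset.univ.image (fun i => v (Sum.inr i)) := by
    ext y
    simp only [Set.Finite.mem_toFinset, Set.mem_ofPred_eq, Finset.mem_image, Finset.mem_univ, true_and]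
    refine ⟨fun hy => hsurj y hy, ?_⟩
    rintro ⟨i, rfl⟩
    exact h.EC v hv i
  rw [this, Finset.prod_image (fun a _ b _ hab => hinj hab)]

open Classical in
theorem Dat.claim (h : Dat C m E F G1 G) (t : K) (At : Finset K) (hAt : ∀ a, a ∈ At ↔ ![a, t] ∈ C)
    (hq : ∀ q ∈ C, q 1 = t → ![q 0, q 1, q 0, q 1, 0, 1] ∉ G ∧ ![q 0, q 1, q 0, q 1, 1, 0] ∉ G) :
    ∃ (c : K) (F' : Set K), F'.Finite ∧ ∀ v ∈ E, v (Sum.inl ()) ∉ F' →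
      ∏ i : Fin m, (t - v (Sum.inr i)) = c * ∏ a ∈ At, (v (Sum.inl ()) - a) := by
  have hq1 : ∀ a, ![a, t] ∈ C → ![a, t, a, t, 0, 1] ∉ G ∧ ![a, t, a, t, 1, 0] ∉ G :=
    fun a ha => hq _ ha rfl
  have hN0 : ∀ v ∈ E, v (Sum.inl ()) ∉ (At : Set K) → ∀ i, t - v (Sum.inr i) ≠ 0 := by
    intro v hv hx i h0
    apply hx
    rw [Finset.mem_coe, hAt, sub_eq_zero.1 h0]
    exact h.EC v hv i
  have hP0 : ∀ x, x ∉ (At : Set K) → ∏ a ∈ At, (x - a) ≠ 0 := by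
    intro x hx h0
    obtain ⟨a, ha, h1⟩ := Finset.prod_eq_zero_iff.1 h0
    rw [sub_eq_zero.1 h1] at hx
    exact hx ha
  have rP : Reg (fun v : Unit ⊕ Fin m → K => ∏ a ∈ At, (v (Sum.inl ()) - a)) :=
    Reg.prod _ fun a _ => (Reg.coord _).sub (Reg.const a)
  have rN : Reg (fun v : Unit ⊕ Fin m → K => ∏ i : Fin m, (t - v (Sum.inr i))) :=
    Reg.prod _ fun i _ => (Reg.const t).sub (Reg.coord _)
  obtain ⟨D, hD, hDE, hDn, H, hH, hHd, hHD, hHf⟩ := h.exists_D rP rN At.finite_toSet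
    (fun v hv hx => hP0 _ hx)
  obtain ⟨D', hD', hDE', hDn', H', hH', hHd', hHD', hHf'⟩ := h.exists_D rN rP At.finite_toSet
    (fun v hv hx => Finset.prod_ne_zero_iff.2 fun i _ => hN0 v hv hx i)
  have hiy : ∀ v ∈ E, ∀ i, v (Sum.inr i) = t → ∏ j ∈ Finset.univ.erase i, (t - v (Sum.inr j)) ≠ 0 := by
    intro v hv i hi
    refine Finset.prod_ne_zero_iff.2 fun j hj h0 => ?_
    have hd := h.dist hv (Finset.ne_of_mem_erase hj).symm
    have hC := h.EC v hv i
    rw [← sub_eq_zero.1 h0, hi] at hd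
    rw [hi] at hC
    exact (hq1 _ hC).1 hd
  have hno : ∀ x, ![x, 0] ∉ H := by
    intro x0 hx0
    obtain ⟨y, hy⟩ := hHD _ hx0
    obtain ⟨hyE, hyz⟩ := hDE _ hy
    have hyz : 0 * _ = ∏ i : Fin m, (t - y i) := hyz
    rw [zero_mul] at hyz
    obtain ⟨i, _, hi⟩ := Finset.prod_eq_zero_iff.1 hyz.symm
    have hi : y i = t := (sub_eq_zero.1 hi).symm
    have hC : ![x0, y i] ∈ C := h.EC _ hyE i
    rw [hi] at hC
    have hk : ∏ j ∈ Finset.univ.erase i, (t - y j) ≠ 0 := hiy _ hyE i hi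
    set k := ∏ j ∈ Finset.univ.erase i, (t - y j) with hkdef
    have hsub : D ⊆ {w | ![x0, t, w (Sum.inl 0), w (Sum.inr i),
        (∏ j ∈ Finset.univ.erase i, (t - w (Sum.inr j))) / k,
        (-(w (Sum.inl 1) * ∏ a ∈ At.erase x0, (w (Sum.inl 0) - a))) / k] ∈ G} := by
      refine hD.subset_of_diff (closed_G h.clG (Reg.const _) (Reg.const _) (Reg.coord _) (Reg.coord _)
        ((Reg.prod _ fun j _ => (Reg.const t).sub (Reg.coord _)).div_const k)
        (((Reg.coord _).mul (Reg.prod _ fun a _ => (Reg.coord _).sub (Reg.const a))).neg.div_const k))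
        (closed_fin (Reg.coord (Sum.inl 0)) (Set.finite_singleton x0))
        (hDn _ (Set.finite_singleton x0)) ?_
      intro w hw hwx
      obtain ⟨hwE, hwz⟩ := hDE w hw
      have hwz : w (Sum.inl 1) * ∏ a ∈ At, (w (Sum.inl 0) - a) = ∏ i : Fin m, (t - w (Sum.inr i)) := hwz
      rw [← Finset.mul_prod_erase _ _ ((hAt x0).2 hC), ← Finset.mul_prod_erase _ _ (Finset.mem_univ i)] at hwz
      have hne : w (Sum.inl 0) - x0 ≠ 0 := fun h0 => hwx (sub_eq_zero.1 h0)
      have := h.memG _ hC _ (h.EC _ hwE i)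
        ((∏ j ∈ Finset.univ.erase i, (t - w (Sum.inr j))) / (k * (w (Sum.inl 0) - x0)))
      have this : ![x0, t, w (Sum.inl 0), w (Sum.inr i),
        ((∏ j ∈ Finset.univ.erase i, (t - w (Sum.inr j))) / (k * (w (Sum.inl 0) - x0))) * (w (Sum.inl 0) - x0),
        ((∏ j ∈ Finset.univ.erase i, (t - w (Sum.inr j))) / (k * (w (Sum.inl 0) - x0))) * (w (Sum.inr i) - t)] ∈ G := this
      rw [Set.mem_ofPred_eq]
      generalize (∏ j ∈ Finset.univ.erase i, (t - w (Sum.inr j))) = A at *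
      generalize (∏ a ∈ At.erase x0, (w (Sum.inl 0) - a)) = B at *
      have e1 : A / (k * (w (Sum.inl 0) - x0)) * (w (Sum.inl 0) - x0) = A / k := by
        field_simp
      have e2 : A / (k * (w (Sum.inl 0) - x0)) * (w (Sum.inr i) - t) = (-(w (Sum.inl 1) * B)) / k := by
        field_simp
        linear_combination hwz
      rw [e1, e2] at this
      exact this
    have hfin : ![x0, t, x0, y i, k / k, (-(0 * ∏ a ∈ At.erase x0, (x0 - a))) / k] ∈ G := hsub hy
    rw [hi, div_self hk, zero_mul, neg_zero, zero_div] at hfin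
    exact (hq1 _ hC).2 hfin
  have hno' : ∀ x, ![x, 0] ∉ H' := by
    intro x0 hx0
    obtain ⟨y, hy⟩ := hHD' _ hx0
    obtain ⟨hyE, hyz⟩ := hDE' _ hy
    have hyz : 0 * _ = ∏ a ∈ At, (x0 - a) := hyz
    rw [zero_mul] at hyz
    have hx0A : x0 ∈ At := by
      by_contra hcon
      exact hP0 x0 hcon hyz.symm
    have hC := (hAt x0).1 hx0A
    obtain ⟨i, hi⟩ := h.enum_all hyE (y := t) hC
    have hi : y i = t := hi
    have hk : -∏ a ∈ At.erase x0, (x0 - a) ≠ 0 := by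
      rw [neg_ne_zero]
      refine Finset.prod_ne_zero_iff.2 fun a ha h0 => ?_
      exact Finset.ne_of_mem_erase ha (sub_eq_zero.1 h0).symm
    set k := -∏ a ∈ At.erase x0, (x0 - a) with hkdef
    have hsub : D' ⊆ {w | ![x0, t, w (Sum.inl 0), w (Sum.inr i),
        (w (Sum.inl 1) * ∏ j ∈ Finset.univ.erase i, (t - w (Sum.inr j))) / k,
        (-(∏ a ∈ At.erase x0, (w (Sum.inl 0) - a))) / k] ∈ G} := by
      refine hD'.subset_of_diff (closed_G h.clG (Reg.const _) (Reg.const _) (Reg.coord _) (Reg.coord _)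
        (((Reg.coord _).mul (Reg.prod _ fun j _ => (Reg.const t).sub (Reg.coord _))).div_const k)
        ((Reg.prod _ fun a _ => (Reg.coord _).sub (Reg.const a)).neg.div_const k))
        (closed_fin (Reg.coord (Sum.inl 0)) At.finite_toSet)
        (hDn' _ At.finite_toSet) ?_
      intro w hw hwx
      obtain ⟨hwE, hwz⟩ := hDE' w hw
      have hwz : w (Sum.inl 1) * ∏ i : Fin m, (t - w (Sum.inr i)) = ∏ a ∈ At, (w (Sum.inl 0) - a) := hwz
      rw [← Finset.mul_prod_erase _ _ hx0A, ← Finset.mul_prod_erase _ _ (Finset.mem_univ i)] at hwz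
      have hne : w (Sum.inr i) - t ≠ 0 := fun h0 => hN0 _ hwE hwx i (by
        change t - w (Sum.inr i) = 0
        linear_combination -h0)
      have := h.memG _ hC _ (h.EC _ hwE i)
        ((-(∏ a ∈ At.erase x0, (w (Sum.inl 0) - a))) / (k * (w (Sum.inr i) - t)))
      have this : ![x0, t, w (Sum.inl 0), w (Sum.inr i),
        ((-(∏ a ∈ At.erase x0, (w (Sum.inl 0) - a))) / (k * (w (Sum.inr i) - t))) * (w (Sum.inl 0) - x0),
        ((-(∏ a ∈ At.erase x0, (w (Sum.inl 0) - a))) / (k * (w (Sum.inr i) - t))) * (w (Sum.inr i) - t)] ∈ G := this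
      rw [Set.mem_ofPred_eq]
      generalize (∏ j ∈ Finset.univ.erase i, (t - w (Sum.inr j))) = A at *
      generalize (∏ a ∈ At.erase x0, (w (Sum.inl 0) - a)) = B at *
      have e1 : (-B) / (k * (w (Sum.inr i) - t)) * (w (Sum.inr i) - t) = (-B) / k := by
        field_simp
      have e2 : (-B) / (k * (w (Sum.inr i) - t)) * (w (Sum.inl 0) - x0) = (w (Sum.inl 1) * A) / k := by
        field_simp
        linear_combination hwz
      rw [e1, e2] at this
      exact this
    have hfin : ![x0, t, x0, y i, (0 * ∏ j ∈ Finset.univ.erase i, (t - y j)) / k, k / k] ∈ G := hsub hy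
    rw [hi, div_self hk, zero_mul, zero_div] at hfin
    exact (hq1 _ hC).1 hfin
  let n : K → K := fun x => (∏ y ∈ (h.fib x).toFinset, (t - y)) / ∏ a ∈ At, (x - a)
  have hn : ∀ v ∈ E, v (Sum.inl ()) ∉ F → ∏ i : Fin m, (t - v (Sum.inr i)) =
      ∏ y ∈ (h.fib (v (Sum.inl ()))).toFinset, (t - y) := fun v hv hF => h.prod_fib hv hF (fun y => t - y)
  have hu : ∀ x, x ∉ F → x ∉ (At : Set K) → ∀ z, ![x, z] ∈ H → z = n x := by
    intro x hxF hxA z hz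
    obtain ⟨y, hy⟩ := hHD _ hz
    obtain ⟨hyE, hyz⟩ := hDE _ hy
    have hyz : z * ∏ a ∈ At, (x - a) = _ := hyz
    have h2 := hn _ hyE hxF
    have h2 : _ = ∏ y ∈ (h.fib x).toFinset, (t - y) := h2
    exact (eq_div_iff (hP0 x hxA)).2 (hyz.trans h2)
  have hu' : ∀ x, x ∉ F → x ∉ (At : Set K) → ∀ z, ![x, z] ∈ H' → z = (n x)⁻¹ := by
    intro x hxF hxA z hz
    obtain ⟨y, hy⟩ := hHD' _ hz
    obtain ⟨hyE, hyz⟩ := hDE' _ hy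
    have h0 := Finset.prod_ne_zero_iff.2 fun i (_ : i ∈ Finset.univ) => hN0 _ hyE hxA i
    have h2 := hn _ hyE hxF
    have h2 : _ = ∏ y ∈ (h.fib x).toFinset, (t - y) := h2
    have hyz : z * _ = ∏ a ∈ At, (x - a) := hyz
    rw [h2] at hyz h0
    rw [inv_div]
    exact (eq_div_iff h0).2 hyz
  obtain ⟨c, hc⟩ := no_poles (F := F ∪ At ∪ ({x | ∃ z, ![x, z] ∈ H}ᶜ ∪ {x | ∃ z, ![x, z] ∈ H'}ᶜ)) hH hHd hH' hHd'
    ((h.hF.union At.finite_toSet).union (hHf.union hHf')) n (by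
      intro x hx
      have h1 : ∃ z, ![x, z] ∈ H := by
        by_contra hcon
        exact hx (Or.inr (Or.inl hcon))
      obtain ⟨z, hz⟩ := h1
      rw [← hu x (fun h => hx (Or.inl (Or.inl h))) (fun h => hx (Or.inl (Or.inr h))) z hz]
      exact hz) (by
      intro x hx
      have h1 : ∃ z, ![x, z] ∈ H' := by
        by_contra hcon
        exact hx (Or.inr (Or.inr hcon))
      obtain ⟨z, hz⟩ := h1
      rw [← hu' x (fun h => hx (Or.inl (Or.inl h))) (fun h => hx (Or.inl (Or.inr h))) z hz]
      exact hz)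
    (fun x hx => hu x (fun h => hx (Or.inl (Or.inl h))) (fun h => hx (Or.inl (Or.inr h))))
    (fun x hx => hu' x (fun h => hx (Or.inl (Or.inl h))) (fun h => hx (Or.inl (Or.inr h)))) hno hno'
  refine ⟨c, _, (h.hF.union At.finite_toSet).union (hHf.union hHf'), ?_⟩
  intro v hv hvF
  rw [hn v hv (fun h => hvF (Or.inl (Or.inl h)))]
  exact (div_eq_iff (hP0 _ (fun h => hvF (Or.inl (Or.inr h))))).1 (hc _ hvF)

end claim
end ZGeo

set_option linter.style.haveILetI false
set_option linter.unusedSectionVars false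
set_option linter.unusedVariables false
set_option linter.unusedSimpArgs false
namespace ZGeo
universe u
section mainprime
variable {K : Type u} [Field K] [IsAlgClosed K] [ZG K] {ι κ μ : Type} [Finite ι] [Finite κ] [Finite μ]
variable {C : Set (Fin 2 → K)} {G1 : Set (Fin 3 → K)} {G : Set (Fin 6 → K)}

theorem interp_key {m : ℕ} (T : Finset K) (hT : T.card = m) (y : Fin m → K) (b : K → K)
    (hb : ∀ t ∈ T, ∏ i, (t - y i) = b t) (z : K) [DecidableEq K] :
    (Lagrange.nodal T id).eval z + ∑ t ∈ T, b t * (Lagrange.basis T id t).eval z = ∏ i, (z - y i) := by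
  set g : Polynomial K := ∏ i, (Polynomial.X - Polynomial.C (y i)) with hg
  have hgm : g.Monic := Polynomial.monic_prod_of_monic _ _ fun i _ => Polynomial.monic_X_sub_C _
  have hnm : (Lagrange.nodal T (id : K → K)).Monic := Lagrange.nodal_monic
  have hgd : g.degree = m := by
    rw [hg, Polynomial.degree_prod]
    simp
  have hnd : (Lagrange.nodal T (id : K → K)).degree = m := by
    rw [Lagrange.degree_nodal, hT]
  have hlt : (g - Lagrange.nodal T id).degree < T.card := by
    rw [hT, ← hgd]
    exact Polynomial.degree_sub_lt_left (hgd.trans hnd.symm) hgm.ne_zero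
      (by rw [hgm.leadingCoeff, hnm.leadingCoeff])
  have heq := Lagrange.eq_interpolate (Set.injOn_id (T : Set K)) hlt
  have hev : ∀ z, g.eval z = ∏ i, (z - y i) := by
    intro z; rw [hg, Polynomial.eval_prod]; simp
  have h2 := congrArg (Polynomial.eval z) heq
  rw [Polynomial.eval_sub, Lagrange.interpolate_apply, Polynomial.eval_finsetSum, hev] at h2
  refine Eq.trans ?_ (sub_eq_iff_eq_add'.1 h2).symm
  congr 1
  refine Finset.sum_congr rfl fun t ht => ?_
  rw [Polynomial.eval_mul, Polynomial.eval_C, Polynomial.eval_sub, hev]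
  have : Polynomial.eval t (Lagrange.nodal T id) = 0 := Lagrange.eval_nodal_at_node (v := id) ht
  change _ = (∏ i, (t - y i) - Polynomial.eval t (Lagrange.nodal T id)) * _
  rw [this, sub_zero, hb t ht]

open Classical in
theorem main_general (hC : IC C) (dC : dim C = 1) (clG1 : IsClosed G1)
    (memG1 : ∀ p ∈ C, ∀ s, ![s, s * p 0, s * p 1] ∈ G1) (notG1 : ![0, 0, 1] ∉ G1)
    (clG : IsClosed G)
    (memG : ∀ p ∈ C, ∀ q ∈ C, ∀ s, ![p 0, p 1, q 0, q 1, s * (q 0 - p 0), s * (q 1 - p 1)] ∈ G)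
    {Bd : Set (Fin 2 → K)} (hBd : Bd.Finite)
    (hB : ∀ q ∈ C, q ∉ Bd → ![q 0, q 1, q 0, q 1, 0, 1] ∉ G ∧ ![q 0, q 1, q 0, q 1, 1, 0] ∉ G) :
    ∃ f : MvPolynomial (Fin 2) K, (∃ v, MvPolynomial.eval v f ≠ 0) ∧
      ∀ v ∈ C, MvPolynomial.eval v f = 0 := by
  haveI : Infinite K := infinite_K
  have fib : ∀ x, {y | ![x, y] ∈ C}.Finite := by
    intro x0
    rcases fin_or_univ (K := K) hC.1 (fun y => ![x0, y]) (by
      intro k; fin_cases k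
      · exact Reg.const x0
      · exact Reg.coord _) with h | h
    · exfalso
      have hs : ∀ s : K, s ≠ 0 → ![s, s * x0, 1] ∈ G1 := by
        intro s hs
        have h1 : s⁻¹ ∈ {y | ![x0, y] ∈ C} := by rw [h]; trivial
        have h2 : ![s, s * x0, s * s⁻¹] ∈ G1 := memG1 _ h1 s
        rwa [mul_inv_cancel₀ hs] at h2
      rcases fin_or_univ (K := K) clG1 (fun s => ![s, s * x0, 1]) (by
        intro k; fin_cases k
        · exact Reg.coord _
        · exact (Reg.coord _).mul (Reg.const x0)
        · exact Reg.const 1) with h3 | h3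
      · have h4 : (0 : K) ∈ {s : K | ![s, s * x0, 1] ∈ G1} := by rw [h3]; trivial
        have h4 : ![0, 0 * x0, 1] ∈ G1 := h4
        rw [zero_mul] at h4
        exact notG1 h4
      · exact (Set.finite_singleton (0 : K)).infinite_compl (h3.subset fun s hs' => hs s hs')
    · exact h
  obtain ⟨m, E, F, hE, dE, hF, EC, ex, enum⟩ := exists_E hC fib
  have h : Dat C m E F G1 G := ⟨hC, dC, fib, hE, dE, hF, EC, ex, enum, clG1, memG1, notG1, clG, memG⟩
  obtain ⟨q0, hq0⟩ := hC.2.1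
  set T0 : Set K := insert (q0 1) ((fun q : Fin 2 → K => q 1) '' Bd) with hT0
  have hT0f : T0.Finite := (hBd.image _).insert _
  have key : ∀ t, ∃ (c : K) (At : Finset K) (F' : Set K), F'.Finite ∧ (t ∉ T0 → ∀ v ∈ E,
      v (Sum.inl ()) ∉ F' → ∏ i : Fin m, (t - v (Sum.inr i)) = c * ∏ a ∈ At, (v (Sum.inl ()) - a)) := by
    intro t
    by_cases ht : t ∈ T0
    · exact ⟨0, ∅, ∅, Set.finite_empty, fun h => absurd ht h⟩
    have hrow : {a | ![a, t] ∈ C}.Finite := by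
      have := finite_of_curve hC dC.le (closed_eq (Reg.coord 1) (Reg.const t)) (by
        intro hcon
        have : q0 1 = t := hcon hq0
        exact ht (Or.inl this.symm))
      refine (this.image (fun v => v 0)).subset ?_
      intro a ha
      exact ⟨![a, t], ⟨ha, rfl⟩, rfl⟩
    obtain ⟨c, F', hF', hc⟩ := h.claim t hrow.toFinset (fun a => hrow.mem_toFinset) (by
      intro q hq hqt
      refine hB q hq fun hqB => ht (Or.inr ⟨q, hqB, hqt⟩))
    exact ⟨c, _, F', hF', fun _ => hc⟩
  choose c At F' hF' hcl using key
  obtain ⟨T, hTs, hTc⟩ := hT0f.infinite_compl.exists_subset_card_eq m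
  set FF : Set K := F ∪ ⋃ t ∈ T, F' t with hFF
  have hFFf : FF.Finite := hF.union (T.finite_toSet.biUnion fun t _ => hF' t)
  let f : MvPolynomial (Fin 2) K := Polynomial.aeval (MvPolynomial.X 1) (Lagrange.nodal T (id : K → K)) +
    ∑ t ∈ T, (MvPolynomial.C (c t) * ∏ a ∈ At t, (MvPolynomial.X 0 - MvPolynomial.C a)) *
      Polynomial.aeval (MvPolynomial.X 1) (Lagrange.basis T (id : K → K) t)
  have haev : ∀ (v : Fin 2 → K) (p : Polynomial K),
      MvPolynomial.eval v (Polynomial.aeval (MvPolynomial.X 1) p) = p.eval (v 1) := by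
    intro v p
    have := Polynomial.aeval_algHom_apply (MvPolynomial.aeval v : MvPolynomial (Fin 2) K →ₐ[K] K)
      (MvPolynomial.X 1) p
    rw [MvPolynomial.aeval_X, Polynomial.aeval_def, Polynomial.eval₂_eq_eval_map] at this
    rw [← MvPolynomial.coe_aeval_eq_eval]
    simpa using this.symm
  have hfe : ∀ v : Fin 2 → K, MvPolynomial.eval v f = (Lagrange.nodal T (id : K → K)).eval (v 1) +
      ∑ t ∈ T, (c t * ∏ a ∈ At t, (v 0 - a)) * (Lagrange.basis T (id : K → K) t).eval (v 1) := by
    intro v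
    simp only [f, map_add, map_sum, map_mul, map_prod, haev, map_sub, MvPolynomial.eval_C,
      MvPolynomial.eval_X]
  have hfE : ∀ v : Fin 2 → K, ∀ u ∈ E, u (Sum.inl ()) = v 0 → v 0 ∉ FF →
      MvPolynomial.eval v f = ∏ i : Fin m, (v 1 - u (Sum.inr i)) := by
    intro v u hu huv hv
    rw [hfe]
    refine interp_key T hTc (fun i => u (Sum.inr i)) (fun t => c t * ∏ a ∈ At t, (v 0 - a)) ?_ (v 1)
    intro t ht
    have := hcl t (hTs ht) u hu (by
      rw [huv]
      exact fun h => hv (Or.inr (Set.mem_biUnion ht h)))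
    rw [huv] at this
    exact this
  refine ⟨f, ?_, ?_⟩
  · obtain ⟨x, hx⟩ := hFFf.infinite_compl.nonempty
    obtain ⟨u, hu, hux⟩ := ex x (fun h => hx (Or.inl h))
    obtain ⟨y, hy⟩ := (Set.finite_range (fun i : Fin m => u (Sum.inr i))).infinite_compl.nonempty
    refine ⟨![x, y], ?_⟩
    rw [hfE ![x, y] u hu hux hx]
    refine Finset.prod_ne_zero_iff.2 fun i _ h0 => hy ⟨i, ?_⟩
    exact (sub_eq_zero.1 h0).symm
  · obtain ⟨b, hb, hbne⟩ : ∃ b ∈ C, b 0 ≠ q0 0 := by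
      by_contra hcon
      push Not at hcon
      apply hC.infinite dC.ge
      refine ((fib (q0 0)).image (fun y => ![q0 0, y])).subset ?_
      intro v hv
      have e : ![q0 0, v 1] = v := by
        rw [← hcon v hv]; exact vec2_eta v
      exact ⟨v 1, by rw [Set.mem_ofPred_eq, e]; exact hv, e⟩
    have := hC.subset_of_diff (closed_eq (Reg.poly f) (Reg.const 0)) (closed_fin (Reg.coord 0) hFFf)
      (not_sub_fin hC hb hq0 (Reg.coord 0) hbne hFFf) (by
        intro v hv hvF
        obtain ⟨u, hu, hux⟩ := ex (v 0) (fun h => hvF (Or.inl h))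
        rw [Set.mem_ofPred_eq, hfE v u hu hux hvF]
        obtain ⟨i, hi⟩ := h.enum_all hu (y := v 1) (by rw [hux, vec2_eta]; exact hv)
        exact Finset.prod_eq_zero (Finset.mem_univ i) (sub_eq_zero.2 hi.symm))
    exact fun v hv => this hv

end mainprime
end ZGeo

set_option linter.style.haveILetI false
set_option linter.unusedSectionVars false
set_option linter.unusedVariables false
set_option linter.unusedSimpArgs false
namespace ZGeo
universe u
section coords
variable {K : Type u} [Field K] [IsAlgClosed K] [ZG K] {ι κ μ : Type} [Finite ι] [Finite κ] [Finite μ]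
variable {C : Set (Fin 2 → K)}

theorem exists_hat (hC : IC C) (dC : dim C = 1) : ∃ G1 : Set (Fin 3 → K), IsClosed G1 ∧
    (∀ p ∈ C, ∀ s, ![s, s * p 0, s * p 1] ∈ G1) ∧ ∃ w : Fin 2 → K, ![0, w 0, w 1] ∉ G1 := by
  let Φ : (Fin 2 ⊕ Unit → K) → (Fin 3 → K) := fun w =>
    ![w (Sum.inr ()), w (Sum.inr ()) * w (Sum.inl 0), w (Sum.inr ()) * w (Sum.inl 1)]
  have hΦ : ∀ k, Reg (fun w => Φ w k) := by
    intro k; fin_cases k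
    · exact Reg.coord _
    · exact (Reg.coord _).mul (Reg.coord _)
    · exact (Reg.coord _).mul (Reg.coord _)
  have hA := hC.pr (IC_univ_unit (K := K))
  have hI := hA.closure_image (Reg.continuous hΦ)
  have hd := dim_closure_image_le hA hΦ
  rw [dim_pr hC IC_univ_unit, dC, dim_univ_unit] at hd
  have hmem : ∀ p ∈ C, ∀ s, ![s, s * p 0, s * p 1] ∈ closure (Φ '' pr C Set.univ) := by
    intro p hp s
    exact subset_closure ⟨Sum.elim p (fun _ => s), ⟨hp, trivial⟩, rfl⟩
  refine ⟨closure (Φ '' pr C Set.univ), isClosed_closure, hmem, ?_⟩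
  by_contra hcon
  push Not at hcon
  let Φ₂ : (Fin 2 → K) → (Fin 3 → K) := fun w => ![0, w 0, w 1]
  let Ψ₂ : (Fin 3 → K) → (Fin 2 → K) := fun w => ![w 1, w 2]
  have hΦ₂ : ∀ k, Reg (fun w => Φ₂ w k) := by
    intro k; fin_cases k
    · exact Reg.const 0
    · exact Reg.coord _
    · exact Reg.coord _
  have hΨ₂ : ∀ k, Reg (fun w => Ψ₂ w k) := by
    intro k; fin_cases k <;> exact Reg.coord _
  have hL : IC (Φ₂ '' Set.univ) := IC_univ.image_leftInv hΦ₂ hΨ₂ (fun v => vec2_eta v)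
  have hLd : dim (Set.univ : Set (Fin 2 → K)) ≤ dim (Φ₂ '' Set.univ) :=
    dim_le_of_leftInv IC_univ hL (Reg.continuous hΦ₂) (Reg.continuous hΨ₂)
      (fun v _ => vec2_eta v) (fun v hv => ⟨v, hv, rfl⟩)
  rw [dim_univ, Nat.card_fin] at hLd
  have heq := eq_of_dim_le hL hI (by
    rintro _ ⟨w, _, rfl⟩
    exact hcon w) (by omega)
  obtain ⟨p, hp⟩ := hC.2.1
  have h5 := hmem p hp 1
  rw [← heq] at h5
  obtain ⟨w, _, hw⟩ := h5
  have : (0 : K) = 1 := congrFun hw 0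
  exact zero_ne_one this

theorem exists_S (hC : IC C) (dC : dim C = 1) : ∃ S : Set (Fin 6 → K), IsClosed S ∧
    (∀ p ∈ C, ∀ q ∈ C, ∀ s, ![p 0, p 1, q 0, q 1, s * (q 0 - p 0), s * (q 1 - p 1)] ∈ S) ∧
    ∃ q ∈ C, ∃ w : Fin 2 → K, ![q 0, q 1, q 0, q 1, w 0, w 1] ∉ S := by
  let Φ : ((Fin 2 ⊕ Fin 2) ⊕ Unit → K) → (Fin 6 → K) := fun w =>
    ![w (Sum.inl (Sum.inl 0)), w (Sum.inl (Sum.inl 1)), w (Sum.inl (Sum.inr 0)), w (Sum.inl (Sum.inr 1)),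
      w (Sum.inr ()) * (w (Sum.inl (Sum.inr 0)) - w (Sum.inl (Sum.inl 0))),
      w (Sum.inr ()) * (w (Sum.inl (Sum.inr 1)) - w (Sum.inl (Sum.inl 1)))]
  have hΦ : ∀ k, Reg (fun w => Φ w k) := by
    intro k; fin_cases k
    · exact Reg.coord _
    · exact Reg.coord _
    · exact Reg.coord _
    · exact Reg.coord _
    · exact (Reg.coord _).mul ((Reg.coord _).sub (Reg.coord _))
    · exact (Reg.coord _).mul ((Reg.coord _).sub (Reg.coord _))
  have hA := (hC.pr hC).pr (IC_univ_unit (K := K))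
  have hI := hA.closure_image (Reg.continuous hΦ)
  have hd := dim_closure_image_le hA hΦ
  rw [dim_pr (hC.pr hC) IC_univ_unit, dim_pr hC hC, dC, dim_univ_unit] at hd
  have hmem : ∀ p ∈ C, ∀ q ∈ C, ∀ s, ![p 0, p 1, q 0, q 1, s * (q 0 - p 0), s * (q 1 - p 1)] ∈
      closure (Φ '' pr (pr C C) Set.univ) := by
    intro p hp q hq s
    exact subset_closure ⟨Sum.elim (Sum.elim p q) (fun _ => s), ⟨⟨hp, hq⟩, trivial⟩, rfl⟩
  refine ⟨closure (Φ '' pr (pr C C) Set.univ), isClosed_closure, hmem, ?_⟩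
  by_contra hcon
  push Not at hcon
  let Φ₂ : (Fin 2 ⊕ Fin 2 → K) → (Fin 6 → K) := fun w =>
    ![w (Sum.inl 0), w (Sum.inl 1), w (Sum.inl 0), w (Sum.inl 1), w (Sum.inr 0), w (Sum.inr 1)]
  let Ψ₂ : (Fin 6 → K) → (Fin 2 ⊕ Fin 2 → K) := fun w => Sum.elim ![w 0, w 1] ![w 4, w 5]
  have hΦ₂ : ∀ k, Reg (fun w => Φ₂ w k) := by
    intro k; fin_cases k <;> exact Reg.coord _
  have hΨ₂ : ∀ k, Reg (fun w => Ψ₂ w k) := by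
    rintro (k | k) <;> fin_cases k <;> exact Reg.coord _
  have hinv : ∀ v, Ψ₂ (Φ₂ v) = v := by
    intro v; funext k
    rcases k with k | k <;> fin_cases k <;> rfl
  have hB := hC.pr (IC_univ (K := K) (ι := Fin 2))
  have hL : IC (Φ₂ '' pr C Set.univ) := hB.image_leftInv hΦ₂ hΨ₂ hinv
  have hLd : dim (pr C (Set.univ : Set (Fin 2 → K))) ≤ dim (Φ₂ '' pr C Set.univ) :=
    dim_le_of_leftInv hB hL (Reg.continuous hΦ₂) (Reg.continuous hΨ₂)
      (fun v _ => hinv v) (fun v hv => ⟨v, hv, rfl⟩)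
  rw [dim_pr hC IC_univ, dC, dim_univ, Nat.card_fin] at hLd
  have heq := eq_of_dim_le hL hI (by
    rintro _ ⟨w, hw, rfl⟩
    exact hcon _ hw.1 (w ∘ Sum.inr)) (by omega)
  obtain ⟨p, hp, q, hq, hpq⟩ := (hC.infinite dC.ge).nontrivial
  have h5 := hmem p hp q hq 0
  rw [← heq] at h5
  obtain ⟨w, _, hw⟩ := h5
  apply hpq
  have a0 : w (Sum.inl 0) = p 0 := congrFun hw 0
  have a1 : w (Sum.inl 1) = p 1 := congrFun hw 1
  have a2 : w (Sum.inl 0) = q 0 := congrFun hw 2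
  have a3 : w (Sum.inl 1) = q 1 := congrFun hw 3
  rw [← vec2_eta p, ← vec2_eta q, ← a0, ← a1, a2, a3]

theorem exists_notMem {W W' : Set (Fin 2 → K)} (hW : IsClosed W) (hW' : IsClosed W') {a b : Fin 2 → K}
    (ha : a ∉ W) (hb : b ∉ W') : ∃ u, u ∉ W ∧ u ∉ W' := by
  by_contra hcon
  have : (Set.univ : Set (Fin 2 → K)) ⊆ W ∪ W' := by
    intro u _
    by_contra hu
    exact hcon ⟨u, fun h => hu (Or.inl h), fun h => hu (Or.inr h)⟩
  rcases IC_univ.subset_of_union hW hW' this with h | h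
  · exact ha (h trivial)
  · exact hb (h trivial)

theorem main_curve (hC : IC C) (dC : dim C = 1) :
    ∃ f : MvPolynomial (Fin 2) K, f ≠ 0 ∧ ∀ v ∈ C, MvPolynomial.eval v f = 0 := by
  obtain ⟨Ch, hCh, hChm, wa, hwa⟩ := exists_hat hC dC
  obtain ⟨S, hS, hSm, q0, hq0, wb, hwb⟩ := exists_S hC dC
  have hW1 : IsClosed {w : Fin 2 → K | ![0, w 0, w 1] ∈ Ch} := by
    refine hCh.preimage (f := fun w : Fin 2 → K => ![0, w 0, w 1]) (Reg.continuous ?_)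
    intro k; fin_cases k
    · exact Reg.const 0
    · exact Reg.coord _
    · exact Reg.coord _
  have hW2 : IsClosed {w : Fin 2 → K | ![q0 0, q0 1, q0 0, q0 1, w 0, w 1] ∈ S} :=
    closed_G hS (Reg.const _) (Reg.const _) (Reg.const _) (Reg.const _) (Reg.coord _) (Reg.coord _)
  obtain ⟨u, hu1, hu2⟩ := exists_notMem hW1 hW2 hwa hwb
  rw [Set.mem_ofPred_eq] at hu1 hu2
  have hun : u 0 ≠ 0 ∨ u 1 ≠ 0 := by
    by_contra hcon
    push Not at hcon
    apply hu1
    rw [hcon.1, hcon.2]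
    have := hChm q0 hq0 0
    rwa [zero_mul, zero_mul] at this
  have hW3 : IsClosed {w : Fin 2 → K | w 0 * u 1 - w 1 * u 0 = 0} :=
    closed_eq (((Reg.coord _).mul (Reg.const _)).sub ((Reg.coord _).mul (Reg.const _))) (Reg.const 0)
  have hW3' : ∃ w : Fin 2 → K, w ∉ {w : Fin 2 → K | w 0 * u 1 - w 1 * u 0 = 0} := by
    rcases hun with h | h
    · exact ⟨![0, 1], fun h0 => h (by
        have h0 : (0 : K) * u 1 - 1 * u 0 = 0 := h0
        linear_combination -h0)⟩
    · exact ⟨![1, 0], fun h0 => h (by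
        have h0 : (1 : K) * u 1 - 0 * u 0 = 0 := h0
        linear_combination h0)⟩
  obtain ⟨wc, hwc⟩ := hW3'
  obtain ⟨u', hu2', hd⟩ := exists_notMem hW2 hW3 hwb hwc
  rw [Set.mem_ofPred_eq] at hu2' hd
  set d := u' 0 * u 1 - u' 1 * u 0 with hddef
  let L : (Fin 2 → K) → (Fin 2 → K) := fun v => ![v 0 * u' 0 + v 1 * u 0, v 0 * u' 1 + v 1 * u 1]
  let M : (Fin 2 → K) → (Fin 2 → K) := fun w => ![w 0 * (u 1 / d) - w 1 * (u 0 / d),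
    w 1 * (u' 0 / d) - w 0 * (u' 1 / d)]
  have hLr : ∀ k, Reg (fun v => L v k) := by
    intro k; fin_cases k
    · exact ((Reg.coord _).mul (Reg.const _)).add ((Reg.coord _).mul (Reg.const _))
    · exact ((Reg.coord _).mul (Reg.const _)).add ((Reg.coord _).mul (Reg.const _))
  have hMr : ∀ k, Reg (fun v => M v k) := by
    intro k; fin_cases k
    · exact ((Reg.coord _).mul (Reg.const _)).sub ((Reg.coord _).mul (Reg.const _))
    · exact ((Reg.coord _).mul (Reg.const _)).sub ((Reg.coord _).mul (Reg.const _))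
  have hML : ∀ v, M (L v) = v := by
    intro v; funext k; fin_cases k
    · change (v 0 * u' 0 + v 1 * u 0) * (u 1 / d) - (v 0 * u' 1 + v 1 * u 1) * (u 0 / d) = v 0
      field_simp
      rw [hddef]; ring
    · change (v 0 * u' 1 + v 1 * u 1) * (u' 0 / d) - (v 0 * u' 0 + v 1 * u 0) * (u' 1 / d) = v 1
      field_simp
      rw [hddef]; ring
  have hLM : ∀ v, L (M v) = v := by
    intro v; funext k; fin_cases k
    · change (v 0 * (u 1 / d) - v 1 * (u 0 / d)) * u' 0 + (v 1 * (u' 0 / d) - v 0 * (u' 1 / d)) * u 0 = v 0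
      field_simp
      rw [hddef]; ring
    · change (v 0 * (u 1 / d) - v 1 * (u 0 / d)) * u' 1 + (v 1 * (u' 0 / d) - v 0 * (u' 1 / d)) * u 1 = v 1
      field_simp
      rw [hddef]; ring
  obtain ⟨hC', hCd'⟩ := IC_pre hC hLr hMr hML (fun w _ => hLM w)
  have hfin : ∀ w : Fin 2 → K, ![q0 0, q0 1, q0 0, q0 1, w 0, w 1] ∉ S →
      (C ∩ {q | ![q 0, q 1, q 0, q 1, w 0, w 1] ∈ S}).Finite := by
    intro w hw
    exact finite_of_curve hC dC.le (closed_G hS (Reg.coord _) (Reg.coord _) (Reg.coord _) (Reg.coord _)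
      (Reg.const _) (Reg.const _)) (fun hcon => hw (hcon hq0))
  have clG1 : IsClosed {s : Fin 3 → K | ![s 0, s 1 * u' 0 + s 2 * u 0, s 1 * u' 1 + s 2 * u 1] ∈ Ch} := by
    refine hCh.preimage (f := fun s : Fin 3 → K =>
      ![s 0, s 1 * u' 0 + s 2 * u 0, s 1 * u' 1 + s 2 * u 1]) (Reg.continuous ?_)
    intro k; fin_cases k
    · exact Reg.coord _
    · exact ((Reg.coord _).mul (Reg.const _)).add ((Reg.coord _).mul (Reg.const _))
    · exact ((Reg.coord _).mul (Reg.const _)).add ((Reg.coord _).mul (Reg.const _))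
  have rl : ∀ (i j : Fin 6) (a b : K), Reg (fun s : Fin 6 → K => s i * a + s j * b) := fun i j a b =>
    ((Reg.coord _).mul (Reg.const _)).add ((Reg.coord _).mul (Reg.const _))
  have clG : IsClosed {s : Fin 6 → K | ![s 0 * u' 0 + s 1 * u 0, s 0 * u' 1 + s 1 * u 1,
      s 2 * u' 0 + s 3 * u 0, s 2 * u' 1 + s 3 * u 1,
      s 4 * u' 0 + s 5 * u 0, s 4 * u' 1 + s 5 * u 1] ∈ S} :=
    closed_G hS (rl _ _ _ _) (rl _ _ _ _) (rl _ _ _ _) (rl _ _ _ _) (rl _ _ _ _) (rl _ _ _ _)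
  obtain ⟨f, ⟨v0, hv0⟩, hf⟩ := main_general hC' (hCd'.symm.trans dC) clG1 (by
      intro p hp s
      have h1 : ![s, s * (p 0 * u' 0 + p 1 * u 0), s * (p 0 * u' 1 + p 1 * u 1)] ∈ Ch := hChm _ hp s
      change ![s, s * p 0 * u' 0 + s * p 1 * u 0, s * p 0 * u' 1 + s * p 1 * u 1] ∈ Ch
      have e : ∀ a b : K, s * p 0 * a + s * p 1 * b = s * (p 0 * a + p 1 * b) := fun a b => by ring
      rw [e, e]; exact h1) (by
      intro h1
      have h1 : ![(0 : K), 0 * u' 0 + 1 * u 0, 0 * u' 1 + 1 * u 1] ∈ Ch := h1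
      simp only [zero_mul, one_mul, zero_add] at h1
      exact hu1 h1) clG (by
      intro p hp q hq s
      have h1 := hSm _ hp _ hq s
      have h1 : ![p 0 * u' 0 + p 1 * u 0, p 0 * u' 1 + p 1 * u 1, q 0 * u' 0 + q 1 * u 0, q 0 * u' 1 + q 1 * u 1,
        s * (q 0 * u' 0 + q 1 * u 0 - (p 0 * u' 0 + p 1 * u 0)),
        s * (q 0 * u' 1 + q 1 * u 1 - (p 0 * u' 1 + p 1 * u 1))] ∈ S := h1
      change ![p 0 * u' 0 + p 1 * u 0, p 0 * u' 1 + p 1 * u 1, q 0 * u' 0 + q 1 * u 0, q 0 * u' 1 + q 1 * u 1,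
        s * (q 0 - p 0) * u' 0 + s * (q 1 - p 1) * u 0,
        s * (q 0 - p 0) * u' 1 + s * (q 1 - p 1) * u 1] ∈ S
      have e : ∀ a b : K, s * (q 0 - p 0) * a + s * (q 1 - p 1) * b =
        s * (q 0 * a + q 1 * b - (p 0 * a + p 1 * b)) := fun a b => by ring
      rw [e, e]; exact h1)
    (Bd := L ⁻¹' ((C ∩ {q | ![q 0, q 1, q 0, q 1, u 0, u 1] ∈ S}) ∪
      (C ∩ {q | ![q 0, q 1, q 0, q 1, u' 0, u' 1] ∈ S})))
    (((hfin u hu2).union (hfin u' hu2')).preimage (Function.LeftInverse.injective hML).injOn) (by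
      intro q hq hqB
      refine ⟨fun h1 => hqB (Or.inl ⟨hq, ?_⟩), fun h1 => hqB (Or.inr ⟨hq, ?_⟩)⟩
      · have h1 : ![q 0 * u' 0 + q 1 * u 0, q 0 * u' 1 + q 1 * u 1, q 0 * u' 0 + q 1 * u 0, q 0 * u' 1 + q 1 * u 1,
          0 * u' 0 + 1 * u 0, 0 * u' 1 + 1 * u 1] ∈ S := h1
        rw [zero_mul, zero_mul, one_mul, one_mul, zero_add, zero_add] at h1
        exact h1
      · have h1 : ![q 0 * u' 0 + q 1 * u 0, q 0 * u' 1 + q 1 * u 1, q 0 * u' 0 + q 1 * u 0, q 0 * u' 1 + q 1 * u 1,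
          1 * u' 0 + 0 * u 0, 1 * u' 1 + 0 * u 1] ∈ S := h1
        rw [zero_mul, zero_mul, one_mul, one_mul, add_zero, add_zero] at h1
        exact h1)
  let g : Fin 2 → MvPolynomial (Fin 2) K :=
    ![MvPolynomial.X 0 * MvPolynomial.C (u 1 / d) - MvPolynomial.X 1 * MvPolynomial.C (u 0 / d),
      MvPolynomial.X 1 * MvPolynomial.C (u' 0 / d) - MvPolynomial.X 0 * MvPolynomial.C (u' 1 / d)]
  have hg : ∀ v, MvPolynomial.eval v (MvPolynomial.bind₁ g f) = MvPolynomial.eval (M v) f := by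
    intro v
    have hgv : (fun i => MvPolynomial.eval v (g i)) = M v := by
      funext i; fin_cases i <;> simp [g, M]
    rw [← hgv, ← MvPolynomial.coe_aeval_eq_eval, ← MvPolynomial.coe_aeval_eq_eval]
    exact MvPolynomial.aeval_bind₁ _ _ _
  refine ⟨MvPolynomial.bind₁ g f, ?_, ?_⟩
  · intro h0
    apply hv0
    have := hg (L v0)
    rw [h0, hML, map_zero] at this
    exact this.symm
  · intro v hv
    rw [hg]
    apply hf
    rw [Set.mem_preimage, hLM]
    exact hv

end coords
end ZGeo

/-- Key lemma of Theorem 3: every plane curve of a Zariski geometry refining the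
Zariski topology on an algebraically closed field (a `τ_2`-closed irreducible subset of
`K²` of dimension 1) is contained in the zero set of a nonzero polynomial in `K[X,Y]`. -/
theorem plane_curve_contained_in_algebraic_curve
    {K : Type*} [Field K] [IsAlgClosed K] (Z : ZariskiGeometry K)
    (hrefine : ∀ (n : ℕ) (C : Set (Fin n → K)), ZariskiClosedSet K C → IsClosed[Z.τ n] C)
    (C : Set (Fin 2 → K)) (hCcl : IsClosed[Z.τ 2] C)
    (hCirr : @IsIrreducible _ (Z.τ 2) C)
    (hCdim : setKrullDim (Z.τ 2) C = 1) :
    ∃ f : MvPolynomial (Fin 2) K, f ≠ 0 ∧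
      C ⊆ {p : Fin 2 → K | MvPolynomial.eval p f = 0} := by
  letI : ZGeo.ZG K := ⟨Z, hrefine⟩
  have ht : (ZGeo.topo : TopologicalSpace (Fin 2 → K)) = Z.τ 2 := ZGeo.topo_fin 2
  rw [← ht] at hCcl hCirr hCdim
  have hC : ZGeo.IC C := ⟨hCcl, hCirr⟩
  have hd : ZGeo.dim C = 1 := by
    have h1 := ZGeo.dim_coe hC
    unfold ZGeo.dimE at h1
    rw [hCdim] at h1
    exact_mod_cast h1.symm
  exact ZGeo.main_curve hC hd
end

section
/- Let K be an algebraically closed field and let f, g ∈ K[X,Y] be nonzero polynomials with no common irreducible factor, of total degrees d and e respectively. Then the set {p ∈ K² : f(p) = 0 and g(p) = 0} of common zeros of f and g is finite and has at most d·e elements. -/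
open MvPolynomial in
lemma bz_card (n : ℕ) :
    2 * Nat.card {s : Fin 2 →₀ ℕ | (s.sum fun _ e => e) ≤ n} = (n + 1) * (n + 2) := by
  classical
  let E : {s : Fin 2 →₀ ℕ | (s.sum fun _ e => e) ≤ n} ≃
      ((Finset.range (n + 1)).sigma fun k => Finset.HasAntidiagonal.antidiagonal k : Finset (Σ _ : ℕ, ℕ × ℕ)) :=
    { toFun := fun s => ⟨⟨s.1 0 + s.1 1, (s.1 0, s.1 1)⟩, by
        have h := s.2
        simp only [Set.mem_ofPred_eq, Finsupp.sum_fintype, Fin.sum_univ_two, implies_true] at h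
        simp; omega⟩
      invFun := fun x => ⟨Finsupp.equivFunOnFinite.symm ![x.1.2.1, x.1.2.2], by
        have h := x.2
        simp only [Finset.mem_sigma, Finset.mem_range, Finset.HasAntidiagonal.mem_antidiagonal] at h
        simp only [Set.mem_ofPred_eq, Finsupp.sum_fintype, Fin.sum_univ_two, implies_true]
        simp; omega⟩
      left_inv := by
        intro s
        ext i
        fin_cases i <;> simp
      right_inv := by
        rintro ⟨⟨k, a, b⟩, h⟩
        simp only [Finset.mem_sigma, Finset.mem_range, Finset.HasAntidiagonal.mem_antidiagonal] at h
        obtain ⟨h1, rfl⟩ := h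
        simp }
  rw [Nat.card_congr E, Nat.card_eq_fintype_card, Fintype.card_coe, Finset.card_sigma]
  simp only [Finset.Nat.card_antidiagonal]
  clear E
  induction n with
  | zero => simp
  | succ n ih => rw [Finset.sum_range_succ, mul_add, ih]; ring

open MvPolynomial in
lemma bz_finrank {K : Type*} [Field K] (n : ℕ) :
    2 * Module.finrank K (restrictTotalDegree (Fin 2) K n) = (n + 1) * (n + 2) := by
  rw [← bz_card n]
  congr 1
  exact Module.finrank_eq_nat_card_basis (basisRestrictSupport K _)

open MvPolynomial in
lemma bz_interp {K : Type*} [Field K] (S : Finset (Fin 2 → K)) (p : Fin 2 → K) :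
    ∃ h : MvPolynomial (Fin 2) K, h.totalDegree ≤ S.card ∧ eval p h ≠ 0 ∧
      ∀ q ∈ S, q ≠ p → eval q h = 0 := by
  classical
  have key : ∀ q : Fin 2 → K, ∃ l : MvPolynomial (Fin 2) K, l.totalDegree ≤ 1 ∧
      eval p l ≠ 0 ∧ (q ≠ p → eval q l = 0) := by
    intro q
    by_cases hq : q = p
    · exact ⟨1, by simp, by simp, fun h => absurd hq h⟩
    · obtain ⟨i, hi⟩ := Function.ne_iff.mp hq
      refine ⟨X i - C (q i), (totalDegree_sub_C_le _ _).trans (by simp), ?_, by simp⟩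
      simp only [map_sub, eval_X, eval_C]
      exact sub_ne_zero.mpr (Ne.symm hi)
  choose l h1 h2 h3 using key
  refine ⟨∏ q ∈ S, l q, ?_, ?_, ?_⟩
  · refine (totalDegree_finsetProd _ _).trans ?_
    exact (Finset.sum_le_sum fun q _ => h1 q).trans (by simp)
  · rw [map_prod]
    exact Finset.prod_ne_zero_iff.mpr fun q _ => h2 q
  · intro q hq hqp
    rw [map_prod]
    exact Finset.prod_eq_zero hq (h3 q hqp)

open MvPolynomial in
lemma bz_finset {K : Type*} [Field K]
    (f g : MvPolynomial (Fin 2) K) (hf : f ≠ 0) (hg : g ≠ 0)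
    (hrel : IsRelPrime f g) (S : Finset (Fin 2 → K))
    (hS : ∀ p ∈ S, eval p f = 0 ∧ eval p g = 0) :
    S.card ≤ f.totalDegree * g.totalDegree := by
  classical
  set d := f.totalDegree with hd
  set e := g.totalDegree with he
  set m := S.card with hm
  let V := fun n => restrictTotalDegree (Fin 2) K n
  have hV : ∀ n, 2 * Module.finrank K (V n) = (n + 1) * (n + 2) := bz_finrank
  have hmem : ∀ n p, p ∈ V n ↔ p.totalDegree ≤ n := fun n p => mem_restrictTotalDegree _ _ _
  haveI : ∀ n, Module.Finite K (V n) := fun n => by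
    dsimp only [V]; infer_instance
  let A := (V (e + m)).map (LinearMap.mulLeft K f)
  let B := (V (d + m)).map (LinearMap.mulLeft K g)
  let D := (V m).map (LinearMap.mulLeft K (f * g))
  have hA : Module.finrank K A = Module.finrank K (V (e + m)) :=
    (Submodule.equivMapOfInjective _ (fun x y hxy => mul_left_cancel₀ hf hxy) _).finrank_eq.symm
  have hB : Module.finrank K B = Module.finrank K (V (d + m)) :=
    (Submodule.equivMapOfInjective _ (fun x y hxy => mul_left_cancel₀ hg hxy) _).finrank_eq.symm
  have hD : Module.finrank K D ≤ Module.finrank K (V m) := Submodule.finrank_map_le _ _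
  have hAB : A ⊓ B ≤ D := by
    rintro x ⟨⟨a, ha, rfl⟩, ⟨b, hb, hab⟩⟩
    simp only [LinearMap.mulLeft_apply] at hab ⊢
    obtain ⟨c, rfl⟩ : g ∣ a := hrel.symm.dvd_of_dvd_mul_left ⟨b, hab.symm⟩
    refine ⟨c, ?_, by simp [mul_assoc]⟩
    by_cases hc : c = 0
    · simp [hc]
    · have := (hmem _ _).mp ha
      rw [totalDegree_mul_of_isDomain hg hc] at this
      exact (hmem _ _).mpr (by omega)
  have hfin := Submodule.finrank_sup_add_finrank_inf_eq A B
  have hinf : Module.finrank K (A ⊓ B : Submodule K _) ≤ Module.finrank K (V m) :=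
    (Submodule.finrank_mono hAB).trans hD
  let N := d + e + m
  let ev : V N →ₗ[K] (S → K) :=
    (LinearMap.pi fun p : S => (aeval (p : Fin 2 → K)).toLinearMap) ∘ₗ (V N).subtype
  have hev : ∀ (x : V N) (p : S), ev x p = eval (p : Fin 2 → K) (x : MvPolynomial (Fin 2) K) := by
    intro x p
    simp [ev, aeval_eq_eval]
  have hsurj : Function.Surjective ev := by
    choose h h1 h2 h3 using bz_interp S
    intro y
    refine ⟨∑ p : S, (y p / eval (p : Fin 2 → K) (h p)) • ⟨h p, (hmem _ _).mpr ((h1 p).trans (Nat.le_add_left _ _))⟩, ?_⟩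
    · ext q
      rw [map_sum, Finset.sum_apply, Finset.sum_eq_single q]
      · rw [map_smul, Pi.smul_apply, hev, smul_eq_mul, div_mul_cancel₀ _ (h2 _)]
      · intro p _ hpq
        rw [map_smul, Pi.smul_apply, hev, h3 p q q.2 (fun hh => hpq (Subtype.ext hh.symm))]
        simp
      · simp
  have hrk := LinearMap.finrank_range_add_finrank_ker ev
  rw [LinearMap.range_eq_top.mpr hsurj, finrank_top, Module.finrank_pi] at hrk
  simp only [Fintype.card_coe] at hrk
  have hle : A ⊔ B ≤ (LinearMap.ker ev).map (V N).subtype := by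
    refine sup_le ?_ ?_
    · rintro _ ⟨a, ha, rfl⟩
      have ha' := (hmem _ _).mp ha
      refine ⟨⟨f * a, (hmem _ _).mpr ((totalDegree_mul _ _).trans (by omega))⟩, ?_, rfl⟩
      ext p
      rw [hev]
      simp [(hS p p.2).1]
    · rintro _ ⟨a, ha, rfl⟩
      have ha' := (hmem _ _).mp ha
      refine ⟨⟨g * a, (hmem _ _).mpr ((totalDegree_mul _ _).trans (by omega))⟩, ?_, rfl⟩
      ext p
      rw [hev]
      simp [(hS p p.2).2]
  have hk : Module.finrank K (A ⊔ B : Submodule K _) ≤ Module.finrank K (LinearMap.ker ev) :=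
    (Submodule.finrank_mono hle).trans (Submodule.finrank_map_le _ _)
  have e1 := hV (e + m)
  have e2 := hV (d + m)
  have e3 := hV m
  have e4 := hV N
  simp only [N] at e4 hrk
  rw [hA, hB] at hfin
  nlinarith


/-- The classical Bezout bound: if `f, g ∈ K[X,Y]` are nonzero polynomials over an
algebraically closed field with no common irreducible factor, of total degrees `d` and
`e`, then their set of common zeros in `K²` is finite, with at most `d * e` points. -/
theorem bezout_bound {K : Type*} [Field K] [IsAlgClosed K]
    (f g : MvPolynomial (Fin 2) K) (hf : f ≠ 0) (hg : g ≠ 0)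
    (hcoprime : ∀ q : MvPolynomial (Fin 2) K, Irreducible q → q ∣ f → ¬ q ∣ g)
    (d e : ℕ) (hd : f.totalDegree = d) (he : g.totalDegree = e) :
    ({p : Fin 2 → K | MvPolynomial.eval p f = 0 ∧ MvPolynomial.eval p g = 0}).Finite ∧
    ({p : Fin 2 → K | MvPolynomial.eval p f = 0 ∧ MvPolynomial.eval p g = 0}).ncard
      ≤ d * e := by
  subst hd he
  have hrel : IsRelPrime f g :=
    WfDvdMonoid.isRelPrime_of_no_irreducible_factors (fun h => hf h.1) hcoprime
  have key := bz_finset f g hf hg hrel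
  have hfin : ({p : Fin 2 → K | MvPolynomial.eval p f = 0 ∧ MvPolynomial.eval p g = 0}).Finite := by
    by_contra hinf
    obtain ⟨S, hS, hc⟩ := Set.Infinite.exists_subset_card_eq hinf
      (f.totalDegree * g.totalDegree + 1)
    have := key S (fun p hp => hS hp)
    omega
  refine ⟨hfin, ?_⟩
  rw [Set.ncard_eq_toFinset_card _ hfin]
  exact key _ fun p hp => by simpa using hp
end
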